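/- arXiv:2406.07335 — 3 statements merged into one kernel-verified Lean document; each statement's English description precedes it below -/
import Mathlib

section
/- Let ε, p ∈ (0,1] be constants and let x = (x₁, x₂, u) be a configuration with x₁ ∈ [ε·n, x₂] and u ≤ n/2, and set p_s = 1 − x₁/x₂. There exist constants c, C > 0 (depending only on ε and p) such that whenever p − p_s ≥ c·√(log n / n), the chain USD_p started from x satisfies Pr[T₁ ≤ C·n·log n] ≥ 1 − C·n^{-1}, where T₁ = inf{t ≥ 0 : X₁(t) = n}. -/
open MeasureTheory

/-- The one-step transition probability of the stubborn undecided-state dynamics `USD_p`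
with `n` agents, from configuration `c = (x₁, x₂, u)` to configuration `d`. -/
noncomputable def usdStep (n : ℕ) (p : ℝ) (c d : ℕ × ℕ × ℕ) : ℝ :=
  (if d = (c.1 - 1, c.2.1, c.2.2 + 1) then (1 - p) * (c.1 : ℝ) * (c.2.1 : ℝ) / (n : ℝ) ^ 2 else 0) +
  (if d = (c.1, c.2.1 - 1, c.2.2 + 1) then (c.1 : ℝ) * (c.2.1 : ℝ) / (n : ℝ) ^ 2 else 0) +
  (if d = (c.1 + 1, c.2.1, c.2.2 - 1) then (c.2.2 : ℝ) * (c.1 : ℝ) / (n : ℝ) ^ 2 else 0) +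
  (if d = (c.1, c.2.1 + 1, c.2.2 - 1) then (c.2.2 : ℝ) * (c.2.1 : ℝ) / (n : ℝ) ^ 2 else 0) +
  (if d = c then
    1 - ((2 - p) * (c.1 : ℝ) * (c.2.1 : ℝ) + (c.2.2 : ℝ) * ((c.1 : ℝ) + (c.2.1 : ℝ))) / (n : ℝ) ^ 2
  else 0)

/-- `μ` is the law of the trajectory `(X(t))_{t ≥ 0}` of `USD_p` with `n` agents started
from the configuration `x0`: it is a probability measure on paths whose finite-dimensional
cylinder probabilities are the products of the one-step transition probabilities. -/
def IsUSD (n : ℕ) (p : ℝ) (x0 : ℕ × ℕ × ℕ) (μ : Measure (ℕ → ℕ × ℕ × ℕ)) : Prop :=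
  IsProbabilityMeasure μ ∧
  ∀ (t : ℕ) (seq : ℕ → ℕ × ℕ × ℕ),
    (μ {ω | ∀ i ≤ t, ω i = seq i}).toReal =
      (if seq 0 = x0 then (1 : ℝ) else 0) *
        ∏ i ∈ Finset.range t, usdStep n p (seq i) (seq (i + 1))

/-- The weighted bias `Δ_w = x₁ - (1 - p)·x₂` of a configuration. -/
noncomputable def dw (p : ℝ) (c : ℕ × ℕ × ℕ) : ℝ := (c.1 : ℝ) - (1 - p) * (c.2.1 : ℝ)


/-- `n²` times the one-step drift of a real function `g` of the configuration. -/
noncomputable def drift (p : ℝ) (g : ℝ → ℝ → ℝ → ℝ) (a b u : ℝ) : ℝ :=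
  (1 - p) * a * b * (g (a - 1) b (u + 1) - g a b u) + a * b * (g a (b - 1) (u + 1) - g a b u)
  + u * a * (g (a + 1) b (u - 1) - g a b u) + u * b * (g a (b + 1) (u - 1) - g a b u)

lemma inv_upper (d s : ℝ) (hd : 2 ≤ d) (hs : |s| ≤ 1) :
    1 / (d + s) ≤ 1 / d * (1 - s / d + 2 / d ^ 2) := by
  obtain ⟨h1, h2⟩ := abs_le.mp hs
  have hd0 : 0 < d := by linarith
  have hds : 0 < d + s := by linarith
  have e : 1 / d * (1 - s / d + 2 / d ^ 2) - 1 / (d + s)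
      = (2 * (d + s) - s ^ 2 * d) / (d ^ 3 * (d + s)) := by
    field_simp
    ring
  have hs2 : s ^ 2 ≤ 1 := by nlinarith
  have h4 : 0 ≤ 2 * (d + s) - s ^ 2 * d := by nlinarith
  have : 0 ≤ 1 / d * (1 - s / d + 2 / d ^ 2) - 1 / (d + s) := by
    rw [e]
    positivity
  linarith

lemma inv_lower (d s : ℝ) (hd : 2 ≤ d) (hs : |s| ≤ 1) :
    1 / d * (1 - s / d) ≤ 1 / (d + s) := by
  obtain ⟨h1, h2⟩ := abs_le.mp hs
  have hd0 : 0 < d := by linarith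
  have hds : 0 < d + s := by linarith
  have e : 1 / (d + s) - 1 / d * (1 - s / d) = s ^ 2 / (d ^ 2 * (d + s)) := by
    field_simp
    ring
  have : 0 ≤ s ^ 2 / (d ^ 2 * (d + s)) := by positivity
  linarith

lemma poly_aux (x y i : ℝ) (hi0 : 0 < i) (hi2 : i ≤ 1 / 2) (hx : |x| ≤ i) (hy : |y| ≤ i) :
    (1 - x + 2 * i ^ 2) * (1 - y + 2 * i ^ 2) ≤ 1 - x - y + 8 * i ^ 2 := by
  have hxy : x * y ≤ i ^ 2 := by
    calc x * y ≤ |x * y| := le_abs_self _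
      _ = |x| * |y| := abs_mul _ _
      _ ≤ i * i := by gcongr
      _ = i ^ 2 := by ring
  obtain ⟨hx1, hx2⟩ := abs_le.mp hx
  obtain ⟨hy1, hy2⟩ := abs_le.mp hy
  have hii : 0 ≤ 2 * i ^ 2 := by positivity
  have h5 : - (x + y) * (2 * i ^ 2) ≤ 1 * (2 * i ^ 2) :=
    mul_le_mul_of_nonneg_right (by linarith) hii
  have hi4 : i ^ 2 ≤ 1 / 4 := by nlinarith
  have h6 : (2 * i ^ 2) * (2 * i ^ 2) ≤ (1 / 2) * (2 * i ^ 2) :=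
    mul_le_mul_of_nonneg_right (by linarith) hii
  linarith

lemma inv_upper2 (d a s t : ℝ) (hd : 2 ≤ d) (hda : d ≤ a) (hs : |s| ≤ 1) (ht : |t| ≤ 1) :
    1 / ((d + s) * (a + t)) ≤ 1 / (d * a) * (1 - s / d - t / a + 8 / d ^ 2) := by
  have hd0 : 0 < d := by linarith
  have ha0 : 0 < a := by linarith
  have A := inv_upper d s hd hs
  have B := inv_upper a t (by linarith) ht
  obtain ⟨h1, h2⟩ := abs_le.mp hs
  obtain ⟨h3, h4⟩ := abs_le.mp ht
  have hx : |s / d| ≤ 1 / d := by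
    rw [abs_div, abs_of_pos hd0]; gcongr
  have hy : |t / a| ≤ 1 / d := by
    rw [abs_div, abs_of_pos ha0]; gcongr
  set i := 1 / d with hi
  have hi0 : 0 < i := by positivity
  have hi2 : i ≤ 1 / 2 := by
    rw [hi]; gcongr
  have e2 : 2 / d ^ 2 = 2 * i ^ 2 := by rw [hi]; field_simp
  have e8 : 8 / d ^ 2 = 8 * i ^ 2 := by rw [hi]; field_simp
  have ea : 2 / a ^ 2 ≤ 2 * i ^ 2 := by
    rw [← e2]; gcongr
  have B' : 1 / (a + t) ≤ 1 / a * (1 - t / a + 2 * i ^ 2) := by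
    refine B.trans ?_
    gcongr
  rw [e2] at A
  have e : 1 / ((d + s) * (a + t)) = 1 / (d + s) * (1 / (a + t)) := by
    rw [one_div_mul_one_div]
  have p1 : 0 ≤ 1 / (a + t) := by
    have : 0 < a + t := by linarith
    positivity
  have p2 : 0 ≤ i * (1 - s / d + 2 * i ^ 2) := by
    refine le_trans ?_ A
    have : 0 < d + s := by linarith
    positivity
  have e' : 1 / (d * a) = i * (1 / a) := by rw [hi, one_div_mul_one_div]
  rw [e, e', e8]
  refine (mul_le_mul A B' p1 p2).trans ?_
  have : i * (1 - s / d + 2 * i ^ 2) * (1 / a * (1 - t / a + 2 * i ^ 2))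
    = i * (1 / a) * ((1 - s / d + 2 * i ^ 2) * (1 - t / a + 2 * i ^ 2)) := by ring
  rw [this]
  gcongr
  set x := s / d
  set y := t / a
  exact poly_aux x y i hi0 hi2 hx hy

/-- rates bound -/
lemma rates_le (p a b u n : ℝ) (hp0 : 0 ≤ p) (ha : 0 ≤ a) (hb : 0 ≤ b) (hu : 0 ≤ u)
    (hn : a + b + u = n) : (2 - p) * a * b + u * (a + b) ≤ n ^ 2 := by
  subst hn
  have := mul_nonneg ha hb
  have := mul_nonneg ha hu
  have := mul_nonneg hb hu
  nlinarith [mul_nonneg hp0 (mul_nonneg ha hb), sq_nonneg a, sq_nonneg b, sq_nonneg u]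

lemma err_one (q a b u n : ℝ)
    (hr : (2 - (1 - q)) * a * b + u * (a + b) ≤ n ^ 2) :
    2 * (q * a * b + a * b + u * a + u * b) ≤ 8 * n ^ 2 := by
  have := sq_nonneg n
  linarith

lemma err_two (q a b u n : ℝ) (ha : 0 ≤ a) (hb : 0 ≤ b) (hu : 0 ≤ u)
    (hr : (2 - (1 - q)) * a * b + u * (a + b) ≤ n ^ 2) :
    8 * (q * a * b) + 2 * (a * b) + 8 * (u * a) + 2 * (u * b) ≤ 8 * n ^ 2 := by
  have := mul_nonneg ha hb
  have := mul_nonneg hu hb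
  linarith

lemma err_three (q a b u n x : ℝ) (ha : 0 ≤ a) (hb : 0 ≤ b) (hu : 0 ≤ u) (hn : a + b + u = n)
    (hq1 : q ≤ 1) (hx : x ≤ 1) :
    q * a + q * u + u * x ≤ 2 * n := by
  have := mul_le_mul_of_nonneg_right hq1 ha
  have := mul_le_mul_of_nonneg_right hq1 hu
  have := mul_le_mul_of_nonneg_left hx hu
  linarith

lemma err_four (n s r γ : ℝ) (hn : s ^ 2 = n) (hs : 1 ≤ s) (hr0 : 0 ≤ r) (hr : r ≤ γ / 16)
    (hγ : 0 < γ) (hγ1 : γ ≤ 1) : 8 * n * r ^ 2 + 2 * s * r ≤ γ / 4 * n := by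
  have g2 : s ≤ n := by nlinarith
  have g1 : r ^ 2 ≤ γ / 256 := by nlinarith
  have hn0 : 0 ≤ n := by linarith
  have g3 : 2 * s * r ≤ 2 * n * (γ / 16) := by gcongr
  have g4 : 8 * n * r ^ 2 ≤ 8 * n * (γ / 256) := by gcongr
  have : 0 ≤ γ * n := by positivity
  linarith

lemma drift_f1 (p a b u n d : ℝ) (hp0 : 0 ≤ p) (hp1 : p ≤ 1) (ha : 0 ≤ a) (hb : 0 ≤ b)
    (hu : 0 ≤ u) (hn : a + b + u = n) (hd : d = a - (1 - p) * b) (hd2 : 2 ≤ d) :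
    drift p (fun a b _ => b / (a - (1 - p) * b)) a b u
      ≤ b / d * (-a + (8 * n ^ 2 / d ^ 2 + 2 * n / d)) := by
  have hd0 : 0 < d := by linarith
  obtain ⟨q, hq⟩ : ∃ q, q = 1 - p := ⟨_, rfl⟩
  have hq0 : 0 ≤ q := by linarith
  have hq1 : q ≤ 1 := by linarith
  have hp : p = 1 - q := by linarith
  unfold drift
  simp only [← hq] at *
  rw [show a - 1 - q * b = d + (-1) by rw [hd]; ring, show a - q * (b - 1) = d + q by rw [hd]; ring,
    show a + 1 - q * b = d + 1 by rw [hd]; ring, show a - q * (b + 1) = d + (-q) by rw [hd]; ring,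
    ← hd]
  have i1 := inv_upper d (-1) hd2 (by norm_num)
  have i2 := inv_upper d q hd2 (by rw [abs_of_nonneg hq0]; exact hq1)
  have i2' := inv_lower d q hd2 (by rw [abs_of_nonneg hq0]; exact hq1)
  have i3 := inv_upper d 1 hd2 (by norm_num)
  have i4 := inv_upper d (-q) hd2 (by rw [abs_neg, abs_of_nonneg hq0]; exact hq1)
  have t1 : b / (d + -1) - b / d ≤ b / d * (1 / d + 2 / d ^ 2) := by
    have := mul_le_mul_of_nonneg_left i1 hb
    calc _ = b * (1 / (d + -1)) - b / d := by ring
      _ ≤ b * (1 / d * (1 - (-1) / d + 2 / d ^ 2)) - b / d := by linarith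
      _ = _ := by ring
  have t2 : (b - 1) / (d + q) - b / d ≤ 1 / d * (- b * q / d + 2 * b / d ^ 2 - 1 + q / d) := by
    have := mul_le_mul_of_nonneg_left i2 hb
    calc _ = b * (1 / (d + q)) - 1 / (d + q) - b / d := by ring
      _ ≤ b * (1 / d * (1 - q / d + 2 / d ^ 2)) - 1 / d * (1 - q / d) - b / d := by linarith
      _ = _ := by ring
  have t3 : b / (d + 1) - b / d ≤ b / d * (-1 / d + 2 / d ^ 2) := by
    have := mul_le_mul_of_nonneg_left i3 hb
    calc _ = b * (1 / (d + 1)) - b / d := by ring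
      _ ≤ b * (1 / d * (1 - 1 / d + 2 / d ^ 2)) - b / d := by linarith
      _ = _ := by ring
  have t4 : (b + 1) / (d + -q) - b / d ≤
      1 / d * (b * q / d + 2 * b / d ^ 2 + 1 + q / d + 2 / d ^ 2) := by
    have := mul_le_mul_of_nonneg_left i4 (show 0 ≤ b + 1 by linarith)
    calc _ = (b + 1) * (1 / (d + -q)) - b / d := by ring
      _ ≤ (b + 1) * (1 / d * (1 - (-q) / d + 2 / d ^ 2)) - b / d := by linarith
      _ = _ := by ring
  have m1 := mul_le_mul_of_nonneg_left t1 (show 0 ≤ q * a * b by positivity)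
  have m2 := mul_le_mul_of_nonneg_left t2 (show 0 ≤ a * b by positivity)
  have m3 := mul_le_mul_of_nonneg_left t3 (show 0 ≤ u * a by positivity)
  have m4 := mul_le_mul_of_nonneg_left t4 (show 0 ≤ u * b by positivity)
  refine (add_le_add (add_le_add (add_le_add m1 m2) m3) m4).trans ?_
  have e : q * a * b * (b / d * (1 / d + 2 / d ^ 2)) + a * b * (1 / d * (- b * q / d + 2 * b / d ^ 2 - 1 + q / d))
    + u * a * (b / d * (-1 / d + 2 / d ^ 2)) + u * b * (1 / d * (b * q / d + 2 * b / d ^ 2 + 1 + q / d + 2 / d ^ 2))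
    = b / d * (- a + (2 * (q * a * b + a * b + u * a + u * b) / d ^ 2 + (q * a + q * u + u * (2 / d)) / d)
       + u * (1 - (a - q * b) / d)) := by
    field_simp
    ring
  rw [e, ← hd, div_self hd0.ne', sub_self, mul_zero, add_zero]
  have hr := rates_le p a b u n hp0 ha hb hu hn
  have hbd : 0 ≤ b / d := by positivity
  have hnn : 0 ≤ n := by linarith
  have h2d : 2 / d ≤ 1 := by rw [div_le_one hd0]; exact hd2
  have hk := err_one q a b u n (by rw [hp] at hr; exact hr)
  have hk2 := err_three q a b u n (2 / d) ha hb hu hn hq1 h2d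
  refine mul_le_mul_of_nonneg_left (add_le_add_right (add_le_add ?_ ?_) _) hbd
  · exact div_le_div_of_nonneg_right hk (by positivity)
  · exact div_le_div_of_nonneg_right hk2 hd0.le
  --  err_three q a b u n (2 / d) ha hb hu hn hq1 h2d

lemma drift_f2 (p a b u n d : ℝ) (hp0 : 0 ≤ p) (hp1 : p ≤ 1) (hb : 0 ≤ b)
    (hu : 0 ≤ u) (hn : a + b + u = n) (hd : d = a - (1 - p) * b) (hd2 : 2 ≤ d) :
    drift p (fun a b _ => b / ((a - (1 - p) * b) * a)) a b u
      ≤ b / (d * a) * (-(u + d) + (8 * n ^ 2 / d ^ 2 + 2 * n / d)) := by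
  have hd0 : 0 < d := by linarith
  obtain ⟨q, hq⟩ : ∃ q, q = 1 - p := ⟨_, rfl⟩
  have hq0 : 0 ≤ q := by linarith
  have hq1 : q ≤ 1 := by linarith
  have hp : p = 1 - q := by linarith
  have hda : d ≤ a := by 
    rw [hd, ← hq]; nlinarith
  have ha0 : 0 < a := by linarith
  have ha := ha0.le
  unfold drift
  simp only [← hq] at *
  rw [show a - 1 - q * b = d + (-1) by rw [hd]; ring, show a - q * (b - 1) = d + q by rw [hd]; ring,
    show a + 1 - q * b = d + 1 by rw [hd]; ring, show a - q * (b + 1) = d + (-q) by rw [hd]; ring,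
    ← hd, show a - 1 = a + (-1) by ring]
  have i1 := inv_upper2 d a (-1) (-1) hd2 hda (by norm_num) (by norm_num)
  have i2 := inv_upper d q hd2 (by rw [abs_of_nonneg hq0]; exact hq1)
  have i2' := inv_lower d q hd2 (by rw [abs_of_nonneg hq0]; exact hq1)
  have i3 := inv_upper2 d a 1 1 hd2 hda (by norm_num) (by norm_num)
  have i4 := inv_upper d (-q) hd2 (by rw [abs_neg, abs_of_nonneg hq0]; exact hq1)
  have t1 : b / ((d + -1) * (a + -1)) - b / (d * a) ≤ b / (d * a) * (1 / d + 1 / a + 8 / d ^ 2) := by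
    have := mul_le_mul_of_nonneg_left i1 hb
    calc _ = b * (1 / ((d + -1) * (a + -1))) - b / (d * a) := by rw [mul_one_div]
      _ ≤ b * (1 / (d * a) * (1 - (-1) / d - (-1) / a + 8 / d ^ 2)) - b / (d * a) := by linarith
      _ = _ := by ring
  have t2 : (b - 1) / ((d + q) * a) - b / (d * a) ≤ 1 / a * (1 / d * (- b * q / d + 2 * b / d ^ 2 - 1 + q / d)) := by
    have := mul_le_mul_of_nonneg_left i2 hb
    calc _ = 1 / a * (b * (1 / (d + q)) - 1 / (d + q) - b / d) := by
            have : d + q ≠ 0 := by positivity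
            field_simp
      _ ≤ 1 / a * (b * (1 / d * (1 - q / d + 2 / d ^ 2)) - 1 / d * (1 - q / d) - b / d) := by
            gcongr
      _ = _ := by ring
  have t3 : b / ((d + 1) * (a + 1)) - b / (d * a) ≤ b / (d * a) * (-1 / d - 1 / a + 8 / d ^ 2) := by
    have := mul_le_mul_of_nonneg_left i3 hb
    calc _ = b * (1 / ((d + 1) * (a + 1))) - b / (d * a) := by rw [mul_one_div]
      _ ≤ b * (1 / (d * a) * (1 - 1 / d - 1 / a + 8 / d ^ 2)) - b / (d * a) := by linarith
      _ = _ := by ring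
  have t4 : (b + 1) / ((d + -q) * a) - b / (d * a) ≤
      1 / a * (1 / d * (b * q / d + 2 * b / d ^ 2 + 1 + q / d + 2 / d ^ 2)) := by
    have := mul_le_mul_of_nonneg_left i4 (show 0 ≤ b + 1 by linarith)
    calc _ = 1 / a * ((b + 1) * (1 / (d + -q)) - b / d) := by
            have : d + -q ≠ 0 := by linarith
            field_simp
      _ ≤ 1 / a * ((b + 1) * (1 / d * (1 - (-q) / d + 2 / d ^ 2)) - b / d) := by gcongr
      _ = _ := by ring
  have m1 := mul_le_mul_of_nonneg_left t1 (show 0 ≤ q * a * b by positivity)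
  have m2 := mul_le_mul_of_nonneg_left t2 (show 0 ≤ a * b by positivity)
  have m3 := mul_le_mul_of_nonneg_left t3 (show 0 ≤ u * a by positivity)
  have m4 := mul_le_mul_of_nonneg_left t4 (show 0 ≤ u * b by positivity)
  refine (add_le_add (add_le_add (add_le_add m1 m2) m3) m4).trans ?_
  have e : q * a * b * (b / (d * a) * (1 / d + 1 / a + 8 / d ^ 2)) + a * b * (1 / a * (1 / d * (- b * q / d + 2 * b / d ^ 2 - 1 + q / d)))
    + u * a * (b / (d * a) * (-1 / d - 1 / a + 8 / d ^ 2)) + u * b * (1 / a * (1 / d * (b * q / d + 2 * b / d ^ 2 + 1 + q / d + 2 / d ^ 2)))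
    = b / (d * a) * (- (u + (a - q * b)) + ((8 * (q * a * b) + 2 * (a * b) + 8 * (u * a) + 2 * (u * b)) / d ^ 2 + (q * a + q * u + u * (2 / d)) / d)
       + u * (1 - (a - q * b) / d)) := by
    field_simp
    ring
  rw [e, ← hd, div_self hd0.ne', sub_self, mul_zero, add_zero]
  have hr := rates_le p a b u n hp0 ha hb hu hn
  have hbd : 0 ≤ b / (d * a) := by positivity
  have hnn : 0 ≤ n := by linarith
  have h2d : 2 / d ≤ 1 := by rw [div_le_one hd0]; exact hd2
  gcongr
  · rw [hp] at hr; exact err_two q a b u n ha hb hu hr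
  · exact err_three q a b u n (2 / d) ha hb hu hn hq1 h2d

lemma drift_f3 (p a b u n : ℝ) (hp0 : 0 < p) (hp1 : p ≤ 1) (hb : 0 ≤ b)
    (hu : 0 ≤ u) (hn : a + b + u = n) (ha8 : 8 / p ≤ a) :
    drift p (fun a _ u => u / a) a b u ≤ 3 * b - p / 4 * n * (u / a) := by
  have h8 : 8 ≤ a * p := by rwa [div_le_iff₀ hp0] at ha8
  have ha : 8 ≤ a := by 
    have : 8 ≤ 8 / p := by rw [le_div_iff₀ hp0]; linarith
    linarith
  have ha0 : 0 < a := by linarith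
  have ha1 : 0 < a - 1 := by linarith
  unfold drift
  have e1 : (1 - p) * a * b * ((u + 1) / (a - 1) - u / a) = (1 - p) * b * (1 + u / a) * (a / (a - 1)) := by
    field_simp
    ring
  have e2 : a * b * ((u + 1) / a - u / a) = b := by field_simp; ring
  have e3 : u * a * ((u - 1) / (a + 1) - u / a) = - (u / a) * (a + u) * (a / (a + 1)) := by
    field_simp
    ring
  have e4 : u * b * ((u - 1) / a - u / a) = - (u / a) * b := by field_simp; ring
  rw [e1, e2, e3, e4]
  set v := u / a
  have hv : 0 ≤ v := by positivity
  have k1 : a / (a - 1) ≤ 1 + 2 / a := by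
    rw [div_le_iff₀ ha1]
    have : (1 + 2 / a) * (a - 1) = a + 1 - 2 / a := by field_simp; ring
    rw [this]
    have : 2 / a ≤ 1 := by rw [div_le_one ha0]; linarith
    linarith
  have k2 : 1 / 2 ≤ a / (a + 1) := by
    rw [div_le_div_iff₀ (by norm_num) (by linarith)]; linarith
  have k3 : 2 / a ≤ p / 4 := by
    rw [div_le_div_iff₀ ha0 (by norm_num)]; linarith
  have c1 : (1 - p) * b * (1 + v) * (a / (a - 1)) ≤ (1 - p) * b * (1 + v) * (1 + p / 4) := by
    have : 0 ≤ 1 - p := by linarith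
    gcongr
    linarith
  have c3 : v * (a + u) * (1 / 2) ≤ v * (a + u) * (a / (a + 1)) := by gcongr
  subst hn
  have hbv : 0 ≤ b * v := by positivity
  have hav : 0 ≤ a * v := by positivity
  have huv : 0 ≤ u * v := by positivity
  have f1 : (1 - p) * (1 + p / 4) ≤ 1 - 3 / 4 * p := by nlinarith
  have f2 : (1 - p) * b * (1 + v) * (1 + p / 4) ≤ (b + b * v) * (1 - 3 / 4 * p) := by
    have := mul_le_mul_of_nonneg_left f1 (show 0 ≤ b + b * v by positivity)
    linarith
  nlinarith [mul_nonneg hp0.le hbv, mul_nonneg hp0.le hb, mul_nonneg (sub_nonneg.2 hp1) hav, mul_nonneg (sub_nonneg.2 hp1) huv]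

/-- The Lyapunov function. -/
noncomputable def lyap (p K n : ℝ) (a b u : ℝ) : ℝ :=
  K * (b / (a - (1 - p) * b) + n * (b / ((a - (1 - p) * b) * a))) + u / a

lemma drift_lyap (p γ n a b u : ℝ) (hp0 : 0 < p) (hp1 : p ≤ 1) (hγ : 0 < γ) (hγ1 : γ ≤ 1)
    (hb : 0 ≤ b) (hu : 0 ≤ u) (hn : a + b + u = n) (hn1 : 1 ≤ n)
    (hd : (16 / γ + 8 / p) * Real.sqrt n ≤ a - (1 - p) * b)
    (hg : γ * n ^ 2 ≤ a ^ 2 + n * (a - (1 - p) * b) + n * u) :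
    drift p (lyap p (24 / γ) n) a b u ≤ - (min (γ / 8) (p / 4)) * n * lyap p (24 / γ) n a b u := by
  obtain ⟨d, hdd⟩ : ∃ d, d = a - (1 - p) * b := ⟨_, rfl⟩
  have hs1 : 1 ≤ Real.sqrt n := by rw [Real.one_le_sqrt]; exact hn1
  have hsq : Real.sqrt n ^ 2 = n := Real.sq_sqrt (by linarith)
  set s := Real.sqrt n with hs
  rw [← hdd] at hd hg
  have hp8 : 0 < 8 / p := by positivity
  have hg16 : 16 ≤ 16 / γ := by rw [le_div_iff₀ hγ]; linarith
  have hds : 16 / γ * s ≤ d := by nlinarith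
  have hdp : 8 / p ≤ d := by nlinarith
  have hd16 : 16 ≤ d := by nlinarith
  have hd0 : 0 < d := by linarith
  have hda : d ≤ a := by rw [hdd]; nlinarith
  have ha0 : 0 < a := by linarith
  have F1 := drift_f1 p a b u n d hp0.le hp1 ha0.le hb hu hn hdd (by linarith)
  have F2 := drift_f2 p a b u n d hp0.le hp1 hb hu hn hdd (by linarith)
  have F3 := drift_f3 p a b u n hp0 hp1 hb hu hn (by linarith)
  have lin : drift p (lyap p (24 / γ) n) a b u = 24 / γ * (drift p (fun a b _ => b / (a - (1 - p) * b)) a b u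
     + n * drift p (fun a b _ => b / ((a - (1 - p) * b) * a)) a b u) + drift p (fun a _ u => u / a) a b u := by
    unfold drift lyap; ring
  -- error bound
  have hsd : s / d ≤ γ / 16 := by
    rw [div_le_div_iff₀ hd0 (by norm_num)]
    have : 16 / γ * s * γ = 16 * s := by field_simp
    nlinarith
  have hsd0 : 0 ≤ s / d := by positivity
  have hE : 8 * n ^ 2 / d ^ 2 + 2 * n / d ≤ γ / 4 * n := by
    have e1 : 8 * n ^ 2 / d ^ 2 = 8 * n * (s / d) ^ 2 := by
      rw [div_pow, hsq]; ring
    have e2 : 2 * n / d = 2 * s * (s / d) := by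
      rw [← hsq]; ring
    rw [e1, e2]
    exact err_four n s (s / d) γ hsq hs1 hsd0 hsd hγ hγ1
  set E := 8 * n ^ 2 / d ^ 2 + 2 * n / d
  have han : a ≤ n := by linarith
  have hn0 : 0 < n := by linarith
  have main : b / d * (-a + E) + n * (b / (d * a) * (-(u + d) + E)) ≤ - (γ / 4) * n * (b / d + n * (b / (d * a))) := by
    have e : - (γ / 4) * n * (b / d + n * (b / (d * a))) - (b / d * (-a + E) + n * (b / (d * a) * (-(u + d) + E)))
      = b / (d * a) * ((a ^ 2 + n * d + n * u) - (E + γ / 4 * n) * (a + n)) := by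
      field_simp
      ring
    have : (E + γ / 4 * n) * (a + n) ≤ (γ / 4 * n + γ / 4 * n) * (n + n) := by
      gcongr
    have : 0 ≤ b / (d * a) * ((a ^ 2 + n * d + n * u) - (E + γ / 4 * n) * (a + n)) := by
      apply mul_nonneg (by positivity)
      nlinarith
    linarith
  rw [lin]
  have hly : lyap p (24 / γ) n a b u = 24 / γ * (b / d + n * (b / (d * a))) + u / a := by
    unfold lyap; rw [← hdd]
  rw [hly]
  set v := u / a
  have hv : 0 ≤ v := by positivity
  set P := b / d + n * (b / (d * a)) with hP
  have hbP : b ≤ n * P := by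
    have : 0 ≤ n * (b / (d * a)) := by positivity
    have h1 : b / d ≤ P := by linarith
    have h2 : b = d * (b / d) := by field_simp
    have h3 : 0 ≤ b / d := by positivity
    calc b = d * (b / d) := h2
      _ ≤ n * P := by gcongr; linarith
  have hP0 : 0 ≤ P := by positivity
  have step1 : 24 / γ * (drift p (fun a b _ => b / (a - (1 - p) * b)) a b u
     + n * drift p (fun a b _ => b / ((a - (1 - p) * b) * a)) a b u) ≤ 24 / γ * (- (γ / 4) * n * P) := by
    gcongr
    refine le_trans ?_ main
    gcongr
  have e5 : 24 / γ * (- (γ / 4) * n * P) = - 6 * (n * P) := by field_simp; ring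
  rw [e5] at step1
  set m := min (γ / 8) (p / 4)
  have hm1 : m ≤ γ / 8 := min_le_left _ _
  have hm2 : m ≤ p / 4 := min_le_right _ _
  have a1 : m * n * (24 / γ * P) ≤ γ / 8 * n * (24 / γ * P) := by gcongr
  have a2 : γ / 8 * n * (24 / γ * P) = 3 * (n * P) := by field_simp; ring
  have a3 : m * n * v ≤ p / 4 * n * v := by gcongr
  linarith

lemma drift_exp (p l D n a b u : ℝ) (hp0 : 0 < p) (hp1 : p ≤ 1) (hl : 0 ≤ l) (hl5 : l ≤ 1 / 5)
    (ha : 0 ≤ a) (hb : 0 ≤ b) (hu : 0 ≤ u) (hn : a + b + u = n) (hd : 4 * l * n ≤ a - (1 - p) * b) :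
    drift p (fun a b u => Real.exp (-l * (a - (1 - p) * b - D) + 2 * l ^ 2 * (n - u))) a b u ≤ 0 := by
  obtain ⟨q, hq⟩ : ∃ q, q = 1 - p := ⟨_, rfl⟩
  have hq0 : 0 ≤ q := by linarith
  have hq1 : q ≤ 1 := by linarith
  have hp : p = 1 - q := by linarith
  unfold drift
  simp only [← hq] at *
  set X := -l * (a - q * b - D) + 2 * l ^ 2 * (n - u) with hX
  rw [show -l * (a - 1 - q * b - D) + 2 * l ^ 2 * (n - (u + 1)) = X + (l - 2 * l ^ 2) by rw [hX]; ring,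
   show -l * (a - q * (b - 1) - D) + 2 * l ^ 2 * (n - (u + 1)) = X + (- q * l - 2 * l ^ 2) by rw [hX]; ring,
   show -l * (a + 1 - q * b - D) + 2 * l ^ 2 * (n - (u - 1)) = X + (-l + 2 * l ^ 2) by rw [hX]; ring,
   show -l * (a - q * (b + 1) - D) + 2 * l ^ 2 * (n - (u - 1)) = X + (q * l + 2 * l ^ 2) by rw [hX]; ring]
  have key : ∀ s : ℝ, |s| ≤ l + 2 * l ^ 2 → Real.exp (X + s) - Real.exp X ≤ Real.exp X * (s + 2 * l ^ 2) := by
    intro s hs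
    have hb1 : l + 2 * l ^ 2 ≤ 1 := by nlinarith
    have h := Real.abs_exp_sub_one_sub_id_le (hs.trans hb1)
    have h' := (abs_le.mp h).2
    have hs2 : s ^ 2 ≤ 2 * l ^ 2 := by
      rw [← sq_abs]
      have : |s| ^ 2 ≤ (l + 2 * l ^ 2) ^ 2 := by gcongr
      have h3 : (l + 2 * l ^ 2) ^ 2 = l ^ 2 * (1 + 2 * l) ^ 2 := by ring
      have h4 : (1 + 2 * l) ^ 2 ≤ 2 := by nlinarith
      nlinarith [sq_nonneg l]
    rw [Real.exp_add]
    have := Real.exp_pos X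
    have : Real.exp s - 1 ≤ s + 2 * l ^ 2 := by linarith
    nlinarith
  have hl2 := sq_nonneg l
  have hql : q * l ≤ l := by nlinarith
  have hql0 : 0 ≤ q * l := by positivity
  have k1 := mul_le_mul_of_nonneg_left (key (l - 2 * l ^ 2) (by rw [abs_le]; constructor <;> nlinarith)) (show 0 ≤ q * a * b by positivity)
  have k2 := mul_le_mul_of_nonneg_left (key (- q * l - 2 * l ^ 2) (by rw [abs_le]; constructor <;> nlinarith)) (show 0 ≤ a * b by positivity)
  have k3 := mul_le_mul_of_nonneg_left (key (-l + 2 * l ^ 2) (by rw [abs_le]; constructor <;> nlinarith)) (show 0 ≤ u * a by positivity)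
  have k4 := mul_le_mul_of_nonneg_left (key (q * l + 2 * l ^ 2) (by rw [abs_le]; constructor <;> nlinarith)) (show 0 ≤ u * b by positivity)
  refine (add_le_add (add_le_add (add_le_add k1 k2) k3) k4).trans ?_
  have e : q * a * b * (Real.exp X * (l - 2 * l ^ 2 + 2 * l ^ 2)) + a * b * (Real.exp X * (- q * l - 2 * l ^ 2 + 2 * l ^ 2))
    + u * a * (Real.exp X * (-l + 2 * l ^ 2 + 2 * l ^ 2)) + u * b * (Real.exp X * (q * l + 2 * l ^ 2 + 2 * l ^ 2))
    = - (Real.exp X * (l * u * ((a - q * b) - 4 * l * (a + b)))) := by ring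
  rw [e]
  have : 4 * l * (a + b) ≤ 4 * l * n := by gcongr; linarith
  have : 0 ≤ Real.exp X * (l * u * ((a - q * b) - 4 * l * (a + b))) := by
    have : 0 ≤ (a - q * b) - 4 * l * (a + b) := by linarith
    positivity
  linarith

/-- The finite set of possible successors of a configuration. -/
def nbrs (c : ℕ × ℕ × ℕ) : Finset (ℕ × ℕ × ℕ) :=
  {(c.1 - 1, c.2.1, c.2.2 + 1), (c.1, c.2.1 - 1, c.2.2 + 1), (c.1 + 1, c.2.1, c.2.2 - 1),
    (c.1, c.2.1 + 1, c.2.2 - 1), c}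

lemma usdStep_eq_zero (n : ℕ) (p : ℝ) (c d : ℕ × ℕ × ℕ) (h : d ∉ nbrs c) : usdStep n p c d = 0 := by
  simp only [nbrs, Finset.mem_insert, Finset.mem_singleton, not_or] at h
  obtain ⟨h1, h2, h3, h4, h5⟩ := h
  unfold usdStep
  rw [if_neg h1, if_neg h2, if_neg h3, if_neg h4, if_neg h5]
  norm_num

/-- One step of the chain applied to a function. -/
noncomputable def stepOp (n : ℕ) (p : ℝ) (f : ℕ × ℕ × ℕ → ℝ) (c : ℕ × ℕ × ℕ) : ℝ :=
  (1 - p) * (c.1 : ℝ) * (c.2.1 : ℝ) / (n : ℝ) ^ 2 * f (c.1 - 1, c.2.1, c.2.2 + 1) +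
  (c.1 : ℝ) * (c.2.1 : ℝ) / (n : ℝ) ^ 2 * f (c.1, c.2.1 - 1, c.2.2 + 1) +
  (c.2.2 : ℝ) * (c.1 : ℝ) / (n : ℝ) ^ 2 * f (c.1 + 1, c.2.1, c.2.2 - 1) +
  (c.2.2 : ℝ) * (c.2.1 : ℝ) / (n : ℝ) ^ 2 * f (c.1, c.2.1 + 1, c.2.2 - 1) +
  (1 - ((2 - p) * (c.1 : ℝ) * (c.2.1 : ℝ) + (c.2.2 : ℝ) * ((c.1 : ℝ) + (c.2.1 : ℝ))) / (n : ℝ) ^ 2)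
    * f c

lemma sum_usdStep (n : ℕ) (p : ℝ) (f : ℕ × ℕ × ℕ → ℝ) (c : ℕ × ℕ × ℕ) :
    ∑ d ∈ nbrs c, usdStep n p c d * f d = stepOp n p f c := by
  have key : ∀ (e : ℕ × ℕ × ℕ) (r : ℝ), e ∈ nbrs c →
      ∑ d ∈ nbrs c, (if d = e then r else 0) * f d = r * f e := by
    intro e r he
    rw [Finset.sum_eq_single_of_mem e he]
    · simp
    · intro d _ hd; simp [hd]
  unfold usdStep stepOp
  simp only [add_mul, Finset.sum_add_distrib]
  rw [key _ _ (by simp [nbrs]), key _ _ (by simp [nbrs]), key _ _ (by simp [nbrs]),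
    key _ _ (by simp [nbrs]), key _ _ (by simp [nbrs])]

/-- Conservation of the number of agents along transitions of nonzero probability. -/
lemma sum_of_usdStep_ne_zero (n : ℕ) (p : ℝ) (c d : ℕ × ℕ × ℕ) (hc : c.1 + c.2.1 + c.2.2 = n)
    (h : usdStep n p c d ≠ 0) : d.1 + d.2.1 + d.2.2 = n := by
  by_contra hd
  apply h
  unfold usdStep
  have z1 : (if d = (c.1 - 1, c.2.1, c.2.2 + 1) then (1 - p) * (c.1 : ℝ) * (c.2.1 : ℝ) / (n : ℝ) ^ 2 else 0) = 0 := by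
    split_ifs with hh
    · have : c.1 = 0 := by
        by_contra h0; apply hd; rw [hh]; simp only; omega
      simp [this]
    · rfl
  have z2 : (if d = (c.1, c.2.1 - 1, c.2.2 + 1) then (c.1 : ℝ) * (c.2.1 : ℝ) / (n : ℝ) ^ 2 else 0) = 0 := by
    split_ifs with hh
    · have : c.2.1 = 0 := by
        by_contra h0; apply hd; rw [hh]; simp only; omega
      simp [this]
    · rfl
  have z3 : (if d = (c.1 + 1, c.2.1, c.2.2 - 1) then (c.2.2 : ℝ) * (c.1 : ℝ) / (n : ℝ) ^ 2 else 0) = 0 := by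
    split_ifs with hh
    · have : c.2.2 = 0 := by
        by_contra h0; apply hd; rw [hh]; simp only; omega
      simp [this]
    · rfl
  have z4 : (if d = (c.1, c.2.1 + 1, c.2.2 - 1) then (c.2.2 : ℝ) * (c.2.1 : ℝ) / (n : ℝ) ^ 2 else 0) = 0 := by
    split_ifs with hh
    · have : c.2.2 = 0 := by
        by_contra h0; apply hd; rw [hh]; simp only; omega
      simp [this]
    · rfl
  have z5 : d ≠ c := by rintro rfl; exact hd hc
  rw [z1, z2, z3, z4, if_neg z5]
  norm_num

/-- The cylinder set of trajectories agreeing with `seq` up to time `t`. -/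
def cyl (t : ℕ) (seq : ℕ → ℕ × ℕ × ℕ) : Set (ℕ → ℕ × ℕ × ℕ) := {ω | ∀ i ≤ t, ω i = seq i}

lemma cyl_succ (n : ℕ) (p : ℝ) (x0 : ℕ × ℕ × ℕ) (μ : Measure (ℕ → ℕ × ℕ × ℕ)) (hμ : IsUSD n p x0 μ)
    (t : ℕ) (seq : ℕ → ℕ × ℕ × ℕ) (d : ℕ × ℕ × ℕ) :
    (μ (cyl (t + 1) (Function.update seq (t + 1) d))).toReal
      = (μ (cyl t seq)).toReal * usdStep n p (seq t) d := by
  unfold cyl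
  rw [hμ.2, hμ.2, Finset.prod_range_succ, Function.update_self,
    Function.update_of_ne (show t ≠ t + 1 by omega), Function.update_of_ne (show 0 ≠ t + 1 by omega),
    ← mul_assoc]
  congr 2
  apply Finset.prod_congr rfl
  intro i hi
  rw [Finset.mem_range] at hi
  rw [Function.update_of_ne (show i ≠ t + 1 by omega), Function.update_of_ne (show i + 1 ≠ t + 1 by omega)]

/-- Backward induction bound on the probability of not hitting `X₁ = n`. -/
lemma backward (n : ℕ) (p : ℝ) (x0 : ℕ × ℕ × ℕ) (μ : Measure (ℕ → ℕ × ℕ × ℕ)) (hμ : IsUSD n p x0 μ)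
    (H : ℕ → ℕ × ℕ × ℕ → ℝ)
    (hH : ∀ k (c : ℕ × ℕ × ℕ), c.1 + c.2.1 + c.2.2 = n → c.1 = n → 0 ≤ H k c)
    (hS : ∀ k (c : ℕ × ℕ × ℕ), c.1 + c.2.1 + c.2.2 = n → c.1 ≠ n →
      1 ≤ H k c ∨ ∃ k', k = k' + 1 ∧ stepOp n p (H k') c ≤ H k c)
    (k : ℕ) : ∀ (t : ℕ) (seq : ℕ → ℕ × ℕ × ℕ), (seq t).1 + (seq t).2.1 + (seq t).2.2 = n →
      (μ (cyl t seq ∩ {ω | ∀ i, t ≤ i → i ≤ t + k → (ω i).1 ≠ n})).toReal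
        ≤ (μ (cyl t seq)).toReal * H k (seq t) := by
  have := hμ.1
  induction k with
  | zero =>
    intro t seq hc
    by_cases h : (seq t).1 = n
    · have : cyl t seq ∩ {ω | ∀ i, t ≤ i → i ≤ t + 0 → (ω i).1 ≠ n} = ∅ := by
        ext ω
        simp only [Set.mem_inter_iff, Set.mem_ofPred_eq, Set.mem_empty_iff_false, iff_false, not_and]
        intro h1 h2
        exact h2 t le_rfl (by omega) (by rw [h1 t le_rfl]; exact h)
      rw [this]
      have := hH 0 _ hc h
      simp only [measure_empty, ENNReal.toReal_zero]
      positivity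
    · rcases hS 0 _ hc h with h1 | ⟨k', hk, _⟩
      · calc _ ≤ (μ (cyl t seq)).toReal :=
            ENNReal.toReal_mono (measure_ne_top _ _) (measure_mono Set.inter_subset_left)
          _ ≤ _ := le_mul_of_one_le_right ENNReal.toReal_nonneg h1
      · omega
  | succ k ih =>
    intro t seq hc
    by_cases h : (seq t).1 = n
    · have : cyl t seq ∩ {ω | ∀ i, t ≤ i → i ≤ t + (k + 1) → (ω i).1 ≠ n} = ∅ := by
        ext ω
        simp only [Set.mem_inter_iff, Set.mem_ofPred_eq, Set.mem_empty_iff_false, iff_false, not_and]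
        intro h1 h2
        exact h2 t le_rfl (by omega) (by rw [h1 t le_rfl]; exact h)
      rw [this]
      have := hH (k + 1) _ hc h
      simp only [measure_empty, ENNReal.toReal_zero]
      positivity
    · rcases hS (k + 1) _ hc h with h1 | ⟨k', hk, hst⟩
      · calc _ ≤ (μ (cyl t seq)).toReal :=
            ENNReal.toReal_mono (measure_ne_top _ _) (measure_mono Set.inter_subset_left)
          _ ≤ _ := le_mul_of_one_le_right ENNReal.toReal_nonneg h1
      · obtain rfl : k = k' := by omega
        set A : ℕ × ℕ × ℕ → Set (ℕ → ℕ × ℕ × ℕ) := fun d =>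
          cyl (t + 1) (Function.update seq (t + 1) d) ∩
            {ω | ∀ i, t + 1 ≤ i → i ≤ t + 1 + k → (ω i).1 ≠ n} with hA
        set Z : Set (ℕ → ℕ × ℕ × ℕ) := ⋃ d ∈ {d | d ∉ nbrs (seq t)},
          cyl (t + 1) (Function.update seq (t + 1) d) with hZ
        have hsub : cyl t seq ∩ {ω | ∀ i, t ≤ i → i ≤ t + (k + 1) → (ω i).1 ≠ n} ⊆
            (⋃ d ∈ nbrs (seq t), A d) ∪ Z := by
          rintro ω ⟨h1, h2⟩
          have hcy : ω ∈ cyl (t + 1) (Function.update seq (t + 1) (ω (t + 1))) := by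
            intro i hi
            by_cases hit : i = t + 1
            · subst hit; rw [Function.update_self]
            · rw [Function.update_of_ne hit]; exact h1 i (by omega)
          by_cases hm : ω (t + 1) ∈ nbrs (seq t)
          · left
            simp only [Set.mem_iUnion]
            exact ⟨ω (t + 1), hm, hcy, fun i hi hi2 => h2 i (by omega) (by omega)⟩
          · right
            simp only [hZ, Set.mem_iUnion]
            exact ⟨ω (t + 1), hm, hcy⟩
        have hZ0 : μ Z = 0 := by
          rw [hZ, measure_biUnion_null_iff (Set.to_countable _)]
          intro d hd
          have := cyl_succ n p x0 μ hμ t seq d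
          rw [usdStep_eq_zero n p _ d hd, mul_zero, ENNReal.toReal_eq_zero_iff] at this
          rcases this with h | h
          · exact h
          · exact absurd h (measure_ne_top _ _)
        have hle : μ (cyl t seq ∩ {ω | ∀ i, t ≤ i → i ≤ t + (k + 1) → (ω i).1 ≠ n}) ≤
            ∑ d ∈ nbrs (seq t), μ (A d) := by
          calc _ ≤ μ ((⋃ d ∈ nbrs (seq t), A d) ∪ Z) := measure_mono hsub
            _ ≤ μ (⋃ d ∈ nbrs (seq t), A d) + μ Z := measure_union_le _ _
            _ = μ (⋃ d ∈ nbrs (seq t), A d) := by rw [hZ0, add_zero]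
            _ ≤ _ := measure_biUnion_finset_le _ _
        calc _ ≤ (∑ d ∈ nbrs (seq t), μ (A d)).toReal :=
              ENNReal.toReal_mono (ENNReal.sum_ne_top.2 fun d _ => measure_ne_top _ _) hle
          _ = ∑ d ∈ nbrs (seq t), (μ (A d)).toReal :=
              ENNReal.toReal_sum fun d _ => measure_ne_top _ _
          _ ≤ ∑ d ∈ nbrs (seq t), (μ (cyl t seq)).toReal * (usdStep n p (seq t) d * H k d) := by
              apply Finset.sum_le_sum
              intro d _
              have hcs := cyl_succ n p x0 μ hμ t seq d
              by_cases hz : usdStep n p (seq t) d = 0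
              · rw [hz, zero_mul, mul_zero]
                rw [hz, mul_zero] at hcs
                rw [← hcs]
                exact ENNReal.toReal_mono (measure_ne_top _ _) (measure_mono Set.inter_subset_left)
              · have hd := sum_of_usdStep_ne_zero n p _ d hc hz
                have := ih (t + 1) (Function.update seq (t + 1) d) (by
                  rw [Function.update_self]; exact hd)
                rw [hcs, Function.update_self, mul_assoc] at this
                exact this
          _ = (μ (cyl t seq)).toReal * stepOp n p (H k) (seq t) := by
              rw [← Finset.mul_sum, sum_usdStep]
          _ ≤ _ := mul_le_mul_of_nonneg_left hst ENNReal.toReal_nonneg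

lemma hit_bound (n : ℕ) (p : ℝ) (x0 : ℕ × ℕ × ℕ) (hx0 : x0.1 + x0.2.1 + x0.2.2 = n)
    (μ : Measure (ℕ → ℕ × ℕ × ℕ)) (hμ : IsUSD n p x0 μ)
    (H : ℕ → ℕ × ℕ × ℕ → ℝ)
    (hH : ∀ k (c : ℕ × ℕ × ℕ), c.1 + c.2.1 + c.2.2 = n → c.1 = n → 0 ≤ H k c)
    (hS : ∀ k (c : ℕ × ℕ × ℕ), c.1 + c.2.1 + c.2.2 = n → c.1 ≠ n →
      1 ≤ H k c ∨ ∃ k', k = k' + 1 ∧ stepOp n p (H k') c ≤ H k c)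
    (T : ℕ) (R : ℝ) (hT : (T : ℝ) ≤ R) :
    1 - H T x0 ≤ (μ {ω | ∃ t : ℕ, (t : ℝ) ≤ R ∧ (ω t).1 = n}).toReal := by
  have := hμ.1
  have hb := backward n p x0 μ hμ H hH hS T 0 (fun _ => x0) hx0
  have h1 : (μ (cyl 0 (fun _ => x0))).toReal = 1 := by
    unfold cyl; rw [hμ.2]; simp
  rw [h1, one_mul] at hb
  set S := {ω : ℕ → ℕ × ℕ × ℕ | ∃ t : ℕ, (t : ℝ) ≤ R ∧ (ω t).1 = n} with hS'
  set B := cyl 0 (fun _ => x0) ∩ {ω | ∀ i, 0 ≤ i → i ≤ 0 + T → (ω i).1 ≠ n}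
  have hsub : cyl 0 (fun _ => x0) ⊆ B ∪ S := by
    intro ω hω
    by_cases hh : ω ∈ S
    · right; exact hh
    · left
      refine ⟨hω, ?_⟩
      intro i _ hi hin
      apply hh
      refine ⟨i, le_trans ?_ hT, hin⟩
      exact_mod_cast (by omega : i ≤ T)
  have h2 : (1 : ℝ) ≤ (μ B).toReal + (μ S).toReal := by
    rw [← h1, ← ENNReal.toReal_add (measure_ne_top _ _) (measure_ne_top _ _)]
    exact ENNReal.toReal_mono (by finiteness) ((measure_mono hsub).trans (measure_union_le _ _))
  linarith

lemma stepOp_le (n : ℕ) (hn : 1 ≤ n) (p : ℝ) (hp0 : 0 ≤ p) (hp1 : p ≤ 1) (f : ℕ × ℕ × ℕ → ℝ)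
    (g : ℝ → ℝ → ℝ → ℝ) (c : ℕ × ℕ × ℕ) (hc : c.1 + c.2.1 + c.2.2 = n)
    (hfg : ∀ d ∈ nbrs c, d.1 + d.2.1 + d.2.2 = n → f d ≤ g d.1 d.2.1 d.2.2) :
    stepOp n p f c ≤ g c.1 c.2.1 c.2.2 + drift p g c.1 c.2.1 c.2.2 / (n : ℝ) ^ 2 := by
  obtain ⟨a, b, u⟩ := c
  simp only at hc
  have hq : 0 ≤ 1 - p := by linarith
  have hn0 : (0 : ℝ) < n := by exact_mod_cast hn
  have t1 : (1 - p) * (a : ℝ) * (b : ℝ) / (n : ℝ) ^ 2 * f (a - 1, b, u + 1) ≤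
      (1 - p) * (a : ℝ) * (b : ℝ) / (n : ℝ) ^ 2 * g (a - 1) b (u + 1) := by
    rcases Nat.eq_zero_or_pos a with h | h
    · simp [h]
    · have := hfg (a - 1, b, u + 1) (by simp [nbrs]) (by simp only; omega)
      simp only [Nat.cast_sub h, Nat.cast_add, Nat.cast_one] at this
      exact mul_le_mul_of_nonneg_left this (by positivity)
  have t2 : (a : ℝ) * (b : ℝ) / (n : ℝ) ^ 2 * f (a, b - 1, u + 1) ≤
      (a : ℝ) * (b : ℝ) / (n : ℝ) ^ 2 * g a (b - 1) (u + 1) := by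
    rcases Nat.eq_zero_or_pos b with h | h
    · simp [h]
    · have := hfg (a, b - 1, u + 1) (by simp [nbrs]) (by simp only; omega)
      simp only [Nat.cast_sub h, Nat.cast_add, Nat.cast_one] at this
      exact mul_le_mul_of_nonneg_left this (by positivity)
  have t3 : (u : ℝ) * (a : ℝ) / (n : ℝ) ^ 2 * f (a + 1, b, u - 1) ≤
      (u : ℝ) * (a : ℝ) / (n : ℝ) ^ 2 * g (a + 1) b (u - 1) := by
    rcases Nat.eq_zero_or_pos u with h | h
    · simp [h]
    · have := hfg (a + 1, b, u - 1) (by simp [nbrs]) (by simp only; omega)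
      simp only [Nat.cast_sub h, Nat.cast_add, Nat.cast_one] at this
      exact mul_le_mul_of_nonneg_left this (by positivity)
  have t4 : (u : ℝ) * (b : ℝ) / (n : ℝ) ^ 2 * f (a, b + 1, u - 1) ≤
      (u : ℝ) * (b : ℝ) / (n : ℝ) ^ 2 * g a (b + 1) (u - 1) := by
    rcases Nat.eq_zero_or_pos u with h | h
    · simp [h]
    · have := hfg (a, b + 1, u - 1) (by simp [nbrs]) (by simp only; omega)
      simp only [Nat.cast_sub h, Nat.cast_add, Nat.cast_one] at this
      exact mul_le_mul_of_nonneg_left this (by positivity)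
  have t5 : (1 - ((2 - p) * (a : ℝ) * (b : ℝ) + (u : ℝ) * ((a : ℝ) + (b : ℝ))) / (n : ℝ) ^ 2)
      * f (a, b, u) ≤ (1 - ((2 - p) * (a : ℝ) * (b : ℝ) + (u : ℝ) * ((a : ℝ) + (b : ℝ))) / (n : ℝ) ^ 2)
      * g a b u := by
    have := hfg (a, b, u) (by simp [nbrs]) hc
    refine mul_le_mul_of_nonneg_left this ?_
    rw [sub_nonneg, div_le_one (by positivity)]
    exact rates_le p a b u n hp0 (by positivity) (by positivity) (by positivity) (by exact_mod_cast hc)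
  unfold stepOp
  refine (add_le_add (add_le_add (add_le_add (add_le_add t1 t2) t3) t4) t5).trans (le_of_eq ?_)
  unfold drift
  field_simp
  ring

lemma lyap_nonneg (p K n a b u : ℝ) (hK : 0 ≤ K) (hn : 0 ≤ n) (ha : 0 ≤ a) (hb : 0 ≤ b) (hu : 0 ≤ u)
    (hd : 0 ≤ a - (1 - p) * b) : 0 ≤ lyap p K n a b u := by
  unfold lyap; positivity

lemma nbr_bias (p : ℝ) (hp0 : 0 ≤ p) (hp1 : p ≤ 1) (c d : ℕ × ℕ × ℕ) (hd : d ∈ nbrs c) :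
    (c.1 : ℝ) - (1 - p) * c.2.1 - 1 ≤ (d.1 : ℝ) - (1 - p) * d.2.1 := by
  have hq : 0 ≤ 1 - p := by linarith
  have h : (c.1 ≤ d.1 + 1 ∧ d.2.1 ≤ c.2.1) ∨ (c.1 ≤ d.1 ∧ d.2.1 ≤ c.2.1 + 1) := by
    simp only [nbrs, Finset.mem_insert, Finset.mem_singleton] at hd
    rcases hd with rfl | rfl | rfl | rfl | rfl <;> (try simp only) <;> omega
  rcases h with ⟨h1, h2⟩ | ⟨h1, h2⟩
  · have h1' : (c.1 : ℝ) ≤ d.1 + 1 := by exact_mod_cast h1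
    have h2' : (d.2.1 : ℝ) ≤ c.2.1 := by exact_mod_cast h2
    nlinarith
  · have h1' : (c.1 : ℝ) ≤ d.1 := by exact_mod_cast h1
    have h2' : (d.2.1 : ℝ) ≤ c.2.1 + 1 := by exact_mod_cast h2
    nlinarith

lemma core (n : ℕ) (hn : 1 ≤ n) (p γ D : ℝ) (hp0 : 0 < p) (hp1 : p ≤ 1) (hγ : 0 < γ) (hγ1 : γ ≤ 1)
    (M : ℝ → ℝ → ℝ → ℝ)
    (hD : (16 / γ + 8 / p) * Real.sqrt n ≤ D)
    (hg : ∀ a b u : ℝ, 0 ≤ a → 0 ≤ b → 0 ≤ u → a + b + u = n → D ≤ a - (1 - p) * b →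
      γ * (n : ℝ) ^ 2 ≤ a ^ 2 + n * (a - (1 - p) * b) + n * u)
    (hM0 : ∀ a b u : ℝ, 0 ≤ M a b u)
    (hM1 : ∀ a b u : ℝ, 0 ≤ a → 0 ≤ b → 0 ≤ u → a + b + u = n → a - (1 - p) * b < D → 1 ≤ M a b u)
    (hM2 : ∀ a b u : ℝ, 0 ≤ a → 0 ≤ b → 0 ≤ u → a + b + u = n → D ≤ a - (1 - p) * b →
      drift p M a b u ≤ 0)
    (x0 : ℕ × ℕ × ℕ) (hx0 : x0.1 + x0.2.1 + x0.2.2 = n)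
    (μ : Measure (ℕ → ℕ × ℕ × ℕ)) (hμ : IsUSD n p x0 μ) (T : ℕ) (R : ℝ) (hT : (T : ℝ) ≤ R) :
    1 - (M x0.1 x0.2.1 x0.2.2 + (1 - min (γ / 8) (p / 4) / n) ^ T *
        max (n * lyap p (24 / γ) n x0.1 x0.2.1 x0.2.2) 0)
      ≤ (μ {ω | ∃ t : ℕ, (t : ℝ) ≤ R ∧ (ω t).1 = n}).toReal := by
  have hn1 : (1 : ℝ) ≤ n := by exact_mod_cast hn
  have hn0 : (0 : ℝ) < n := by linarith
  set m := min (γ / 8) (p / 4) with hm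
  have hm0 : 0 < m := by rw [hm]; positivity
  have hm1 : m ≤ 1 := (min_le_left _ _).trans (by linarith)
  have hρ : 0 ≤ 1 - m / n := by
    rw [sub_nonneg, div_le_one hn0]; linarith
  have hD2 : 2 ≤ D := by
    have hs1 : 1 ≤ Real.sqrt n := by rw [Real.one_le_sqrt]; exact hn1
    have hg16 : 16 ≤ 16 / γ := by rw [le_div_iff₀ hγ]; linarith
    have : 0 < 8 / p := by positivity
    nlinarith
  refine hit_bound n p x0 hx0 μ hμ
    (fun k c => M c.1 c.2.1 c.2.2 + (1 - m / n) ^ k * max (n * lyap p (24 / γ) n c.1 c.2.1 c.2.2) 0)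
    ?_ ?_ T R hT
  · intro k c _ _
    have := hM0 c.1 c.2.1 c.2.2
    positivity
  · intro k c hc hcn
    have ha0 : (0 : ℝ) ≤ c.1 := by positivity
    have hb0 : (0 : ℝ) ≤ c.2.1 := by positivity
    have hu0 : (0 : ℝ) ≤ c.2.2 := by positivity
    have hsum : (c.1 : ℝ) + c.2.1 + c.2.2 = n := by exact_mod_cast hc
    rcases lt_or_ge ((c.1 : ℝ) - (1 - p) * c.2.1) D with hlt | hge
    · left
      have := hM1 c.1 c.2.1 c.2.2 ha0 hb0 hu0 hsum hlt
      have : 0 ≤ (1 - m / n) ^ k * max (n * lyap p (24 / γ) n c.1 c.2.1 c.2.2) 0 := by positivity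
      linarith
    · have hL0 : 0 ≤ lyap p (24 / γ) n c.1 c.2.1 c.2.2 :=
        lyap_nonneg _ _ _ _ _ _ (by positivity) hn0.le ha0 hb0 hu0 (by linarith)
      have hmax : max (n * lyap p (24 / γ) n c.1 c.2.1 c.2.2) 0 = n * lyap p (24 / γ) n c.1 c.2.1 c.2.2 :=
        max_eq_left (by positivity)
      rcases k with _ | k
      · left
        have hq : 0 ≤ (1 - p) * c.2.1 := mul_nonneg (by linarith) hb0
        have hapos : (0 : ℝ) < c.1 := by linarith
        simp only [pow_zero, one_mul, hmax]
        have h1 := hM0 c.1 c.2.1 c.2.2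
        suffices 1 ≤ n * lyap p (24 / γ) n c.1 c.2.1 c.2.2 by linarith
        unfold lyap
        set d := (c.1 : ℝ) - (1 - p) * c.2.1
        have hd0 : 0 < d := by linarith
        have hdn : d ≤ n := by linarith
        have h24 : 1 ≤ 24 / γ := by rw [le_div_iff₀ hγ]; linarith
        rcases Nat.eq_zero_or_pos c.2.1 with hb | hb
        · have hu : 1 ≤ c.2.2 := by omega
          have hu' : (1 : ℝ) ≤ c.2.2 := by exact_mod_cast hu
          simp only [hb, Nat.cast_zero, zero_div, mul_zero, add_zero, zero_add]
          rw [← mul_div_assoc, le_div_iff₀ hapos]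
          nlinarith
        · have hb' : (1 : ℝ) ≤ c.2.1 := by exact_mod_cast hb
          have i1 : 1 / (n : ℝ) ≤ (c.2.1 : ℝ) / d := by gcongr
          have i2 : 0 ≤ (n : ℝ) * ((c.2.1 : ℝ) / (d * c.1)) := by positivity
          have i3 : 0 ≤ (c.2.2 : ℝ) / c.1 := by positivity
          have i4 : 1 / (n : ℝ) ≤ 24 / γ * ((c.2.1 : ℝ) / d + n * ((c.2.1 : ℝ) / (d * c.1))) := by
            have : (0 : ℝ) < 1 / n := by positivity
            nlinarith
          calc (1 : ℝ) = n * (1 / n) := by field_simp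
            _ ≤ _ := by gcongr; linarith
      · right
        refine ⟨k, rfl, ?_⟩
        have st := stepOp_le n hn p hp0.le hp1
          (fun c => M c.1 c.2.1 c.2.2 + (1 - m / n) ^ k * max (n * lyap p (24 / γ) n c.1 c.2.1 c.2.2) 0)
          (fun a b u => M a b u + (1 - m / n) ^ k * (n * lyap p (24 / γ) n a b u)) c hc ?_
        · refine st.trans ?_
          simp only [hmax]
          have dr : drift p (fun a b u => M a b u + (1 - m / n) ^ k * (n * lyap p (24 / γ) n a b u)) c.1 c.2.1 c.2.2
            = drift p M c.1 c.2.1 c.2.2 + (1 - m / n) ^ k * n * drift p (lyap p (24 / γ) n) c.1 c.2.1 c.2.2 := by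
            unfold drift; ring
          rw [dr]
          have d1 := hM2 c.1 c.2.1 c.2.2 ha0 hb0 hu0 hsum hge
          have d2 := drift_lyap p γ n c.1 c.2.1 c.2.2 hp0 hp1 hγ hγ1 hb0 hu0 hsum hn1 (hD.trans hge)
            (hg _ _ _ ha0 hb0 hu0 hsum hge)
          rw [← hm] at d2
          set Λ := lyap p (24 / γ) n c.1 c.2.1 c.2.2
          set r := (1 - m / (n : ℝ)) ^ k with hr
          have hr0 : 0 ≤ r := by positivity
          have d3 : (drift p M c.1 c.2.1 c.2.2 + r * n * drift p (lyap p (24 / γ) n) c.1 c.2.1 c.2.2) / (n : ℝ) ^ 2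
            ≤ (0 + r * n * (- m * n * Λ)) / (n : ℝ) ^ 2 := by gcongr
          have d4 : (0 + r * n * (- m * n * Λ)) / (n : ℝ) ^ 2 = - (r * m * Λ) := by
            field_simp; ring
          have d5 : (1 - m / (n : ℝ)) ^ (k + 1) * (n * Λ) = r * (n * Λ) - r * m * Λ := by
            rw [pow_succ, ← hr]; field_simp
          rw [d5]
          linarith
        · intro d hd _
          have hb := nbr_bias p hp0.le hp1 c d hd
          have : 0 ≤ lyap p (24 / γ) n d.1 d.2.1 d.2.2 :=
            lyap_nonneg _ _ _ _ _ _ (by positivity) hn0.le (by positivity) (by positivity) (by positivity)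
              (by linarith)
          rw [max_eq_left (by positivity)]

lemma pow_bound (n : ℕ) (hn : 1 ≤ n) (m C : ℝ) (hm0 : 0 < m) (hm1 : m ≤ 1)
    (hC : 4 ≤ m * C) :
    (1 - m / n) ^ (⌊C * n * Real.log n⌋₊) ≤ 3 / (n : ℝ) ^ 4 := by
  have hn1 : (1 : ℝ) ≤ n := by exact_mod_cast hn
  have hn0 : (0 : ℝ) < n := by linarith
  have hlog : 0 ≤ Real.log n := Real.log_nonneg hn1
  set T := ⌊C * n * Real.log n⌋₊
  have hT : C * n * Real.log n - 1 ≤ T := by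
    have := Nat.lt_floor_add_one (C * n * Real.log n)
    linarith
  have hmn : m / n ≤ 1 := by rw [div_le_one hn0]; linarith
  have hmn0 : 0 ≤ m / n := by positivity
  calc (1 - m / n) ^ T ≤ (Real.exp (-(m / n))) ^ T := by
        apply pow_le_pow_left₀ (by linarith)
        have := Real.add_one_le_exp (-(m / n))
        linarith
    _ = Real.exp (T * (-(m / n))) := by rw [Real.exp_nat_mul]
    _ ≤ Real.exp (1 - 4 * Real.log n) := by
        apply Real.exp_le_exp.2
        have h1 : (C * n * Real.log n - 1) * (m / n) ≤ T * (m / n) := by gcongr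
        have h2 : (C * n * Real.log n - 1) * (m / n) = m * C * Real.log n - m / n := by field_simp
        have h3 : 4 * Real.log n ≤ m * C * Real.log n := by gcongr
        linarith
    _ = Real.exp 1 / (n : ℝ) ^ 4 := by
        rw [Real.exp_sub]
        congr 1
        rw [show (4 : ℝ) * Real.log n = ((4 : ℕ) : ℝ) * Real.log n by norm_num, Real.exp_nat_mul, Real.exp_log hn0]
    _ ≤ 3 / (n : ℝ) ^ 4 := by
        gcongr
        have := Real.exp_one_lt_d9
        linarith

lemma core2 (n : ℕ) (hn : 1 ≤ n) (p γ D C : ℝ) (hp0 : 0 < p) (hp1 : p ≤ 1) (hγ : 0 < γ) (hγ1 : γ ≤ 1)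
    (M : ℝ → ℝ → ℝ → ℝ)
    (hD : (16 / γ + 8 / p) * Real.sqrt n ≤ D)
    (hg : ∀ a b u : ℝ, 0 ≤ a → 0 ≤ b → 0 ≤ u → a + b + u = n → D ≤ a - (1 - p) * b →
      γ * (n : ℝ) ^ 2 ≤ a ^ 2 + n * (a - (1 - p) * b) + n * u)
    (hM0 : ∀ a b u : ℝ, 0 ≤ M a b u)
    (hM1 : ∀ a b u : ℝ, 0 ≤ a → 0 ≤ b → 0 ≤ u → a + b + u = n → a - (1 - p) * b < D → 1 ≤ M a b u)
    (hM2 : ∀ a b u : ℝ, 0 ≤ a → 0 ≤ b → 0 ≤ u → a + b + u = n → D ≤ a - (1 - p) * b →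
      drift p M a b u ≤ 0)
    (x0 : ℕ × ℕ × ℕ) (hx0 : x0.1 + x0.2.1 + x0.2.2 = n)
    (μ : Measure (ℕ → ℕ × ℕ × ℕ)) (hμ : IsUSD n p x0 μ)
    (hDx : D ≤ (x0.1 : ℝ) - (1 - p) * x0.2.1)
    (hMx : M x0.1 x0.2.1 x0.2.2 ≤ 1 / n)
    (hC1 : 1 + 147 / γ ≤ C) (hC2 : 4 ≤ min (γ / 8) (p / 4) * C) :
    1 - C * (n : ℝ)⁻¹ ≤ (μ {ω | ∃ t : ℕ, (t : ℝ) ≤ C * n * Real.log n ∧ (ω t).1 = n}).toReal := by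
  have hn1 : (1 : ℝ) ≤ n := by exact_mod_cast hn
  have hn0 : (0 : ℝ) < n := by linarith
  have hlog : 0 ≤ Real.log n := Real.log_nonneg hn1
  have hC0 : 0 ≤ C := by
    have : 0 < 147 / γ := by positivity
    linarith
  have h := core n hn p γ D hp0 hp1 hγ hγ1 M hD hg hM0 hM1 hM2 x0 hx0 μ hμ ⌊C * n * Real.log n⌋₊
    (C * n * Real.log n) (Nat.floor_le (by positivity))
  refine le_trans ?_ h
  set m := min (γ / 8) (p / 4) with hm
  have hm0 : 0 < m := by rw [hm]; positivity
  have hm1 : m ≤ 1 := (min_le_left _ _).trans (by linarith)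
  have hpow := pow_bound n hn m C hm0 hm1 hC2
  have hD2 : 1 ≤ D := by
    have hs1 : 1 ≤ Real.sqrt n := by rw [Real.one_le_sqrt]; exact hn1
    have hg16 : 16 ≤ 16 / γ := by rw [le_div_iff₀ hγ]; linarith
    have : 0 < 8 / p := by positivity
    nlinarith
  have ha0 : (0 : ℝ) ≤ x0.1 := by positivity
  have hb0 : (0 : ℝ) ≤ x0.2.1 := by positivity
  have hu0 : (0 : ℝ) ≤ x0.2.2 := by positivity
  have hsum : (x0.1 : ℝ) + x0.2.1 + x0.2.2 = n := by exact_mod_cast hx0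
  have hL0 : 0 ≤ lyap p (24 / γ) n x0.1 x0.2.1 x0.2.2 :=
    lyap_nonneg _ _ _ _ _ _ (by positivity) hn0.le ha0 hb0 hu0 (by linarith)
  have hL : lyap p (24 / γ) n x0.1 x0.2.1 x0.2.2 ≤ 49 / γ * (n : ℝ) ^ 2 := by
    have hq : 0 ≤ (1 - p) * x0.2.1 := mul_nonneg (by linarith) hb0
    unfold lyap
    set d := (x0.1 : ℝ) - (1 - p) * x0.2.1
    have hd1 : 1 ≤ d := by linarith
    have ha1 : (1 : ℝ) ≤ x0.1 := by linarith
    have hnn : (n : ℝ) ≤ (n : ℝ) ^ 2 := by nlinarith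
    have j1 : (x0.2.1 : ℝ) / d ≤ n := (div_le_self hb0 hd1).trans (by linarith)
    have j2 : (x0.2.1 : ℝ) / (d * x0.1) ≤ n := (div_le_self hb0 (by nlinarith)).trans (by linarith)
    have j3 : (x0.2.2 : ℝ) / x0.1 ≤ n := (div_le_self hu0 ha1).trans (by linarith)
    have hγi : 1 ≤ 1 / γ := by rw [le_div_iff₀ hγ]; linarith
    calc _ ≤ 24 / γ * (n + n * n) + n := by gcongr
      _ ≤ 24 / γ * ((n : ℝ) ^ 2 + n * n) + 1 / γ * (n : ℝ) ^ 2 := by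
        gcongr
        nlinarith
      _ = _ := by ring
  rw [max_eq_left (by positivity)]
  have hfin : (1 - m / n) ^ (⌊C * n * Real.log n⌋₊) * (n * lyap p (24 / γ) n x0.1 x0.2.1 x0.2.2)
     ≤ 147 / γ * (n : ℝ)⁻¹ := by
    calc _ ≤ 3 / (n : ℝ) ^ 4 * (n * (49 / γ * (n : ℝ) ^ 2)) := by gcongr
      _ = _ := by field_simp; norm_num
  have : (1 + 147 / γ) * (n : ℝ)⁻¹ ≤ C * (n : ℝ)⁻¹ := by gcongr
  rw [one_div] at hMx
  linarith

lemma gamma_bound (q a b u n : ℝ) (hq0 : 0 < q) (hq1 : q ≤ 1) (ha : 0 ≤ a) (hu : 0 ≤ u)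
    (hs : a + b + u = n) (hd : 0 ≤ a - q * b) (hn : 0 < n) :
    (q / 4) ^ 2 * n ^ 2 ≤ a ^ 2 + n * (a - q * b) + n * u := by
  have h1 : 0 ≤ n * (a - q * b) := by positivity
  rcases le_or_gt (n / 2) u with h | h
  · have h2 : n * (n / 2) ≤ n * u := by gcongr
    have h3 : (q / 4) ^ 2 ≤ 1 / 2 := by nlinarith
    have h4 : (q / 4) ^ 2 * n ^ 2 ≤ 1 / 2 * n ^ 2 := by gcongr
    have := sq_nonneg a
    linarith
  · have h2 : q * (n / 2) ≤ q * (a + b) := by gcongr; linarith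
    have h3 : q * a ≤ 1 * a := by gcongr
    have h4 : q / 4 * n ≤ a := by linarith
    have h5 : (q / 4 * n) ^ 2 ≤ a ^ 2 := by gcongr
    have h6 : 0 ≤ n * u := by positivity
    rw [← mul_pow]
    linarith

/-- For constants `ε, p ∈ (0,1]`, there are constants `c, C > 0`
(depending only on `ε` and `p`) such that for any configuration `x0 = (x₁, x₂, u)` with
`x₁ ∈ [ε·n, x₂]`, `u ≤ n/2` and `p - p_s ≥ c·√(log n / n)` where `p_s = 1 - x₁/x₂`,
the chain `USD_p` started from `x0` reaches `X₁ = n` within `C·n·log n` steps with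
probability at least `1 - C·n⁻¹`. -/
theorem stmt_0 (ε p : ℝ) (hε : ε ∈ Set.Ioc (0 : ℝ) 1) (hp : p ∈ Set.Ioc (0 : ℝ) 1) :
    ∃ c C : ℝ, 0 < c ∧ 0 < C ∧
      ∀ (n : ℕ), 2 ≤ n →
      ∀ x0 : ℕ × ℕ × ℕ, x0.1 + x0.2.1 + x0.2.2 = n →
        ε * (n : ℝ) ≤ (x0.1 : ℝ) → x0.1 ≤ x0.2.1 → (x0.2.2 : ℝ) ≤ (n : ℝ) / 2 →
        c * Real.sqrt (Real.log n / n) ≤ p - (1 - (x0.1 : ℝ) / (x0.2.1 : ℝ)) →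
        ∀ μ : Measure (ℕ → ℕ × ℕ × ℕ), IsUSD n p x0 μ →
          1 - C * (n : ℝ)⁻¹ ≤
            (μ {ω | ∃ t : ℕ, (t : ℝ) ≤ C * n * Real.log n ∧ (ω t).1 = n}).toReal := by
  obtain ⟨hε0, hε1⟩ := hε
  obtain ⟨hp0, hp1⟩ := hp
  rcases hp1.lt_or_eq with hplt | rfl
  · -- the case `p < 1`
    obtain ⟨q, hq⟩ : ∃ q, q = 1 - p := ⟨_, rfl⟩
    have hq0 : 0 < q := by linarith
    have hq1 : q ≤ 1 := by linarith
    obtain ⟨γ, hγd⟩ : ∃ γ, γ = (q / 4) ^ 2 := ⟨_, rfl⟩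
    have hγ : 0 < γ := by rw [hγd]; positivity
    have hγ1 : γ ≤ 1 / 4 := by rw [hγd]; nlinarith
    have hL : 0 < 16 / γ + 8 / p := by positivity
    set L := 16 / γ + 8 / p with hLd
    have ev1 : ∀ᶠ n : ℕ in Filter.atTop, Real.log n / n ≤ 1 / 25 := by
      have h1 : Filter.Tendsto (fun x : ℝ => Real.log x / x) Filter.atTop (nhds 0) := by
        simpa using Real.tendsto_pow_log_div_mul_add_atTop 1 0 1 one_ne_zero
      exact (h1.comp tendsto_natCast_atTop_atTop).eventually_le_const (by norm_num)
    have ev2 : ∀ᶠ n : ℕ in Filter.atTop, L ^ 2 ≤ Real.log n :=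
      (Real.tendsto_log_atTop.comp tendsto_natCast_atTop_atTop).eventually_ge_atTop _
    obtain ⟨N, hN⟩ := Filter.eventually_atTop.1 (ev1.and ev2)
    have hm0 : 0 < min (γ / 8) (p / 4) := by positivity
    refine ⟨28, 1 + 147 / γ + 4 / min (γ / 8) (p / 4) + N, by norm_num, by positivity, ?_⟩
    intro n hn2 x0 hx0 hx1 hx12 hu hbias μ hμ
    have hμp := hμ.1
    have hn1 : (1 : ℝ) ≤ n := by exact_mod_cast (by omega : 1 ≤ n)
    have hn0 : (0 : ℝ) < n := by linarith
    set C := 1 + 147 / γ + 4 / min (γ / 8) (p / 4) + N with hC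
    have h147 : 0 < 147 / γ := by positivity
    have h4m : 0 < 4 / min (γ / 8) (p / 4) := by positivity
    rcases lt_or_ge n N with hlt | hge
    · have h1 : (n : ℝ) ≤ C := by
        have : (n : ℝ) ≤ N := by exact_mod_cast hlt.le
        rw [hC]; linarith
      have : 1 ≤ C * (n : ℝ)⁻¹ := by
        rw [← div_eq_mul_inv, le_div_iff₀ hn0]; linarith
      have h3 : 0 ≤ (μ {ω | ∃ t : ℕ, (t : ℝ) ≤ C * n * Real.log n ∧ (ω t).1 = n}).toReal :=
        ENNReal.toReal_nonneg
      linarith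
    · obtain ⟨hN1, hN2⟩ := hN n hge
      set l := Real.sqrt (Real.log n / n) with hl
      have hlog : 0 ≤ Real.log n := Real.log_nonneg hn1
      have hl0 : 0 ≤ l := Real.sqrt_nonneg _
      have hl2 : l ^ 2 = Real.log n / n := Real.sq_sqrt (by positivity)
      have hl5 : l ≤ 1 / 5 := by
        rw [hl]; apply Real.sqrt_le_iff.2; constructor <;> norm_num; linarith
      have hl2n : l ^ 2 * n = Real.log n := by rw [hl2]; field_simp
      have ha0 : (0 : ℝ) ≤ x0.1 := by positivity
      have hb0 : (0 : ℝ) ≤ x0.2.1 := by positivity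
      have hu0 : (0 : ℝ) ≤ x0.2.2 := by positivity
      have hsum : (x0.1 : ℝ) + x0.2.1 + x0.2.2 = n := by exact_mod_cast hx0
      have hab : (x0.1 : ℝ) ≤ x0.2.1 := by exact_mod_cast hx12
      have hb4 : (n : ℝ) / 4 ≤ x0.2.1 := by linarith
      have hbpos : (0 : ℝ) < x0.2.1 := by linarith
      have hΔ : 7 * l * n ≤ (x0.1 : ℝ) - (1 - p) * x0.2.1 := by
        have e : (x0.1 : ℝ) - (1 - p) * x0.2.1 = (p - (1 - (x0.1 : ℝ) / x0.2.1)) * x0.2.1 := by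
          field_simp; ring
        rw [e]
        calc 7 * l * n = 28 * l * (n / 4) := by ring
          _ ≤ 28 * l * x0.2.1 := by gcongr
          _ ≤ _ := by gcongr
      refine core2 n (by omega) p γ (4 * l * n) C hp0 hp1 hγ (by linarith)
        (fun a b u => Real.exp (-l * (a - (1 - p) * b - 4 * l * n) + 2 * l ^ 2 * (n - u)))
        ?_ ?_ ?_ ?_ ?_ x0 hx0 μ hμ ?_ ?_ ?_ ?_
      · have e : L * Real.sqrt n ≤ l * n := by
          have h1 : Real.sqrt (L ^ 2 * n) ≤ Real.sqrt ((l * n) ^ 2) := by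
            apply Real.sqrt_le_sqrt
            calc L ^ 2 * n ≤ Real.log n * n := by gcongr
              _ = (l * n) ^ 2 := by rw [← hl2n]; ring
          rwa [Real.sqrt_mul (by positivity), Real.sqrt_sq hL.le, Real.sqrt_sq (by positivity)] at h1
        have : 0 ≤ l * n := by positivity
        linarith
      · intro a b u ha hb hu hs hd
        rw [← hq] at hd ⊢
        rw [hγd]
        exact gamma_bound q a b u n hq0 hq1 ha hu hs (le_trans (by positivity) hd) hn0
      · intro a b u; positivity
      · intro a b u ha hb hu hs hd
        apply Real.one_le_exp
        have h1 : 0 ≤ l * (4 * l * n - (a - (1 - p) * b)) := mul_nonneg hl0 (by linarith)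
        have h2 : 0 ≤ 2 * l ^ 2 * (n - u) := mul_nonneg (by positivity) (by linarith)
        linarith
      · intro a b u ha hb hu hs hd
        exact drift_exp p l (4 * l * n) n a b u hp0 hp1 hl0 hl5 ha hb hu hs hd
      · have : 0 ≤ l * n := by positivity
        linarith
      · have h1 : 1 / (n : ℝ) = Real.exp (- Real.log n) := by
          rw [Real.exp_neg, Real.exp_log hn0, one_div]
        rw [h1]
        apply Real.exp_le_exp.2
        have h2 : l * (7 * l * n) ≤ l * ((x0.1 : ℝ) - (1 - p) * x0.2.1) := by gcongr
        have h3 : 0 ≤ l ^ 2 * x0.2.2 := by positivity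
        rw [← hl2n]
        linarith
      · have : (0 : ℝ) ≤ N := by positivity
        rw [hC]; linarith
      · have h1 : 4 / min (γ / 8) (p / 4) ≤ C := by
          have : (0 : ℝ) ≤ N := by positivity
          rw [hC]; linarith
        rw [div_le_iff₀ hm0] at h1
        linarith
  · -- the case `p = 1`
    have hm0 : 0 < min (ε / 8) ((1 : ℝ) / 4) := by positivity
    have hL : 0 < 16 / ε + 8 / 1 := by positivity
    set L := 16 / ε + 8 / 1 with hLd
    set N := (L / ε) ^ 2 with hNd
    have hN0 : 0 ≤ N := by positivity
    refine ⟨1, 1 + 147 / ε + 4 / min (ε / 8) (1 / 4) + N, by norm_num, by positivity, ?_⟩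
    intro n hn2 x0 hx0 hx1 hx12 hu hbias μ hμ
    have hμp := hμ.1
    have hn1 : (1 : ℝ) ≤ n := by exact_mod_cast (by omega : 1 ≤ n)
    have hn0 : (0 : ℝ) < n := by linarith
    set C := 1 + 147 / ε + 4 / min (ε / 8) (1 / 4) + N with hC
    have h147 : 0 < 147 / ε := by positivity
    have h4m : 0 < 4 / min (ε / 8) ((1 : ℝ) / 4) := by positivity
    rcases lt_or_ge (n : ℝ) N with hlt | hge
    · have h1 : (n : ℝ) ≤ C := by
        rw [hC]; linarith
      have : 1 ≤ C * (n : ℝ)⁻¹ := by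
        rw [← div_eq_mul_inv, le_div_iff₀ hn0]; linarith
      have h3 : 0 ≤ (μ {ω | ∃ t : ℕ, (t : ℝ) ≤ C * n * Real.log n ∧ (ω t).1 = n}).toReal :=
        ENNReal.toReal_nonneg
      linarith
    · have hs : L / ε ≤ Real.sqrt n := Real.le_sqrt_of_sq_le hge
      refine core2 n (by omega) 1 ε (ε * n) C one_pos le_rfl hε0 hε1
        (fun a _ _ => if a < ε * n then 1 else 0)
        ?_ ?_ ?_ ?_ ?_ x0 hx0 μ hμ ?_ ?_ ?_ ?_
      · rw [div_le_iff₀ hε0] at hs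
        have h2 := Real.mul_self_sqrt hn0.le
        calc L * Real.sqrt n ≤ Real.sqrt n * ε * Real.sqrt n := by gcongr
          _ = ε * (Real.sqrt n * Real.sqrt n) := by ring
          _ = ε * n := by rw [h2]
      · intro a b u ha hb hu hs hd
        have h4 : 0 ≤ n * u := by positivity
        have h5 : n * (ε * n) ≤ n * (a - (1 - 1) * b) := by gcongr
        nlinarith [sq_nonneg a]
      · intro a b u
        split_ifs <;> norm_num
      · intro a b u ha hb hu hs hd
        rw [if_pos (by linarith)]
      · intro a b u ha hb hu hs hd
        have h1 : ε * n ≤ a := by linarith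
        unfold drift
        beta_reduce
        rw [if_neg (not_lt.2 h1), if_neg (show ¬ (a + 1 < ε * n) by linarith)]
        simp
      · linarith
      · rw [if_neg (not_lt.2 hx1)]
        positivity
      · rw [hC]; linarith
      · have h1 : 4 / min (ε / 8) ((1 : ℝ) / 4) ≤ C := by
          rw [hC]; linarith
        rw [div_le_iff₀ hm0] at h1
        linarith
end

section
/- Let ε, p ∈ (0,1] be constants and let x = (x₁, x₂, u) be a configuration with x₁ ∈ [ε·n, x₂] and u ≤ n/2, and set p_s = 1 − x₁/x₂. There exist constants c, C > 0 (depending only on ε and p) such that whenever p_s − p ≥ c·√(log n / n), the chain USD_p started from x satisfies Pr[T₂ ≤ C·n·log n] ≥ 1 − C·n^{-1}, where T₂ = inf{t ≥ 0 : X₂(t) = n}. -/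
open MeasureTheory

/-- The transition operator of the chain, acting on functions. -/
noncomputable def usdP (n : ℕ) (p : ℝ) (f : ℕ × ℕ × ℕ → ℝ) (c : ℕ × ℕ × ℕ) : ℝ :=
  (1 - p) * (c.1 : ℝ) * (c.2.1 : ℝ) / (n : ℝ) ^ 2 * f (c.1 - 1, c.2.1, c.2.2 + 1) +
  (c.1 : ℝ) * (c.2.1 : ℝ) / (n : ℝ) ^ 2 * f (c.1, c.2.1 - 1, c.2.2 + 1) +
  (c.2.2 : ℝ) * (c.1 : ℝ) / (n : ℝ) ^ 2 * f (c.1 + 1, c.2.1, c.2.2 - 1) +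
  (c.2.2 : ℝ) * (c.2.1 : ℝ) / (n : ℝ) ^ 2 * f (c.1, c.2.1 + 1, c.2.2 - 1) +
  (1 - ((2 - p) * (c.1 : ℝ) * (c.2.1 : ℝ) + (c.2.2 : ℝ) * ((c.1 : ℝ) + (c.2.1 : ℝ))) / (n : ℝ) ^ 2)
    * f c

/-- The possible successors of a configuration. -/
def usdNext (c : ℕ × ℕ × ℕ) : Finset (ℕ × ℕ × ℕ) :=
  {(c.1 - 1, c.2.1, c.2.2 + 1), (c.1, c.2.1 - 1, c.2.2 + 1), (c.1 + 1, c.2.1, c.2.2 - 1),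
    (c.1, c.2.1 + 1, c.2.2 - 1), c}

lemma usdP_eq_sum (n : ℕ) (p : ℝ) (f : ℕ × ℕ × ℕ → ℝ) (c : ℕ × ℕ × ℕ) :
    usdP n p f c = ∑ d ∈ usdNext c, usdStep n p c d * f d := by
  have key : ∀ (e : ℕ × ℕ × ℕ) (w : ℝ), e ∈ usdNext c →
      ∑ d ∈ usdNext c, (if d = e then w else 0) * f d = w * f e := by
    intro e w he
    rw [Finset.sum_eq_single e]
    · simp
    · intro b _ hb; simp [hb]
    · intro h; exact absurd he h
  unfold usdStep
  simp only [add_mul, Finset.sum_add_distrib]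
  rw [key, key, key, key, key]
  · unfold usdP; ring
  all_goals simp [usdNext]

lemma usd_cyl_meas (t : ℕ) (seq : ℕ → ℕ × ℕ × ℕ) :
    MeasurableSet {ω : ℕ → ℕ × ℕ × ℕ | ∀ i ≤ t, ω i = seq i} := by
  have : {ω : ℕ → ℕ × ℕ × ℕ | ∀ i ≤ t, ω i = seq i} =
      ⋂ i ∈ Finset.range (t+1), (fun ω : ℕ → ℕ × ℕ × ℕ => ω i) ⁻¹' {seq i} := by
    ext ω; simp
  rw [this]
  refine Finset.measurableSet_biInter _ (fun i _ => ?_)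
  exact measurable_pi_apply i (MeasurableSet.singleton _)

lemma usd_good_meas (n t : ℕ) :
    MeasurableSet {ω : ℕ → ℕ × ℕ × ℕ | (ω t).2.1 = n} := by
  have : {ω : ℕ → ℕ × ℕ × ℕ | (ω t).2.1 = n} =
     (fun ω : ℕ → ℕ × ℕ × ℕ => ω t) ⁻¹' {c | c.2.1 = n} := rfl
  rw [this]
  exact measurable_pi_apply t MeasurableSet.of_discrete

lemma usd_markov (n : ℕ) (p : ℝ) (x0 : ℕ × ℕ × ℕ) (μ : Measure (ℕ → ℕ × ℕ × ℕ))
    (hμ : IsUSD n p x0 μ) (s : ℕ) : ∀ (t : ℕ) (seq : ℕ → ℕ × ℕ × ℕ),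
    μ.real {ω | ∀ i ≤ t, ω i = seq i} *
      ((usdP n p)^[s] (fun c => if c.2.1 = n then 1 else 0)) (seq t) ≤
      μ.real ({ω | ∀ i ≤ t, ω i = seq i} ∩ {ω | (ω (t + s)).2.1 = n}) := by
  have := hμ.1
  induction s with
  | zero =>
    intro t seq
    simp only [Function.iterate_zero, id, add_zero]
    split_ifs with h
    · rw [mul_one]
      apply measureReal_mono
      · intro ω hω
        refine ⟨hω, ?_⟩
        have := hω t le_rfl
        simp only [Set.mem_ofPred_eq, this, h]
      · exact measure_ne_top _ _
    · rw [mul_zero]; exact measureReal_nonneg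
  | succ s ih =>
    intro t seq
    rw [Function.iterate_succ_apply', usdP_eq_sum, Finset.mul_sum]
    have hcyl : ∀ d, μ.real {ω | ∀ i ≤ t, ω i = seq i} * usdStep n p (seq t) d =
        μ.real {ω | ∀ i ≤ t + 1, ω i = (Function.update seq (t+1) d) i} := by
      intro d
      have h1 := hμ.2 t seq
      have h2 := hμ.2 (t+1) (Function.update seq (t+1) d)
      rw [measureReal_def, measureReal_def, h1, h2, Finset.prod_range_succ]
      have h3 : ∏ i ∈ Finset.range t, usdStep n p (Function.update seq (t+1) d i)
          (Function.update seq (t+1) d (i+1)) =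
          ∏ i ∈ Finset.range t, usdStep n p (seq i) (seq (i+1)) := by
        apply Finset.prod_congr rfl
        intro i hi
        rw [Finset.mem_range] at hi
        rw [Function.update_of_ne (by omega), Function.update_of_ne (by omega)]
      rw [h3, Function.update_self, Function.update_of_ne (by omega : t ≠ t+1),
        Function.update_of_ne (by omega : 0 ≠ t+1)]
      ring
    calc ∑ d ∈ usdNext (seq t), μ.real {ω | ∀ i ≤ t, ω i = seq i} * (usdStep n p (seq t) d *
          ((usdP n p)^[s] (fun c => if c.2.1 = n then 1 else 0)) d)
        ≤ ∑ d ∈ usdNext (seq t), μ.real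
            ({ω | ∀ i ≤ t + 1, ω i = (Function.update seq (t+1) d) i} ∩
              {ω | (ω (t + 1 + s)).2.1 = n}) := by
          apply Finset.sum_le_sum
          intro d _
          have := ih (t+1) (Function.update seq (t+1) d)
          rw [← hcyl, Function.update_self] at this
          linarith
      _ = μ.real (⋃ d ∈ usdNext (seq t),
            ({ω | ∀ i ≤ t + 1, ω i = (Function.update seq (t+1) d) i} ∩
              {ω | (ω (t + 1 + s)).2.1 = n})) := by
          rw [measureReal_biUnion_finset]
          · intro d _ d' _ hdd'
            refine Set.disjoint_left.2 ?_
            rintro ω ⟨h1, _⟩ ⟨h2, _⟩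
            have e1 := h1 (t+1) le_rfl
            have e2 := h2 (t+1) le_rfl
            rw [Function.update_self] at e1 e2
            exact hdd' (e1.symm.trans e2)
          · intro d _
            exact (usd_cyl_meas _ _).inter (usd_good_meas _ _)
      _ ≤ _ := by
          apply measureReal_mono
          · intro ω hω
            simp only [Set.mem_iUnion] at hω
            obtain ⟨d, _, h1, h2⟩ := hω
            refine ⟨?_, ?_⟩
            · intro i hi
              have := h1 i (by omega)
              rwa [Function.update_of_ne (by omega)] at this
            · have e : t + (s + 1) = t + 1 + s := by ring
              simp only [Set.mem_ofPred_eq, e]; exact h2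
          · exact measure_ne_top _ _

/-- Indicator of not having reached the consensus on Opinion 2. -/
noncomputable def usdBad (n : ℕ) (c : ℕ × ℕ × ℕ) : ℝ := if c.2.1 = n then 0 else 1

/-- Probability of not being absorbed at time `s`. -/
noncomputable def usdF (n : ℕ) (p : ℝ) (s : ℕ) : ℕ × ℕ × ℕ → ℝ := (usdP n p)^[s] (usdBad n)

lemma usdF_succ (n : ℕ) (p : ℝ) (s : ℕ) : usdF n p (s + 1) = usdP n p (usdF n p s) := by
  unfold usdF; rw [Function.iterate_succ_apply']

lemma usd_prob (n : ℕ) (p : ℝ) (x0 : ℕ × ℕ × ℕ) (μ : Measure (ℕ → ℕ × ℕ × ℕ))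
    (hμ : IsUSD n p x0 μ) (s : ℕ) :
    1 - usdF n p s x0 ≤ μ.real {ω | (ω s).2.1 = n} := by
  have := hμ.1
  have h := usd_markov n p x0 μ hμ s 0 (fun _ => x0)
  have h0 := hμ.2 0 (fun _ => x0)
  rw [← measureReal_def] at h0
  rw [h0] at h
  simp only [if_true, Finset.range_zero, Finset.prod_empty, mul_one, one_mul] at h
  have h1 : ∀ s, ∀ c, ((usdP n p)^[s] (fun c => if c.2.1 = n then 1 else 0)) c
      = 1 - usdF n p s c := by
    intro s
    induction s with
    | zero => intro c; simp only [usdF, usdBad, Function.iterate_zero, id]; split_ifs <;> norm_num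
    | succ s ih =>
      intro c
      rw [usdF_succ, Function.iterate_succ_apply']
      rw [show (usdP n p)^[s] (fun c => if c.2.1 = n then 1 else 0) = fun c => 1 - usdF n p s c
        from funext ih]
      unfold usdP
      ring
  rw [h1] at h
  refine h.trans (measureReal_mono ?_ (measure_ne_top _ _))
  rintro ω ⟨_, h⟩
  simpa using h

lemma usd_wt (n : ℕ) (hn : 0 < n) (p : ℝ) (hp : 0 ≤ p) (c : ℕ × ℕ × ℕ)
    (hc : c.1 + c.2.1 + c.2.2 = n) :
    ((2 - p) * (c.1 : ℝ) * (c.2.1 : ℝ) + (c.2.2 : ℝ) * ((c.1 : ℝ) + (c.2.1 : ℝ))) / (n : ℝ) ^ 2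
      ≤ 1 := by
  have hn' : (0:ℝ) < n := by exact_mod_cast hn
  rw [div_le_one (by positivity)]
  have : (n:ℝ) = c.1 + c.2.1 + c.2.2 := by rw [← hc]; push_cast; ring
  rw [this]
  have h1 : (0:ℝ) ≤ c.1 := by positivity
  have h2 : (0:ℝ) ≤ c.2.1 := by positivity
  have h3 : (0:ℝ) ≤ c.2.2 := by positivity
  have := mul_nonneg hp (mul_nonneg h1 h2)
  nlinarith [mul_nonneg h1 h2, mul_nonneg h1 h3, mul_nonneg h2 h3]

lemma usdP_mono (n : ℕ) (hn : 0 < n) (p : ℝ) (hp : 0 ≤ p) (hp1 : p ≤ 1)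
    (f g : ℕ × ℕ × ℕ → ℝ)
    (h : ∀ c : ℕ × ℕ × ℕ, c.1 + c.2.1 + c.2.2 = n → f c ≤ g c)
    (c : ℕ × ℕ × ℕ) (hc : c.1 + c.2.1 + c.2.2 = n) : usdP n p f c ≤ usdP n p g c := by
  have hw := usd_wt n hn p hp c hc
  obtain ⟨x, y, u⟩ := c
  unfold usdP
  simp only at hc hw ⊢
  have hq : 0 ≤ 1 - p := by linarith
  refine add_le_add (add_le_add (add_le_add (add_le_add ?_ ?_) ?_) ?_) ?_
  · rcases Nat.eq_zero_or_pos x with h0 | h0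
    · simp [h0]
    · exact mul_le_mul_of_nonneg_left (h _ (by simp only; omega)) (by positivity)
  · rcases Nat.eq_zero_or_pos y with h0 | h0
    · simp [h0]
    · exact mul_le_mul_of_nonneg_left (h _ (by simp only; omega)) (by positivity)
  · rcases Nat.eq_zero_or_pos u with h0 | h0
    · simp [h0]
    · exact mul_le_mul_of_nonneg_left (h _ (by simp only; omega)) (by positivity)
  · rcases Nat.eq_zero_or_pos u with h0 | h0
    · simp [h0]
    · exact mul_le_mul_of_nonneg_left (h _ (by simp only; omega)) (by positivity)
  · exact mul_le_mul_of_nonneg_left (h _ hc) (by linarith)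

lemma usdP_add_const (n : ℕ) (p : ℝ) (f : ℕ × ℕ × ℕ → ℝ) (a : ℝ) (c : ℕ × ℕ × ℕ) :
    usdP n p (fun c => f c + a) c = usdP n p f c + a := by
  unfold usdP; ring

lemma usdP_add (n : ℕ) (p : ℝ) (f g : ℕ × ℕ × ℕ → ℝ) (c : ℕ × ℕ × ℕ) :
    usdP n p (fun c => f c + g c) c = usdP n p f c + usdP n p g c := by
  unfold usdP; ring

lemma usdP_smul (n : ℕ) (p : ℝ) (f : ℕ × ℕ × ℕ → ℝ) (a : ℝ) (c : ℕ × ℕ × ℕ) :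
    usdP n p (fun c => f c * a) c = usdP n p f c * a := by
  unfold usdP; ring

lemma usdP_real (n : ℕ) (p : ℝ) (F : ℝ → ℝ → ℝ → ℝ) (c : ℕ × ℕ × ℕ) :
    usdP n p (fun c => F c.1 c.2.1 c.2.2) c =
  (1 - p) * (c.1 : ℝ) * (c.2.1 : ℝ) / (n : ℝ) ^ 2 * F (c.1 - 1) c.2.1 (c.2.2 + 1) +
  (c.1 : ℝ) * (c.2.1 : ℝ) / (n : ℝ) ^ 2 * F c.1 (c.2.1 - 1) (c.2.2 + 1) +
  (c.2.2 : ℝ) * (c.1 : ℝ) / (n : ℝ) ^ 2 * F (c.1 + 1) c.2.1 (c.2.2 - 1) +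
  (c.2.2 : ℝ) * (c.2.1 : ℝ) / (n : ℝ) ^ 2 * F c.1 (c.2.1 + 1) (c.2.2 - 1) +
  (1 - ((2 - p) * (c.1 : ℝ) * (c.2.1 : ℝ) + (c.2.2 : ℝ) * ((c.1 : ℝ) + (c.2.1 : ℝ))) / (n : ℝ) ^ 2)
    * F c.1 c.2.1 c.2.2 := by
  obtain ⟨x, y, u⟩ := c
  unfold usdP
  simp only
  congr 1
  congr 1
  congr 1
  congr 1
  · rcases Nat.eq_zero_or_pos x with h0 | h0
    · simp [h0]
    · rw [Nat.cast_sub h0]; push_cast; rfl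
  · rcases Nat.eq_zero_or_pos y with h0 | h0
    · simp [h0]
    · rw [Nat.cast_sub h0]; push_cast; rfl
  · rcases Nat.eq_zero_or_pos u with h0 | h0
    · simp [h0]
    · rw [Nat.cast_sub h0]; push_cast; rfl
  · rcases Nat.eq_zero_or_pos u with h0 | h0
    · simp [h0]
    · rw [Nat.cast_sub h0]; push_cast; rfl

lemma usd_exp_bd (l d : ℝ) (hl : 0 ≤ l) (hl1 : l ≤ 1) (hd : |d| ≤ 1) :
    Real.exp (-(l * d)) ≤ 1 - l * d + l ^ 2 := by
  have h1 : |-(l * d)| ≤ 1 := by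
    rw [abs_neg, abs_mul, abs_of_nonneg hl]
    nlinarith [abs_nonneg d]
  have h2 := (abs_le.1 (Real.abs_exp_sub_one_sub_id_le h1)).2
  have h3 : d ^ 2 ≤ 1 := (sq_le_one_iff_abs_le_one d).2 hd
  nlinarith [mul_le_mul_of_nonneg_left h3 (sq_nonneg l)]

/-- One-step bound for exponentials of linear functions. -/
lemma usdP_exp (n : ℕ) (hn : 0 < n) (p : ℝ) (hp : 0 ≤ p) (hp1 : p ≤ 1) (l a1 a2 a3 k : ℝ)
    (hl : 0 ≤ l) (hl1 : l ≤ 1) (h1 : |a3 - a1| ≤ 1) (h2 : |a3 - a2| ≤ 1)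
    (c : ℕ × ℕ × ℕ) (hc : c.1 + c.2.1 + c.2.2 = n) :
    usdP n p (fun c => Real.exp (-(l * (a1 * c.1 + a2 * c.2.1 + a3 * c.2.2)) + k)) c ≤
      Real.exp (-(l * (a1 * c.1 + a2 * c.2.1 + a3 * c.2.2)) + k) *
      (1 - l * (((1 - p) * c.1 * c.2.1 * (a3 - a1) + c.1 * c.2.1 * (a3 - a2)
        + c.2.2 * c.1 * (a1 - a3) + c.2.2 * c.2.1 * (a2 - a3)) / (n:ℝ)^2) + l ^ 2) := by
  rw [usdP_real n p (fun x y u => Real.exp (-(l * (a1 * x + a2 * y + a3 * u)) + k)) c]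
  have hw := usd_wt n hn p hp c hc
  obtain ⟨x', y', u'⟩ := c
  simp only at hc hw ⊢
  have hx : (0:ℝ) ≤ x' := by positivity
  have hy : (0:ℝ) ≤ y' := by positivity
  have hu : (0:ℝ) ≤ u' := by positivity
  have hnn : (0:ℝ) < n := by exact_mod_cast hn
  generalize (x':ℝ) = x at *
  generalize (y':ℝ) = y at *
  generalize (u':ℝ) = u at *
  have e1 : Real.exp (-(l * (a1 * (x - 1) + a2 * y + a3 * (u + 1))) + k) =
      Real.exp (-(l * (a1 * x + a2 * y + a3 * u)) + k) * Real.exp (-(l * (a3 - a1))) := by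
    rw [← Real.exp_add]; ring_nf
  have e2 : Real.exp (-(l * (a1 * x + a2 * (y - 1) + a3 * (u + 1))) + k) =
      Real.exp (-(l * (a1 * x + a2 * y + a3 * u)) + k) * Real.exp (-(l * (a3 - a2))) := by
    rw [← Real.exp_add]; ring_nf
  have e3 : Real.exp (-(l * (a1 * (x + 1) + a2 * y + a3 * (u - 1))) + k) =
      Real.exp (-(l * (a1 * x + a2 * y + a3 * u)) + k) * Real.exp (-(l * (a1 - a3))) := by
    rw [← Real.exp_add]; ring_nf
  have e4 : Real.exp (-(l * (a1 * x + a2 * (y + 1) + a3 * (u - 1))) + k) =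
      Real.exp (-(l * (a1 * x + a2 * y + a3 * u)) + k) * Real.exp (-(l * (a2 - a3))) := by
    rw [← Real.exp_add]; ring_nf
  rw [e1, e2, e3, e4]
  have hE := Real.exp_pos (-(l * (a1 * x + a2 * y + a3 * u)) + k)
  generalize Real.exp (-(l * (a1 * x + a2 * y + a3 * u)) + k) = E at *
  have b1 := usd_exp_bd l _ hl hl1 h1
  have b2 := usd_exp_bd l _ hl hl1 h2
  have b3 := usd_exp_bd l (a1 - a3) hl hl1 (by rwa [abs_sub_comm] at h1)
  have b4 := usd_exp_bd l (a2 - a3) hl hl1 (by rwa [abs_sub_comm] at h2)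
  have hq : 0 ≤ 1 - p := by linarith
  have w1 : 0 ≤ (1 - p) * x * y / (n:ℝ)^2 := by positivity
  have w2 : 0 ≤ x * y / (n:ℝ)^2 := by positivity
  have w3 : 0 ≤ u * x / (n:ℝ)^2 := by positivity
  have w4 : 0 ≤ u * y / (n:ℝ)^2 := by positivity
  have c1 := mul_le_mul_of_nonneg_left b1 w1
  have c2 := mul_le_mul_of_nonneg_left b2 w2
  have c3 := mul_le_mul_of_nonneg_left b3 w3
  have c4 := mul_le_mul_of_nonneg_left b4 w4
  have key : (1 - p) * x * y / (n:ℝ)^2 * Real.exp (-(l * (a3 - a1)))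
      + x * y / (n:ℝ)^2 * Real.exp (-(l * (a3 - a2)))
      + u * x / (n:ℝ)^2 * Real.exp (-(l * (a1 - a3)))
      + u * y / (n:ℝ)^2 * Real.exp (-(l * (a2 - a3)))
      + (1 - ((2 - p) * x * y + u * (x + y)) / (n:ℝ)^2)
      ≤ (1 - l * (((1 - p) * x * y * (a3 - a1) + x * y * (a3 - a2)
        + u * x * (a1 - a3) + u * y * (a2 - a3)) / (n:ℝ)^2) + l ^ 2) := by
    have hl2 := mul_le_mul_of_nonneg_left hw (sq_nonneg l)
    have : (1 - p) * x * y / (n:ℝ)^2 * (1 - l * (a3 - a1) + l^2)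
      + x * y / (n:ℝ)^2 * (1 - l * (a3 - a2) + l^2)
      + u * x / (n:ℝ)^2 * (1 - l * (a1 - a3) + l^2)
      + u * y / (n:ℝ)^2 * (1 - l * (a2 - a3) + l^2)
      + (1 - ((2 - p) * x * y + u * (x + y)) / (n:ℝ)^2) =
      1 - l * (((1 - p) * x * y * (a3 - a1) + x * y * (a3 - a2)
        + u * x * (a1 - a3) + u * y * (a2 - a3)) / (n:ℝ)^2)
        + l ^ 2 * (((2 - p) * x * y + u * (x + y)) / (n:ℝ)^2) := by ring
    linarith
  have := mul_le_mul_of_nonneg_left key hE.le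
  calc _ = E * ((1 - p) * x * y / (n:ℝ)^2 * Real.exp (-(l * (a3 - a1)))
      + x * y / (n:ℝ)^2 * Real.exp (-(l * (a3 - a2)))
      + u * x / (n:ℝ)^2 * Real.exp (-(l * (a1 - a3)))
      + u * y / (n:ℝ)^2 * Real.exp (-(l * (a2 - a3)))
      + (1 - ((2 - p) * x * y + u * (x + y)) / (n:ℝ)^2)) := by ring
    _ ≤ _ := this

lemma usdBad_bounds (n : ℕ) (c : ℕ × ℕ × ℕ) : 0 ≤ usdBad n c ∧ usdBad n c ≤ 1 := by
  unfold usdBad; split_ifs <;> norm_num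

lemma usdF_le_one (n : ℕ) (hn : 0 < n) (p : ℝ) (hp : 0 ≤ p) (hp1 : p ≤ 1) (s : ℕ) :
    ∀ c : ℕ × ℕ × ℕ, c.1 + c.2.1 + c.2.2 = n → usdF n p s c ≤ 1 := by
  induction s with
  | zero => intro c _; exact (usdBad_bounds n c).2
  | succ s ih =>
    intro c hc
    rw [usdF_succ]
    refine (usdP_mono n hn p hp hp1 _ (fun _ => 1) ih c hc).trans (le_of_eq ?_)
    unfold usdP; ring

lemma usdF_anti_step (n : ℕ) (hn : 0 < n) (p : ℝ) (hp : 0 ≤ p) (hp1 : p ≤ 1) (s : ℕ) :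
    ∀ c : ℕ × ℕ × ℕ, c.1 + c.2.1 + c.2.2 = n → usdF n p (s + 1) c ≤ usdF n p s c := by
  induction s with
  | zero =>
    intro c hc
    by_cases h : c.2.1 = n
    · obtain ⟨x, y, u⟩ := c
      simp only at h hc
      have hx : x = 0 := by omega
      have hu : u = 0 := by omega
      subst hx hu
      rw [usdF_succ]
      simp [usdP, usdF]
    · have := usdF_le_one n hn p hp hp1 1 c hc
      have e : usdF n p 0 c = 1 := by simp [usdF, usdBad, h]
      rw [e]; exact this
  | succ s ih =>
    intro c hc
    rw [usdF_succ n p (s + 1), usdF_succ n p s]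
    rw [← usdF_succ n p s]
    conv_rhs => rw [usdF_succ n p s]
    exact usdP_mono n hn p hp hp1 _ _ ih c hc

lemma usdF_anti (n : ℕ) (hn : 0 < n) (p : ℝ) (hp : 0 ≤ p) (hp1 : p ≤ 1) (c : ℕ × ℕ × ℕ)
    (hc : c.1 + c.2.1 + c.2.2 = n) (s j : ℕ) : usdF n p (s + j) c ≤ usdF n p s c := by
  induction j with
  | zero => exact le_rfl
  | succ j ih => exact (usdF_anti_step n hn p hp hp1 (s + j) c hc).trans ih

/-- Comparison principle for a phase of the process. -/
lemma usd_phase (n : ℕ) (hn : 0 < n) (p : ℝ) (hp : 0 ≤ p) (hp1 : p ≤ 1)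
    (S : Set (ℕ × ℕ × ℕ)) (η : ℝ) (hη : 0 ≤ η) (T N : ℕ) (G : ℕ → ℕ × ℕ × ℕ → ℝ)
    (hS : ∀ c : ℕ × ℕ × ℕ, c.1 + c.2.1 + c.2.2 = n → c ∈ S → usdF n p T c ≤ η)
    (h0 : ∀ c : ℕ × ℕ × ℕ, c.1 + c.2.1 + c.2.2 = n → usdF n p T c ≤ G 0 c + η)
    (hG : ∀ s c, 0 ≤ G s c)
    (hstep : ∀ s, s < N → ∀ c : ℕ × ℕ × ℕ, c.1 + c.2.1 + c.2.2 = n → c ∉ S →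
      G (s + 1) c < 1 → usdP n p (G s) c ≤ G (s + 1) c) :
    ∀ s, s ≤ N → ∀ c : ℕ × ℕ × ℕ, c.1 + c.2.1 + c.2.2 = n → usdF n p (T + s) c ≤ G s c + η := by
  intro s
  induction s with
  | zero => intro _ c hc; exact h0 c hc
  | succ s ih =>
    intro hs c hc
    by_cases hcS : c ∈ S
    · have := usdF_anti n hn p hp hp1 c hc T (s+1)
      linarith [hS c hc hcS, hG (s+1) c]
    by_cases hG1 : G (s+1) c < 1
    · rw [← add_assoc, usdF_succ]
      have h1 := usdP_mono n hn p hp hp1 _ (fun c => G s c + η) (ih (by omega)) c hc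
      rw [usdP_add_const] at h1
      linarith [hstep s (by omega) c hc hcS hG1]
    · have := usdF_le_one n hn p hp hp1 (T + (s+1)) c hc
      push Not at hG1
      linarith

/-- The weighted bias in favour of Opinion 2. -/
noncomputable def usdD (p : ℝ) (c : ℕ × ℕ × ℕ) : ℝ := (1 - p) * (c.2.1 : ℝ) - c.1

lemma usdP_expD (n : ℕ) (hn : 0 < n) (p : ℝ) (hp : 0 ≤ p) (hp1 : p ≤ 1) (l k : ℝ)
    (hl : 0 ≤ l) (hl1 : l ≤ 1) (c : ℕ × ℕ × ℕ) (hc : c.1 + c.2.1 + c.2.2 = n) :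
    usdP n p (fun c => Real.exp (-(l * usdD p c) + k)) c ≤
      Real.exp (-(l * usdD p c) + k) * (1 - l * (c.2.2 * usdD p c / (n:ℝ)^2) + l ^ 2) := by
  have h := usdP_exp n hn p hp hp1 l (-1) (1 - p) 0 k hl hl1 (by norm_num)
    (by rw [abs_le]; constructor <;> linarith) c hc
  have e : ∀ c : ℕ × ℕ × ℕ, (-1 : ℝ) * c.1 + (1 - p) * c.2.1 + 0 * c.2.2 = usdD p c := by
    intro c; unfold usdD; ring
  simp only [e] at h
  refine h.trans (le_of_eq ?_)
  congr 3
  unfold usdD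
  ring

lemma usdP_expU (n : ℕ) (hn : 0 < n) (p : ℝ) (hp : 0 ≤ p) (hp1 : p ≤ 1) (l k : ℝ)
    (hl : 0 ≤ l) (hl1 : l ≤ 1) (c : ℕ × ℕ × ℕ) (hc : c.1 + c.2.1 + c.2.2 = n) :
    usdP n p (fun c => Real.exp (-(l * c.2.2) + k)) c ≤
      Real.exp (-(l * c.2.2) + k) *
        (1 - l * (((2 - p) * c.1 * c.2.1 - c.2.2 * (c.1 + c.2.1)) / (n:ℝ)^2) + l ^ 2) := by
  have h := usdP_exp n hn p hp hp1 l 0 0 1 k hl hl1 (by norm_num) (by norm_num) c hc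
  have e : ∀ c : ℕ × ℕ × ℕ, (0 : ℝ) * c.1 + 0 * c.2.1 + 1 * c.2.2 = c.2.2 := by
    intro c; ring
  simp only [e] at h
  refine h.trans (le_of_eq ?_)
  congr 3
  ring

lemma usdP_u (n : ℕ) (p : ℝ) (c : ℕ × ℕ × ℕ) :
    usdP n p (fun c => (c.2.2 : ℝ)) c =
      c.2.2 + ((2 - p) * c.1 * c.2.1 - c.2.2 * (c.1 + c.2.1)) / (n:ℝ)^2 := by
  rw [usdP_real n p (fun _ _ u => u) c]
  ring

lemma usdP_r (n : ℕ) (hn : 0 < n) (p : ℝ) (c : ℕ × ℕ × ℕ) (hc : (2:ℝ) ≤ c.2.1) :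
    usdP n p (fun c => (c.1 : ℝ) / c.2.1) c =
      (c.1 : ℝ) / c.2.1 + (c.1 : ℝ) / c.2.1 / (n:ℝ)^2 *
        (- usdD p c + c.1 / (c.2.1 - 1) + c.2.2 / (c.2.1 + 1)) := by
  rw [usdP_real n p (fun x y _ => x / y) c]
  have hnn : (0:ℝ) < n := by exact_mod_cast hn
  unfold usdD
  obtain ⟨x', y', u'⟩ := c
  simp only at hc ⊢
  generalize (x':ℝ) = x at *
  generalize (y':ℝ) = y at *
  generalize (u':ℝ) = u at *
  have h1 : y - 1 ≠ 0 := by linarith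
  have h2 : y + 1 ≠ 0 := by linarith
  have h3 : y ≠ 0 := by linarith
  field_simp
  ring

/-- Lyapunov function of the last phase. -/
noncomputable def usdV (n : ℕ) (γ : ℝ) (c : ℕ × ℕ × ℕ) : ℝ :=
  (c.2.2 : ℝ) + (c.1 : ℝ) / c.2.1 * (16 / γ * n)

lemma usdP_V (n : ℕ) (hn : 0 < n) (p γ : ℝ) (hp : 0 ≤ p) (hp1 : p ≤ 1) (hγ : 0 < γ) (hγ1 : γ ≤ 1)
    (hn0 : 16 / γ ^ 2 ≤ n) (c : ℕ × ℕ × ℕ) (hc : c.1 + c.2.1 + c.2.2 = n)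
    (hD : γ * n / 2 ≤ usdD p c) :
    usdP n p (usdV n γ) c ≤ usdV n γ c * (1 - γ / 8 / n) := by
  have hnn : (0:ℝ) < n := by exact_mod_cast hn
  have hsum : (c.1 : ℝ) + c.2.1 + c.2.2 = n := by rw [← hc]; push_cast; ring
  have hx : (0:ℝ) ≤ c.1 := by positivity
  have hy0 : (0:ℝ) ≤ c.2.1 := by positivity
  have hu : (0:ℝ) ≤ c.2.2 := by positivity
  have hγn : 16 / γ ≤ γ * n := by
    rw [div_le_iff₀ (by positivity)] at hn0 ⊢
    nlinarith
  have h16 : 16 ≤ 16 / γ := by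
    rw [le_div_iff₀ hγ]; linarith
  have hpy := mul_nonneg hp hy0
  have hD' : usdD p c = (1 - p) * c.2.1 - c.1 := rfl
  have hy : γ * n / 2 ≤ c.2.1 := by nlinarith
  have hxy : (c.1 : ℝ) ≤ c.2.1 := by nlinarith
  have hy8 : (8:ℝ) ≤ c.2.1 := by linarith
  have e : usdP n p (usdV n γ) c =
      usdP n p (fun c => (c.2.2 : ℝ)) c + usdP n p (fun c => (c.1 : ℝ) / c.2.1) c * (16 / γ * n) := by
    rw [← usdP_smul, ← usdP_add]; rfl
  rw [e, usdP_u, usdP_r n hn p c (by linarith)]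
  unfold usdV
  have b1 : (c.1 : ℝ) / (c.2.1 - 1) ≤ 2 := by
    rw [div_le_iff₀ (by linarith)]; linarith
  have b2 : (c.2.2 : ℝ) / (c.2.1 + 1) ≤ 2 / γ := by
    rw [div_le_div_iff₀ (by linarith) hγ]; nlinarith
  have b3 : - usdD p c + c.1 / (c.2.1 - 1) + c.2.2 / (c.2.1 + 1) ≤ - (γ * n / 4) := by
    have : 2 / γ = 16 / γ / 8 := by ring
    linarith
  have hr0 : 0 ≤ (c.1 : ℝ) / c.2.1 := by positivity
  have hrx : (c.1 : ℝ) = (c.1 : ℝ) / c.2.1 * c.2.1 := by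
    field_simp
  generalize hrr : (c.1 : ℝ) / c.2.1 = r at *
  have b4 : r / (n:ℝ)^2 * (- usdD p c + c.1 / (c.2.1 - 1) + c.2.2 / (c.2.1 + 1)) * (16 / γ * n)
      ≤ - (4 * r) := by
    have := mul_le_mul_of_nonneg_left b3 (by positivity : 0 ≤ r / (n:ℝ)^2 * (16 / γ * n))
    have e2 : r / (n:ℝ)^2 * (16 / γ * n) * (- (γ * n / 4)) = - (4 * r) := by
      field_simp; norm_num
    linarith
  have b5 : ((2 - p) * c.1 * c.2.1 - c.2.2 * (c.1 + c.2.1)) / (n:ℝ)^2 ≤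
      2 * r - c.2.2 * (γ / 2 / n) := by
    rw [div_le_iff₀ (by positivity)]
    have e3 : (2 * r - c.2.2 * (γ / 2 / n)) * (n:ℝ)^2 = 2 * r * n^2 - c.2.2 * (γ * n / 2) := by
      field_simp
    rw [e3]
    have i1 : (2 - p) * c.1 * c.2.1 ≤ 2 * r * n^2 := by
      have j1 : (2 - p) * c.1 * c.2.1 ≤ 2 * (c.1 * c.2.1) := by nlinarith [mul_nonneg hx hy0]
      have j2 : (c.1 : ℝ) * c.2.1 = r * (c.2.1 : ℝ)^2 := by rw [hrx]; ring
      have j3 : (c.2.1 : ℝ)^2 ≤ (n:ℝ)^2 := pow_le_pow_left₀ hy0 (by linarith) 2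
      have := mul_le_mul_of_nonneg_left j3 hr0
      linarith
    have i2 : c.2.2 * (γ * n / 2) ≤ (c.2.2 : ℝ) * (c.1 + c.2.1) :=
      mul_le_mul_of_nonneg_left (by linarith) hu
    linarith
  have e4 : ((c.2.2 : ℝ) + r * (16 / γ * n)) * (1 - γ / 8 / n) =
      c.2.2 + r * (16 / γ * n) - c.2.2 * (γ / 2 / n) + c.2.2 * (3 * γ / 8 / n) - 2 * r := by
    field_simp; ring
  rw [e4]
  have : 0 ≤ (c.2.2:ℝ) * (3 * γ / 8 / n) := by positivity
  nlinarith

lemma usd_one_add_pow (a : ℝ) (ha : -1 ≤ a) (k : ℕ) : (1 + a) ^ k ≤ Real.exp (a * k) := by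
  rw [mul_comm, Real.exp_nat_mul]
  exact pow_le_pow_left₀ (by linarith) (by linarith [Real.add_one_le_exp a]) k

lemma usd_log_facts (n : ℕ) (hn : 2 ≤ n) :
    1 / 2 ≤ Real.log n ∧ Real.log n ≤ n ∧ Real.log n ^ 2 ≤ 2 * n ∧ Real.log n ^ 3 ≤ 6 * n ∧
      Real.exp (Real.log n) = n ∧ 1 ≤ n * Real.log n := by
  have hn2 : (2:ℝ) ≤ n := by exact_mod_cast hn
  have h1 : Real.log 2 ≤ Real.log n := Real.log_le_log (by norm_num) hn2
  have h2 := Real.log_two_gt_d9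
  have he : Real.exp (Real.log n) = n := Real.exp_log (by linarith)
  have hL : 0 ≤ Real.log n := by linarith
  have p1 := Real.pow_div_factorial_le_exp (Real.log n) hL 2
  have p2 := Real.pow_div_factorial_le_exp (Real.log n) hL 3
  have p3 := Real.add_one_le_exp (Real.log n)
  rw [he] at p1 p2 p3
  norm_num [Nat.factorial] at p1 p2
  refine ⟨by linarith, by linarith, by linarith, by linarith, he, by nlinarith⟩

set_option maxHeartbeats 2000000 in
lemma usd_phase2 (p γ : ℝ) (hp : 0 ≤ p) (hp1 : p ≤ 1) (hγ : 0 < γ) (hγ1 : γ ≤ 1) :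
    ∃ C : ℝ, 0 < C ∧ ∀ n : ℕ, 2 ≤ n → 16 / γ ^ 2 ≤ n → ∀ c : ℕ × ℕ × ℕ,
      c.1 + c.2.1 + c.2.2 = n → γ * n ≤ usdD p c →
      usdF n p ⌈16 / γ * (n * Real.log n)⌉₊ c ≤ C / n := by
  refine ⟨Real.exp (4 / γ ^ 2 * (16 / γ + 1) * 6) + (1 + 16 / γ), by positivity, ?_⟩
  intro n hn hn0 c hc hD
  obtain ⟨L1, L2, L3, L4, L5, L6⟩ := usd_log_facts n hn
  set L := Real.log n with hL
  have hn' : 0 < n := by omega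
  have hnn : (0:ℝ) < n := by exact_mod_cast hn'
  have hn1 : (1:ℝ) ≤ n := by exact_mod_cast hn'
  set T := ⌈16 / γ * (n * L)⌉₊ with hT
  have hT1 : 16 / γ * (n * L) ≤ T := Nat.le_ceil _
  have hT2 : (T : ℝ) ≤ (16 / γ + 1) * (n * L) := by
    have := (Nat.ceil_lt_add_one (by positivity : 0 ≤ 16 / γ * (n * L))).le
    linarith
  set θ := 2 / γ * L / n with hθ
  have hθ0 : 0 ≤ θ := by positivity
  have hθ1 : θ ≤ 1 := by
    rw [hθ, div_le_one hnn]
    apply (pow_le_pow_iff_left₀ (by positivity) hnn.le two_ne_zero).1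
    have : (2 / γ * L) ^ 2 = 4 / γ ^ 2 * L ^ 2 := by ring
    rw [this]
    calc 4 / γ ^ 2 * L ^ 2 ≤ 4 / γ ^ 2 * (2 * n) := by gcongr
      _ = 16 / γ ^ 2 / 2 * n := by ring
      _ ≤ n * n := by
        have : 0 ≤ 16 / γ ^ 2 := by positivity
        gcongr; linarith
      _ = (n:ℝ) ^ 2 := by ring
  have hβ : 0 ≤ 1 - γ / 8 / n := by
    have : γ / 8 / n ≤ 1 := by rw [div_le_one hnn]; linarith
    linarith
  have hV : ∀ c, 0 ≤ usdV n γ c := by intro c; unfold usdV; positivity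
  let G : ℕ → ℕ × ℕ × ℕ → ℝ := fun s c =>
    Real.exp (-(θ * usdD p c) + θ * (γ * n / 2)) * (1 + θ ^ 2) ^ s
      + usdV n γ c * (1 - γ / 8 / n) ^ s
  have hreg : ∀ s c, G s c < 1 → γ * n / 2 ≤ usdD p c := by
    intro s c h
    by_contra hlt
    push Not at hlt
    have h1 : 1 ≤ Real.exp (-(θ * usdD p c) + θ * (γ * n / 2)) := by
      apply Real.one_le_exp; nlinarith
    have h2 : 1 ≤ (1 + θ ^ 2) ^ s := one_le_pow₀ (by nlinarith [sq_nonneg θ])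
    have h3 : 0 ≤ usdV n γ c * (1 - γ / 8 / n) ^ s := mul_nonneg (hV c) (pow_nonneg hβ s)
    have : G s c = Real.exp (-(θ * usdD p c) + θ * (γ * n / 2)) * (1 + θ ^ 2) ^ s
      + usdV n γ c * (1 - γ / 8 / n) ^ s := rfl
    nlinarith
  have hmain := usd_phase n hn' p hp hp1 ∅ 0 le_rfl 0 T G (by intro c _ h; exact absurd h (by simp))
    ?_ ?_ ?_ T le_rfl c hc
  · rw [zero_add, add_zero] at hmain
    refine hmain.trans ?_
    have hg1 : Real.exp (-(θ * usdD p c) + θ * (γ * n / 2)) ≤ 1 / n := by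
      have : 1 / (n:ℝ) = Real.exp (-L) := by rw [Real.exp_neg, L5]; ring
      rw [this]
      apply Real.exp_le_exp.2
      have e : θ * (γ * n / 2) = L := by rw [hθ]; field_simp
      have := mul_le_mul_of_nonneg_left hD hθ0
      have e2 : θ * (γ * n) = 2 * (θ * (γ * n / 2)) := by ring
      linarith
    have hg2 : (1 + θ ^ 2) ^ T ≤ Real.exp (4 / γ ^ 2 * (16 / γ + 1) * 6) := by
      refine (usd_one_add_pow _ (by nlinarith [sq_nonneg θ]) T).trans (Real.exp_le_exp.2 ?_)
      calc θ ^ 2 * T ≤ θ ^ 2 * ((16 / γ + 1) * (n * L)) := by gcongr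
        _ = 4 / γ ^ 2 * (16 / γ + 1) * (L ^ 3 / n) := by rw [hθ]; field_simp; ring
        _ ≤ 4 / γ ^ 2 * (16 / γ + 1) * 6 := by
          gcongr; rw [div_le_iff₀ hnn]; exact L4
    have hg3 : usdV n γ c ≤ (1 + 16 / γ) * n := by
      have hsum : (c.1 : ℝ) + c.2.1 + c.2.2 = n := by rw [← hc]; push_cast; ring
      have hx : (0:ℝ) ≤ c.1 := by positivity
      have hy0 : (0:ℝ) ≤ c.2.1 := by positivity
      have hxy : (c.1 : ℝ) ≤ c.2.1 := by
        unfold usdD at hD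
        nlinarith [mul_nonneg hp hy0, mul_pos hγ hnn]
      have : (c.1 : ℝ) / c.2.1 ≤ 1 := div_le_one_of_le₀ hxy hy0
      unfold usdV
      have := mul_le_mul_of_nonneg_right this (by positivity : 0 ≤ 16 / γ * (n:ℝ))
      linarith
    have hg4 : (1 - γ / 8 / n) ^ T ≤ 1 / (n:ℝ) ^ 2 := by
      have := usd_one_add_pow (-(γ / 8 / n)) (by linarith) T
      rw [← sub_eq_add_neg] at this
      refine this.trans ?_
      have e : 1 / (n:ℝ) ^ 2 = Real.exp (-(2 * L)) := by
        rw [Real.exp_neg, two_mul, Real.exp_add, L5]; field_simp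
      rw [e]
      apply Real.exp_le_exp.2
      have e2 := mul_le_mul_of_nonneg_left hT1 (by positivity : 0 ≤ γ / 8 / n)
      have e3 : γ / 8 / n * (16 / γ * (n * L)) = 2 * L := by field_simp; norm_num
      linarith
    have hp1 : Real.exp (-(θ * usdD p c) + θ * (γ * n / 2)) * (1 + θ ^ 2) ^ T ≤
        1 / n * Real.exp (4 / γ ^ 2 * (16 / γ + 1) * 6) :=
      mul_le_mul hg1 hg2 (by positivity) (by positivity)
    have hp2 : usdV n γ c * (1 - γ / 8 / n) ^ T ≤ (1 + 16 / γ) * n * (1 / (n:ℝ) ^ 2) :=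
      mul_le_mul hg3 hg4 (pow_nonneg hβ T) (by positivity)
    have e5 : (1 + 16 / γ) * n * (1 / (n:ℝ) ^ 2) = (1 + 16 / γ) / n := by field_simp
    rw [e5] at hp2
    calc G T c ≤ 1 / n * Real.exp (4 / γ ^ 2 * (16 / γ + 1) * 6) + (1 + 16 / γ) / n :=
          add_le_add hp1 hp2
      _ = _ := by ring
  · intro c hc
    rw [add_zero]
    by_cases hgood : c.2.1 = n
    · have e0 : usdF n p 0 c = 0 := by simp [usdF, usdBad, hgood]
      rw [e0]
      exact add_nonneg (by positivity) (mul_nonneg (hV c) (pow_nonneg hβ 0))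
    by_cases h : G 0 c < 1
    · exfalso
      have hD2 := hreg 0 c h
      have hgv : usdV n γ c < 1 := by
        have : G 0 c = Real.exp (-(θ * usdD p c) + θ * (γ * n / 2)) + usdV n γ c := by
          simp [G]
        have := Real.exp_pos (-(θ * usdD p c) + θ * (γ * n / 2))
        linarith
      have hsum : (c.1 : ℝ) + c.2.1 + c.2.2 = n := by rw [← hc]; push_cast; ring
      have hx : (0:ℝ) ≤ c.1 := by positivity
      have hu : (0:ℝ) ≤ c.2.2 := by positivity
      have hy0 : (0:ℝ) ≤ c.2.1 := by positivity
      have hypos : (0:ℝ) < c.2.1 := by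
        unfold usdD at hD2
        nlinarith [mul_nonneg hp hy0, mul_pos hγ hnn]
      unfold usdV at hgv
      have hr : 0 ≤ (c.1 : ℝ) / c.2.1 * (16 / γ * n) := by positivity
      rcases Nat.eq_zero_or_pos c.2.2 with h0 | h0
      · have hx1 : 1 ≤ c.1 := by omega
        have hx1' : (1:ℝ) ≤ c.1 := by exact_mod_cast hx1
        have h16 : 1 ≤ 16 / γ := by rw [le_div_iff₀ hγ]; linarith
        have i1 : (1:ℝ) / n ≤ (c.1 : ℝ) / c.2.1 := by
          rw [div_le_div_iff₀ hnn hypos]; nlinarith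
        have i2 : (n:ℝ) ≤ 16 / γ * n := by nlinarith
        have i3 := mul_le_mul i1 i2 hnn.le (by positivity)
        have i4 : 1 / (n:ℝ) * n = 1 := by field_simp
        linarith
      · have : (1:ℝ) ≤ c.2.2 := by exact_mod_cast h0
        linarith
    · push Not at h
      exact (usdF_le_one n hn' p hp hp1 0 c hc).trans h
  · intro s c
    exact add_nonneg (by positivity) (mul_nonneg (hV c) (pow_nonneg hβ s))
  · intro s _ c hc _ hG
    have hD2 := hreg _ c hG
    have hDnn : 0 ≤ usdD p c := le_trans (by positivity) hD2
    have a1 := usdP_expD n hn' p hp hp1 θ (θ * (γ * n / 2)) hθ0 hθ1 c hc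
    have a2 := usdP_V n hn' p γ hp hp1 hγ hγ1 hn0 c hc hD2
    have e : usdP n p (G s) c =
       usdP n p (fun c => Real.exp (-(θ * usdD p c) + θ * (γ * n / 2))) c * (1 + θ ^ 2) ^ s
       + usdP n p (usdV n γ) c * (1 - γ / 8 / n) ^ s := by
      rw [← usdP_smul, ← usdP_smul, ← usdP_add]
    rw [e]
    have a3 : 0 ≤ θ * (c.2.2 * usdD p c / (n:ℝ)^2) := by positivity
    have a4 : usdP n p (fun c => Real.exp (-(θ * usdD p c) + θ * (γ * n / 2))) c ≤
        Real.exp (-(θ * usdD p c) + θ * (γ * n / 2)) * (1 + θ ^ 2) :=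
      a1.trans (mul_le_mul_of_nonneg_left (by linarith) (Real.exp_pos _).le)
    have a5 := mul_le_mul_of_nonneg_right a4 (by positivity : 0 ≤ (1 + θ ^ 2) ^ s)
    have a6 := mul_le_mul_of_nonneg_right a2 (pow_nonneg hβ s)
    calc _ ≤ _ := add_le_add a5 a6
      _ = G (s + 1) c := by simp only [G, pow_succ]; ring

lemma usdP_U (n : ℕ) (hn : 0 < n) (θ : ℝ) (hθ : 0 < θ) (hθ1 : 32 * θ ≤ 1) (c : ℕ × ℕ × ℕ)
    (hc : c.1 + c.2.1 + c.2.2 = n) (hD : 0 ≤ usdD (1 - 32 * θ) c)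
    (hD2 : usdD (1 - 32 * θ) c ≤ 4 * θ * n) :
    usdP n (1 - 32 * θ) (fun c => Real.exp (-(θ * c.2.2) + θ ^ 2 / 2 * n)) c ≤
      Real.exp (-(θ * c.2.2) + θ ^ 2 / 2 * n) * (1 - θ ^ 2) + 3 * Real.exp (-(θ ^ 2 / 2 * n)) := by
  have hnn : (0:ℝ) < n := by exact_mod_cast hn
  have h := usdP_expU n hn (1 - 32 * θ) (by linarith) (by linarith) θ (θ ^ 2 / 2 * n) hθ.le
    (by linarith) c hc
  refine h.trans ?_
  have hsum : (c.1 : ℝ) + c.2.1 + c.2.2 = n := by rw [← hc]; push_cast; ring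
  have hx : (0:ℝ) ≤ c.1 := by positivity
  have hy : (0:ℝ) ≤ c.2.1 := by positivity
  have hu : (0:ℝ) ≤ c.2.2 := by positivity
  unfold usdD at hD hD2
  generalize (c.1:ℝ) = x at *
  generalize (c.2.1:ℝ) = y at *
  generalize (c.2.2:ℝ) = u at *
  have hxy := mul_nonneg hx hy
  have hE := Real.exp_pos (-(θ * u) + θ ^ 2 / 2 * n)
  have hF := Real.exp_pos (-(θ ^ 2 / 2 * n))
  have hcoef : x * y ≤ (2 - (1 - 32 * θ)) * x * y := by nlinarith
  by_cases hcase : u ≤ θ * n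
  · have hun : u ≤ n / 32 := by nlinarith
    have hxley : x ≤ y := by nlinarith
    have hy1 : 3 * n / 8 ≤ y := by linarith
    have hx1 : 8 * θ * n ≤ x := by nlinarith
    have hprod : 3 * θ * n ^ 2 ≤ x * y := by
      have := mul_le_mul hx1 hy1 (by positivity) hx
      nlinarith
    have huxy : u * (x + y) ≤ θ * n ^ 2 := by
      have := mul_le_mul hcase (by linarith : x + y ≤ n) (by positivity) (by positivity)
      nlinarith
    have hd : 2 * θ ≤ ((2 - (1 - 32 * θ)) * x * y - u * (x + y)) / (n:ℝ)^2 := by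
      rw [le_div_iff₀ (by positivity)]; nlinarith
    have := mul_le_mul_of_nonneg_left hd hθ.le
    have h2 := mul_le_mul_of_nonneg_left (by linarith :
      (1 - θ * (((2 - (1 - 32 * θ)) * x * y - u * (x + y)) / (n:ℝ)^2) + θ ^ 2) ≤ 1 - θ ^ 2) hE.le
    linarith
  · push Not at hcase
    have hEF : Real.exp (-(θ * u) + θ ^ 2 / 2 * n) ≤ Real.exp (-(θ ^ 2 / 2 * n)) := by
      apply Real.exp_le_exp.2
      nlinarith
    have hd : -1 ≤ ((2 - (1 - 32 * θ)) * x * y - u * (x + y)) / (n:ℝ)^2 := by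
      rw [le_div_iff₀ (by positivity)]
      nlinarith [mul_nonneg hu hx, mul_nonneg hu hy]
    have := mul_le_mul_of_nonneg_left hd hθ.le
    have hθ2 : θ ^ 2 ≤ 1 := by nlinarith
    have h2 := mul_le_mul_of_nonneg_left (by linarith :
      (1 - θ * (((2 - (1 - 32 * θ)) * x * y - u * (x + y)) / (n:ℝ)^2) + θ ^ 2) ≤ 3) hE.le
    have h3 : 0 ≤ Real.exp (-(θ * u) + θ ^ 2 / 2 * n) * (1 - θ ^ 2) :=
      mul_nonneg hE.le (by linarith)
    linarith

lemma usd_phase1 (θ : ℝ) (hθ : 0 < θ) (hθ1 : 32 * θ ≤ 1) (n : ℕ) (hn : 2 ≤ n) (T : ℕ) (η l : ℝ)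
    (hl : 0 < l) (hl1 : l ≤ 1) (hη : 0 ≤ η)
    (hS : ∀ c : ℕ × ℕ × ℕ, c.1 + c.2.1 + c.2.2 = n → 4 * θ * n ≤ usdD (1 - 32 * θ) c →
      usdF n (1 - 32 * θ) T c ≤ η) (N : ℕ) (hN : (n : ℝ) ≤ (1 + θ / 2 / n) ^ N)
    (c : ℕ × ℕ × ℕ) (hc : c.1 + c.2.1 + c.2.2 = n) :
    usdF n (1 - 32 * θ) (T + N) c ≤
      Real.exp (-(l * usdD (1 - 32 * θ) c) + (l ^ 2 * n * (2 / θ) + 1)) +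
      (Real.exp (-(θ * c.2.2) + θ ^ 2 / 2 * n) + N * (3 * Real.exp (-(θ ^ 2 / 2 * n)))) + η := by
  have hn' : 0 < n := by omega
  have hnn : (0:ℝ) < n := by exact_mod_cast hn'
  set p := 1 - 32 * θ with hp
  set ρ := 1 + θ / 2 / n with hρ
  have hρ1 : 1 ≤ ρ := by
    have : 0 ≤ θ / 2 / n := by positivity
    linarith
  have hρN : 0 < ρ ^ N := by positivity
  let a : ℕ → ℝ := fun s => l * ρ ^ s / ρ ^ N
  have ha0 : ∀ s, 0 < a s := by intro s; simp only [a]; positivity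
  have haN : a N = l := by simp only [a]; field_simp
  have ha1 : ∀ s, s ≤ N → a s ≤ 1 := by
    intro s hs
    simp only [a]
    rw [div_le_one hρN]
    have := pow_le_pow_right₀ hρ1 hs
    nlinarith [pow_pos (lt_of_lt_of_le one_pos hρ1) s]
  have has : ∀ s, a (s + 1) = a s * ρ := by intro s; simp only [a, pow_succ]; ring
  let k : ℕ → ℝ := fun s => a s ^ 2 * n * (2 / θ) + a 0 * (4 * θ * n)
  have hk0 : ∀ s, 0 ≤ k s := by intro s; have := ha0 s; have := ha0 0; simp only [k]; positivity
  let G : ℕ → ℕ × ℕ × ℕ → ℝ := fun s c =>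
    Real.exp (-(a s * usdD p c) + k s) +
      (Real.exp (-(θ * c.2.2) + θ ^ 2 / 2 * n) + s * (3 * Real.exp (-(θ ^ 2 / 2 * n))))
  have hmain := usd_phase n hn' p (by rw [hp]; linarith) (by rw [hp]; linarith)
    {c | 4 * θ * n ≤ usdD p c} η hη T N G hS ?_ ?_ ?_ N le_rfl c hc
  · refine hmain.trans ?_
    simp only [G]
    have hkN : k N ≤ l ^ 2 * n * (2 / θ) + 1 := by
      simp only [k]
      rw [haN]
      have : a 0 * (4 * θ * n) ≤ 1 := by
        simp only [a, pow_zero, mul_one]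
        rw [div_mul_eq_mul_div, div_le_one hρN]
        have : l * (4 * θ * n) ≤ 1 * (1 * n) := by gcongr; linarith
        linarith
      linarith
    rw [haN]
    have := Real.exp_le_exp.2 (by linarith : -(l * usdD p c) + k N ≤
      -(l * usdD p c) + (l ^ 2 * n * (2 / θ) + 1))
    linarith
  · intro c hc
    have hGpos : 0 ≤ G 0 c := by positivity
    by_cases h : 4 * θ * n ≤ usdD p c
    · linarith [hS c hc h]
    · push Not at h
      have h1 := usdF_le_one n hn' p (by rw [hp]; linarith) (by rw [hp]; linarith) T c hc
      have h2 : 1 ≤ Real.exp (-(a 0 * usdD p c) + k 0) := by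
        apply Real.one_le_exp
        have := mul_le_mul_of_nonneg_left h.le (ha0 0).le
        have h3 : 0 ≤ a 0 ^ 2 * n * (2 / θ) := by positivity
        simp only [k]
        linarith
      have h3 : 0 ≤ (Real.exp (-(θ * c.2.2) + θ ^ 2 / 2 * n) +
        ((0:ℕ):ℝ) * (3 * Real.exp (-(θ ^ 2 / 2 * n)))) := by positivity
      have : G 0 c = Real.exp (-(a 0 * usdD p c) + k 0) + (Real.exp (-(θ * c.2.2) + θ ^ 2 / 2 * n) +
        ((0:ℕ):ℝ) * (3 * Real.exp (-(θ ^ 2 / 2 * n)))) := rfl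
      linarith
  · intro s c; positivity
  · intro s hs c hc hcS hG
    have hcS' : usdD p c < 4 * θ * n := by
      by_contra hcon; push Not at hcon; exact hcS hcon
    have hE1 := Real.exp_pos (-(a (s+1) * usdD p c) + k (s+1))
    have hE2 := Real.exp_pos (-(θ * c.2.2) + θ ^ 2 / 2 * n)
    have hE3 : 0 ≤ ((s+1 : ℕ):ℝ) * (3 * Real.exp (-(θ ^ 2 / 2 * n))) := by positivity
    have hGdef : G (s+1) c = Real.exp (-(a (s+1) * usdD p c) + k (s+1)) +
      (Real.exp (-(θ * c.2.2) + θ ^ 2 / 2 * n) +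
        ((s+1 : ℕ):ℝ) * (3 * Real.exp (-(θ ^ 2 / 2 * n)))) := rfl
    have hD : 0 < usdD p c := by
      have : Real.exp (-(a (s+1) * usdD p c) + k (s+1)) < 1 := by linarith
      rw [Real.exp_lt_one_iff] at this
      have h2 : 0 < a (s+1) * usdD p c := by linarith [hk0 (s+1)]
      exact (pos_iff_pos_of_mul_pos h2).1 (ha0 _)
    have hu : θ / 2 * n < c.2.2 := by
      have : Real.exp (-(θ * c.2.2) + θ ^ 2 / 2 * n) < 1 := by linarith
      rw [Real.exp_lt_one_iff] at this
      by_contra hcon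
      push Not at hcon
      nlinarith
    have b1 := usdP_expD n hn' p (by rw [hp]; linarith) (by rw [hp]; linarith) (a s) (k s)
      (ha0 s).le (ha1 s (by omega)) c hc
    have b2 := usdP_U n hn' θ hθ hθ1 c hc hD.le hcS'.le
    rw [← hp] at b2
    have e : usdP n p (G s) c = usdP n p (fun c => Real.exp (-(a s * usdD p c) + k s)) c +
        (usdP n p (fun c => Real.exp (-(θ * c.2.2) + θ ^ 2 / 2 * n)) c +
          s * (3 * Real.exp (-(θ ^ 2 / 2 * n)))) := by
      simp only [G]
      rw [usdP_add, usdP_add_const]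
    rw [e, hGdef]
    have b3 : Real.exp (-(a s * usdD p c) + k s) *
        (1 - a s * (c.2.2 * usdD p c / (n:ℝ)^2) + a s ^ 2) ≤
        Real.exp (-(a (s+1) * usdD p c) + k (s+1)) := by
      have i1 : (1 - a s * (c.2.2 * usdD p c / (n:ℝ)^2) + a s ^ 2) ≤
          Real.exp (- (a s * (θ / 2 / n * usdD p c)) + a s ^ 2) := by
        have j1 : θ / 2 / n * usdD p c ≤ c.2.2 * usdD p c / (n:ℝ)^2 := by
          rw [le_div_iff₀ (by positivity)]
          have : θ / 2 / n * usdD p c * (n:ℝ)^2 = θ / 2 * n * usdD p c := by field_simp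
          rw [this]
          exact mul_le_mul_of_nonneg_right hu.le hD.le
        have j2 := mul_le_mul_of_nonneg_left j1 (ha0 s).le
        have j3 := Real.add_one_le_exp (- (a s * (θ / 2 / n * usdD p c)) + a s ^ 2)
        linarith
      refine (mul_le_mul_of_nonneg_left i1 (Real.exp_pos _).le).trans ?_
      rw [← Real.exp_add]
      apply Real.exp_le_exp.2
      have i2 : k s + a s ^ 2 ≤ k (s+1) := by
        simp only [k]
        rw [has]
        have j1 : (a s * ρ) ^ 2 * n * (2 / θ) = a s ^ 2 * (ρ ^ 2 * n * (2 / θ)) := by ring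
        have j2 : n * (2 / θ) + 1 ≤ ρ ^ 2 * n * (2 / θ) := by
          have : ρ ^ 2 * n * (2 / θ) = n * (2 / θ) + 2 + θ / 2 / n := by
            rw [hρ]; field_simp; ring
          rw [this]
          have : 0 ≤ θ / 2 / n := by positivity
          linarith
        have j3 := mul_le_mul_of_nonneg_left j2 (sq_nonneg (a s))
        linarith
      have i3 : a (s+1) * usdD p c = a s * usdD p c + a s * (θ / 2 / n * usdD p c) := by
        rw [has, hρ]; ring
      linarith
    have b4 : Real.exp (-(θ * c.2.2) + θ ^ 2 / 2 * n) * (1 - θ ^ 2) ≤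
        Real.exp (-(θ * c.2.2) + θ ^ 2 / 2 * n) := by nlinarith [sq_nonneg θ]
    push_cast
    linarith

lemma usd_phase0 (θ : ℝ) (hθ : 0 < θ) (hθ1 : 32 * θ ≤ 1) (n : ℕ) (hn : 2 ≤ n) (T : ℕ) (η l : ℝ)
    (hl : 0 < l) (hl1 : l ≤ 1) (hη : 0 ≤ η)
    (hS : ∀ c : ℕ × ℕ × ℕ, c.1 + c.2.1 + c.2.2 = n → 4 * θ * n ≤ usdD (1 - 32 * θ) c →
      usdF n (1 - 32 * θ) T c ≤ η) (N : ℕ) (hN : (n : ℝ) ≤ (1 + θ / 2 / n) ^ N) (J : ℕ)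
    (c : ℕ × ℕ × ℕ) (hc : c.1 + c.2.1 + c.2.2 = n) :
    usdF n (1 - 32 * θ) (T + N + J) c ≤
      Real.exp (-(l * usdD (1 - 32 * θ) c) + (l ^ 2 * n * (2 / θ) + 1 + J * l ^ 2)) +
      (Real.exp (-(θ * c.2.2) + θ ^ 2 / 2 * n) * (1 - θ ^ 2) ^ J
        + (N + J) * (3 * Real.exp (-(θ ^ 2 / 2 * n)))) + η := by
  have hn' : 0 < n := by omega
  have hnn : (0:ℝ) < n := by exact_mod_cast hn'
  have hph := usd_phase1 θ hθ hθ1 n hn T η l hl hl1 hη hS N hN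
  set p := 1 - 32 * θ with hp
  have hθ2 : 0 ≤ 1 - θ ^ 2 := by nlinarith
  have hθ3 : 1 - θ ^ 2 ≤ 1 := by nlinarith [sq_nonneg θ]
  let k : ℕ → ℝ := fun s => l ^ 2 * n * (2 / θ) + 1 + s * l ^ 2
  have hk0 : ∀ s, 0 ≤ k s := by intro s; simp only [k]; positivity
  let G : ℕ → ℕ × ℕ × ℕ → ℝ := fun s c =>
    Real.exp (-(l * usdD p c) + k s) +
      (Real.exp (-(θ * c.2.2) + θ ^ 2 / 2 * n) * (1 - θ ^ 2) ^ s
        + (N + s) * (3 * Real.exp (-(θ ^ 2 / 2 * n))))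
  refine usd_phase n hn' p (by rw [hp]; linarith) (by rw [hp]; linarith)
    {c | 4 * θ * n ≤ usdD p c} η hη (T + N) J G ?_ ?_ ?_ ?_ J le_rfl c hc
  · intro c hc hcS
    exact (usdF_anti n hn' p (by rw [hp]; linarith) (by rw [hp]; linarith) c hc T N).trans
      (hS c hc hcS)
  · intro c hc
    have := hph c hc
    simp only [G, k]
    simpa using this
  · intro s c; have := pow_nonneg hθ2 s; positivity
  · intro s hs c hc hcS hG
    have hcS' : usdD p c < 4 * θ * n := by
      by_contra hcon; push Not at hcon; exact hcS hcon
    have hpw := pow_nonneg hθ2 s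
    have hpw1 := pow_nonneg hθ2 (s+1)
    have hpw2 : (1 - θ ^ 2) ^ s ≤ 1 := pow_le_one₀ hθ2 hθ3
    have hE2 : 0 ≤ Real.exp (-(θ * c.2.2) + θ ^ 2 / 2 * n) * (1 - θ ^ 2) ^ (s+1) := by positivity
    have hE3 : 0 ≤ (N + ((s+1 : ℕ):ℝ)) * (3 * Real.exp (-(θ ^ 2 / 2 * n))) := by positivity
    have hGdef : G (s+1) c = Real.exp (-(l * usdD p c) + k (s+1)) +
      (Real.exp (-(θ * c.2.2) + θ ^ 2 / 2 * n) * (1 - θ ^ 2) ^ (s+1) +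
        (N + ((s+1 : ℕ):ℝ)) * (3 * Real.exp (-(θ ^ 2 / 2 * n)))) := rfl
    have hD : 0 < usdD p c := by
      have : Real.exp (-(l * usdD p c) + k (s+1)) < 1 := by linarith
      rw [Real.exp_lt_one_iff] at this
      have h2 : 0 < l * usdD p c := by linarith [hk0 (s+1)]
      exact (pos_iff_pos_of_mul_pos h2).1 hl
    have b1 := usdP_expD n hn' p (by rw [hp]; linarith) (by rw [hp]; linarith) l (k s)
      hl.le hl1 c hc
    have b2 := usdP_U n hn' θ hθ hθ1 c hc hD.le hcS'.le
    rw [← hp] at b2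
    have e : usdP n p (G s) c = usdP n p (fun c => Real.exp (-(l * usdD p c) + k s)) c +
        (usdP n p (fun c => Real.exp (-(θ * c.2.2) + θ ^ 2 / 2 * n)) c * (1 - θ ^ 2) ^ s +
          (N + s) * (3 * Real.exp (-(θ ^ 2 / 2 * n)))) := by
      simp only [G]
      rw [usdP_add, usdP_add_const, usdP_smul]
    rw [e, hGdef]
    have b3 : Real.exp (-(l * usdD p c) + k s) *
        (1 - l * (c.2.2 * usdD p c / (n:ℝ)^2) + l ^ 2) ≤
        Real.exp (-(l * usdD p c) + k (s+1)) := by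
      have i1 : (1 - l * (c.2.2 * usdD p c / (n:ℝ)^2) + l ^ 2) ≤ Real.exp (l ^ 2) := by
        have j1 : 0 ≤ l * (c.2.2 * usdD p c / (n:ℝ)^2) := by positivity
        have j3 := Real.add_one_le_exp (l ^ 2)
        linarith
      refine (mul_le_mul_of_nonneg_left i1 (Real.exp_pos _).le).trans ?_
      rw [← Real.exp_add]
      apply Real.exp_le_exp.2
      simp only [k]
      push_cast
      linarith
    have b4 := mul_le_mul_of_nonneg_right b2 hpw
    have b5 : 3 * Real.exp (-(θ ^ 2 / 2 * n)) * (1 - θ ^ 2) ^ s ≤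
        3 * Real.exp (-(θ ^ 2 / 2 * n)) := mul_le_of_le_one_right (by positivity) hpw2
    rw [add_mul, mul_assoc, mul_comm (1 - θ ^ 2), ← pow_succ] at b4
    push_cast
    linarith

set_option maxHeartbeats 4000000 in
/-- For constants `ε, p ∈ (0,1]`, there are constants `c, C > 0`
(depending only on `ε` and `p`) such that for any configuration `x0 = (x₁, x₂, u)` with
`x₁ ∈ [ε·n, x₂]`, `u ≤ n/2` and `p_s - p ≥ c·√(log n / n)` where `p_s = 1 - x₁/x₂`,
the chain `USD_p` started from `x0` reaches `X₂ = n` within `C·n·log n` steps with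
probability at least `1 - C·n⁻¹`. -/
theorem stmt_1 (ε p : ℝ) (hε : ε ∈ Set.Ioc (0 : ℝ) 1) (hp : p ∈ Set.Ioc (0 : ℝ) 1) :
    ∃ c C : ℝ, 0 < c ∧ 0 < C ∧
      ∀ (n : ℕ), 2 ≤ n →
      ∀ x0 : ℕ × ℕ × ℕ, x0.1 + x0.2.1 + x0.2.2 = n →
        ε * (n : ℝ) ≤ (x0.1 : ℝ) → x0.1 ≤ x0.2.1 → (x0.2.2 : ℝ) ≤ (n : ℝ) / 2 →
        c * Real.sqrt (Real.log n / n) ≤ (1 - (x0.1 : ℝ) / (x0.2.1 : ℝ)) - p →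
        ∀ μ : Measure (ℕ → ℕ × ℕ × ℕ), IsUSD n p x0 μ →
          1 - C * (n : ℝ)⁻¹ ≤
            (μ {ω | ∃ t : ℕ, (t : ℝ) ≤ C * n * Real.log n ∧ (ω t).2.1 = n}).toReal := by
  obtain ⟨hp0, hp1⟩ := hp
  obtain ⟨hε0, _⟩ := hε
  rcases eq_or_lt_of_le hp1 with hpe | hplt
  · refine ⟨1, 1, one_pos, one_pos, ?_⟩
    intro n hn x0 _ hx _ _ hgap
    exfalso
    have hnn : (0:ℝ) < n := by exact_mod_cast (by omega : 0 < n)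
    have h1 := Real.sqrt_nonneg (Real.log n / n)
    have h2 : (0:ℝ) < x0.1 := lt_of_lt_of_le (by positivity) hx
    have h3 : x0.1 ≤ x0.2.1 := by assumption
    have h4 : (x0.1 : ℝ) ≤ x0.2.1 := by exact_mod_cast h3
    have h5 : 0 < (x0.1 : ℝ) / x0.2.1 := div_pos h2 (by linarith)
    linarith
  obtain ⟨θ, hθp⟩ : ∃ θ, p = 1 - 32 * θ := ⟨(1 - p) / 32, by ring⟩
  have hθ : 0 < θ := by linarith
  have hθ1 : 32 * θ ≤ 1 := by linarith
  obtain ⟨C2, hC2, hph2⟩ := usd_phase2 p (4 * θ) hp0.le hp1 (by linarith) (by linarith)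
  obtain ⟨c, hcdef⟩ : ∃ c, c = 4 * (2 / θ + 2) := ⟨_, rfl⟩
  obtain ⟨C1, hC1⟩ : ∃ C1, C1 = Real.exp 1 + (1 + 3 * (4 / θ + 2)) * (48 / θ ^ 6) + C2 := ⟨_, rfl⟩
  have hC1p : 0 < C1 := by rw [hC1]; positivity
  obtain ⟨CT, hCT⟩ : ∃ CT, CT = (16 / (4 * θ) + 1) + (4 / θ + 1) + 2 := ⟨_, rfl⟩
  have hCTp : 0 < CT := by rw [hCT]; positivity
  refine ⟨c, C1 + CT + 16 / (4 * θ) ^ 2, by rw [hcdef]; positivity, by positivity, ?_⟩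
  intro n hn x0 hx0 hx hxy hu hgap μ hμ
  have hn' : 0 < n := by omega
  have hnn : (0:ℝ) < n := by exact_mod_cast hn'
  have hn1 : (1:ℝ) ≤ n := by exact_mod_cast hn'
  have h16 : 0 < 16 / (4 * θ) ^ 2 := by positivity
  by_cases hn0 : 16 / (4 * θ) ^ 2 ≤ n
  swap
  · push Not at hn0
    have : 1 ≤ (C1 + CT + 16 / (4 * θ) ^ 2) * (n:ℝ)⁻¹ := by
      rw [← div_eq_mul_inv, le_div_iff₀ hnn]; linarith
    linarith [ENNReal.toReal_nonneg (a := μ {ω | ∃ t : ℕ,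
      (t : ℝ) ≤ (C1 + CT + 16 / (4 * θ) ^ 2) * n * Real.log n ∧ (ω t).2.1 = n})]
  obtain ⟨L1, L2, L3, L4, L5, L6⟩ := usd_log_facts n hn
  set L := Real.log n with hL
  have hLp : 0 < L := by linarith
  set l := Real.sqrt (L / n) with hl
  have hl0 : 0 < l := Real.sqrt_pos.2 (by positivity)
  have hlsq : l ^ 2 = L / n := Real.sq_sqrt (by positivity)
  have hl1 : l ≤ 1 := by
    rw [hl, Real.sqrt_le_iff, one_pow, div_le_one hnn]; exact ⟨zero_le_one, L2⟩
  set T := ⌈16 / (4 * θ) * (n * L)⌉₊ with hT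
  have hT2 : (T : ℝ) ≤ (16 / (4 * θ) + 1) * (n * L) := by
    have := (Nat.ceil_lt_add_one (by positivity : 0 ≤ 16 / (4 * θ) * (n * L))).le
    linarith
  set N := ⌈4 / θ * (n * L)⌉₊ with hN
  have hN1 : 4 / θ * (n * L) ≤ N := Nat.le_ceil _
  have hN2 : (N : ℝ) ≤ (4 / θ + 1) * (n * L) := by
    have := (Nat.ceil_lt_add_one (by positivity : 0 ≤ 4 / θ * (n * L))).le
    linarith
  have hNpow : (n : ℝ) ≤ (1 + θ / 2 / n) ^ N := by
    have hz0 : 0 ≤ θ / 4 / n := by positivity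
    have hz1 : θ / 4 / n ≤ 1 := by rw [div_le_one hnn]; linarith
    have h1 : Real.exp (θ / 4 / n) ≤ 1 + θ / 2 / n := by
      have h2 := (abs_le.1 (Real.abs_exp_sub_one_sub_id_le
        (x := θ / 4 / n) (by rw [abs_of_nonneg hz0]; exact hz1))).2
      have e : θ / 2 / n = 2 * (θ / 4 / n) := by ring
      rw [e]
      nlinarith
    refine le_trans ?_ (pow_le_pow_left₀ (Real.exp_pos _).le h1 N)
    rw [← Real.exp_nat_mul]
    calc (n:ℝ) = Real.exp L := L5.symm
      _ ≤ _ := by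
        apply Real.exp_le_exp.2
        have := mul_le_mul_of_nonneg_right hN1 hz0
        have e : 4 / θ * (n * L) * (θ / 4 / n) = L := by field_simp
        linarith
  have hx0' : (x0.1 : ℝ) + x0.2.1 + x0.2.2 = n := by rw [← hx0]; push_cast; ring
  have hxy' : (x0.1 : ℝ) ≤ x0.2.1 := by exact_mod_cast hxy
  have hy4 : (n:ℝ) / 4 ≤ x0.2.1 := by linarith
  have hyp : (0:ℝ) < x0.2.1 := by linarith
  have hD : (2 / θ + 2) * L ≤ l * usdD p x0 := by
    have e : usdD p x0 = x0.2.1 * ((1 - (x0.1 : ℝ) / x0.2.1) - p) := by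
      unfold usdD; field_simp; ring
    rw [e]
    have hc0 : 0 ≤ c * l := by rw [hcdef]; positivity
    have i1 := mul_le_mul hy4 hgap hc0 hyp.le
    have i2 := mul_le_mul_of_nonneg_left i1 hl0.le
    have e2 : l * ((n:ℝ) / 4 * (c * l)) = (2 / θ + 2) * (l ^ 2 * n) := by rw [hcdef]; ring
    rw [e2, hlsq] at i2
    have e3 : L / n * n = L := by field_simp
    rwa [e3] at i2
  have hF := usd_phase0 θ hθ hθ1 n hn T (C2 / n) l hl0 hl1 (by positivity)
    (by rw [← hθp]; exact hph2 n hn hn0) N hNpow n x0 hx0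
  rw [← hθp] at hF
  have hb1 : Real.exp (-(l * usdD p x0) + (l ^ 2 * n * (2 / θ) + 1 + n * l ^ 2)) ≤
      Real.exp 1 / n := by
    have e : Real.exp 1 / n = Real.exp (1 - L) := by rw [Real.exp_sub, L5]
    rw [e]
    apply Real.exp_le_exp.2
    have e3 : l ^ 2 * n = L := by rw [hlsq]; field_simp
    rw [mul_comm (n:ℝ) (l ^ 2), e3]
    linarith
  have hb2 : Real.exp (-(θ * x0.2.2) + θ ^ 2 / 2 * n) * (1 - θ ^ 2) ^ n ≤
      Real.exp (-(θ ^ 2 / 2 * n)) := by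
    have i1 := usd_one_add_pow (-θ ^ 2) (by nlinarith) n
    have i2 : Real.exp (-(θ * x0.2.2) + θ ^ 2 / 2 * n) ≤ Real.exp (θ ^ 2 / 2 * n) := by
      apply Real.exp_le_exp.2
      have : 0 ≤ θ * (x0.2.2 : ℝ) := by positivity
      linarith
    have i0 : 1 + -θ ^ 2 = 1 - θ ^ 2 := by ring
    rw [i0] at i1
    have i3 := mul_le_mul i2 i1 (pow_nonneg (by nlinarith) n) (Real.exp_pos _).le
    rw [← Real.exp_add] at i3
    refine i3.trans (le_of_eq ?_)
    congr 1
    ring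
  have hb3 : (n:ℝ) ^ 2 * Real.exp (-(θ ^ 2 / 2 * n)) ≤ 48 / θ ^ 6 / n := by
    have i1 := Real.pow_div_factorial_le_exp (θ ^ 2 / 2 * n) (by positivity) 3
    norm_num [Nat.factorial] at i1
    rw [Real.exp_neg, ← div_eq_mul_inv, div_le_iff₀ (Real.exp_pos _)]
    have i2 := mul_le_mul_of_nonneg_left i1 (by positivity : 0 ≤ 48 / θ ^ 6 / n)
    have e : 48 / θ ^ 6 / n * ((θ ^ 2 / 2 * n) ^ 3 / 6) = (n:ℝ) ^ 2 := by
      field_simp; norm_num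
    linarith
  have hb4 : (1 + 3 * ((N:ℝ) + n)) ≤ (1 + 3 * (4 / θ + 2)) * (n:ℝ) ^ 2 := by
    have i1 : (n:ℝ) * L ≤ (n:ℝ) ^ 2 := by nlinarith
    have i2 : (n:ℝ) ≤ (n:ℝ) ^ 2 := by nlinarith
    have i3 := mul_le_mul_of_nonneg_left i1 (by positivity : 0 ≤ 4 / θ + 1)
    nlinarith
  have hFF : usdF n p (T + N + n) x0 ≤ C1 / n := by
    have j1 := mul_le_mul_of_nonneg_right hb4 (Real.exp_pos (-(θ ^ 2 / 2 * n))).le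
    have j2 := mul_le_mul_of_nonneg_left hb3 (by positivity : 0 ≤ 1 + 3 * (4 / θ + 2))
    have e : C1 / n = Real.exp 1 / n + (1 + 3 * (4 / θ + 2)) * (48 / θ ^ 6 / n) + C2 / n := by
      rw [hC1]; ring
    rw [e]
    linarith
  have hprob := usd_prob n p x0 μ hμ (T + N + n)
  have hprobm := hμ.1
  have hmono : μ.real {ω | (ω (T + N + n)).2.1 = n} ≤ μ.real {ω | ∃ t : ℕ,
      (t : ℝ) ≤ (C1 + CT + 16 / (4 * θ) ^ 2) * n * L ∧ (ω t).2.1 = n} := by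
    refine measureReal_mono ?_ (measure_ne_top _ _)
    intro ω hω
    refine ⟨T + N + n, ?_, hω⟩
    push_cast
    have hnL : (n:ℝ) ≤ 2 * (n * L) := by nlinarith
    have i1 : (T:ℝ) + N + n ≤ CT * (n * L) := by rw [hCT]; linarith
    have i2 : 0 ≤ (C1 + 16 / (4 * θ) ^ 2) * (n * L) := by positivity
    linarith
  have hlast : C1 / n ≤ (C1 + CT + 16 / (4 * θ) ^ 2) * (n:ℝ)⁻¹ := by
    rw [← div_eq_mul_inv]
    gcongr
    linarith
  refine le_trans ?_ hmono
  linarith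
end

section
/- Let p ∈ [0,1], let ξ ≥ 1 be a constant, and define Φ_up(t) = U(t) − X₁(t) − X₂(t). Let the chain USD_p be started from a configuration with Φ_up(0) < 2ξ·√(n·log n). Then for every constant α > 0, with probability at least 1 − α·n^{-3}·log² n it holds that Φ_up(t) ≤ 6ξ·√(n·log n) for all t ≤ α·n·log² n. -/
open MeasureTheory

abbrev Cfg := ℕ × ℕ × ℕ

lemma usd_pair {n : ℕ} {p : ℝ} {x0 : Cfg} {μ : Measure (ℕ → Cfg)} (hμ : IsUSD n p x0 μ)
    (t : ℕ) (c d : Cfg) (hs : 0 ≤ usdStep n p c d) :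
    μ {ω | ω t = c ∧ ω (t+1) = d} = μ {ω | ω t = c} * ENNReal.ofReal (usdStep n p c d) := by
  obtain ⟨hprob, hcyl⟩ := hμ
  let sq : (Fin t → Cfg) → ℕ → Cfg := fun h i => if hi : i < t then h ⟨i, hi⟩ else if i = t then c else d
  have hm : ∀ (i : ℕ) (e : Cfg), MeasurableSet {ω : ℕ → Cfg | ω i = e} := fun i e =>
    measurableSet_eq_fun (measurable_pi_apply i) measurable_const
  have hmc : ∀ (k : ℕ) (s : ℕ → Cfg), MeasurableSet {ω : ℕ → Cfg | ∀ i ≤ k, ω i = s i} := by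
    intro k s
    have : {ω : ℕ → Cfg | ∀ i ≤ k, ω i = s i} = ⋂ i, ⋂ (_ : i ≤ k), {ω | ω i = s i} := by
      ext ω; simp
    rw [this]
    exact MeasurableSet.iInter fun i => MeasurableSet.iInter fun _ => hm i _
  have key : ∀ k, t ≤ k → ∀ h h' : Fin t → Cfg, h ≠ h' →
      Disjoint {ω : ℕ → Cfg | ∀ i ≤ k, ω i = sq h i} {ω : ℕ → Cfg | ∀ i ≤ k, ω i = sq h' i} := by
    intro k hk h h' hne
    rw [Set.disjoint_left]
    intro ω h1 h2
    apply hne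
    funext i
    have a := h1 i (i.2.le.trans hk)
    have b := h2 i (i.2.le.trans hk)
    simp only [sq, i.2, dif_pos] at a b
    exact a.symm.trans b
  have e1 : {ω : ℕ → Cfg | ω t = c} = ⋃ h : Fin t → Cfg, {ω | ∀ i ≤ t, ω i = sq h i} := by
    ext ω
    simp only [Set.mem_ofPred_eq, Set.mem_iUnion]
    constructor
    · intro hc
      refine ⟨fun i => ω i, fun i hi => ?_⟩
      rcases hi.lt_or_eq with h | h
      · simp [sq, h]
      · subst h; simp [sq, hc]
    · rintro ⟨h, hh⟩
      simpa [sq] using hh t le_rfl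
  have e2 : {ω : ℕ → Cfg | ω t = c ∧ ω (t+1) = d} = ⋃ h : Fin t → Cfg, {ω | ∀ i ≤ t+1, ω i = sq h i} := by
    ext ω
    simp only [Set.mem_ofPred_eq, Set.mem_iUnion]
    constructor
    · rintro ⟨hc, hd⟩
      refine ⟨fun i => ω i, fun i hi => ?_⟩
      rcases hi.lt_or_eq with h | h
      · rcases (Nat.lt_succ_iff.1 h).lt_or_eq with h | h
        · simp [sq, h]
        · subst h; simp [sq, hc]
      · subst h; simp [sq, hd]
    · rintro ⟨h, hh⟩
      exact ⟨by simpa [sq] using hh t (by omega), by simpa [sq] using hh (t+1) le_rfl⟩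
  rw [e1, e2, measure_iUnion (fun h h' hne => key _ (by omega) h h' hne) (fun h => hmc _ _),
    measure_iUnion (fun h h' hne => key _ le_rfl h h' hne) (fun h => hmc _ _), ← ENNReal.tsum_mul_right]
  congr 1
  funext h
  have a := hcyl (t+1) (sq h)
  rw [Finset.prod_range_succ, ← mul_assoc, ← hcyl t (sq h)] at a
  have q1 : sq h t = c := by simp [sq]
  have q2 : sq h (t+1) = d := by simp [sq]
  rw [q1, q2] at a
  rw [← ENNReal.ofReal_toReal (measure_ne_top μ {ω | ∀ i ≤ t+1, ω i = sq h i}), a,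
    ENNReal.ofReal_mul ENNReal.toReal_nonneg, ENNReal.ofReal_toReal (measure_ne_top μ _)]

def cfgS (n : ℕ) : Finset Cfg :=
  ((Finset.range (n+1)) ×ˢ (Finset.range (n+1)) ×ˢ (Finset.range (n+1))).filter
    fun c => c.1 + c.2.1 + c.2.2 = n

lemma mem_cfgS {n : ℕ} {c : Cfg} : c ∈ cfgS n ↔ c.1 + c.2.1 + c.2.2 = n := by
  simp only [cfgS, Finset.mem_filter, Finset.mem_product, Finset.mem_range]
  constructor
  · exact fun h => h.2
  · intro h; refine ⟨⟨?_, ?_, ?_⟩, h⟩ <;> omega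

lemma stay_nonneg {n : ℕ} (hn : 2 ≤ n) {p : ℝ} (hp : p ∈ Set.Icc (0:ℝ) 1) {a b u : ℕ}
    (h : a + b + u = n) :
    0 ≤ 1 - ((2 - p) * (a : ℝ) * (b : ℝ) + (u : ℝ) * ((a : ℝ) + (b : ℝ))) / (n : ℝ) ^ 2 := by
  have hn' : (0:ℝ) < n := by positivity
  have hh : (a:ℝ) + b + u = n := by exact_mod_cast h
  rw [sub_nonneg, div_le_one (by positivity), ← hh]
  have : (0:ℝ) ≤ a := by positivity
  have : (0:ℝ) ≤ b := by positivity
  have : (0:ℝ) ≤ u := by positivity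
  have : (0:ℝ) ≤ p * (a * b) := by have := hp.1; positivity
  have : (0:ℝ) ≤ a * u := by positivity
  have : (0:ℝ) ≤ b * u := by positivity
  nlinarith [sq_nonneg (a:ℝ), sq_nonneg (b:ℝ), sq_nonneg (u:ℝ)]

lemma step_nonneg {n : ℕ} (hn : 2 ≤ n) {p : ℝ} (hp : p ∈ Set.Icc (0:ℝ) 1) {c : Cfg}
    (h : c ∈ cfgS n) (d : Cfg) : 0 ≤ usdStep n p c d := by
  have h1 : 0 ≤ 1 - p := by linarith [hp.2]
  have := stay_nonneg hn hp (mem_cfgS.1 h)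
  unfold usdStep
  refine add_nonneg (add_nonneg (add_nonneg (add_nonneg ?_ ?_) ?_) ?_) ?_ <;> split_ifs <;>
    first | exact le_rfl | positivity | exact this

lemma step_zero {n : ℕ} {p : ℝ} {c : Cfg}
    (h : c ∈ cfgS n) {d : Cfg} (hd : d ∉ cfgS n) : usdStep n p c d = 0 := by
  rw [mem_cfgS] at h hd
  obtain ⟨a, b, u⟩ := c
  dsimp only at h
  unfold usdStep
  dsimp only
  have z1 : (if d = (a - 1, b, u + 1) then (1 - p) * (a : ℝ) * (b : ℝ) / (n : ℝ) ^ 2 else 0) = 0 := by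
    split_ifs with hh
    · subst hh
      have : a = 0 := by dsimp only at hd; omega
      simp [this]
    · rfl
  have z2 : (if d = (a, b - 1, u + 1) then (a : ℝ) * (b : ℝ) / (n : ℝ) ^ 2 else 0) = 0 := by
    split_ifs with hh
    · subst hh
      have : b = 0 := by dsimp only at hd; omega
      simp [this]
    · rfl
  have z3 : (if d = (a + 1, b, u - 1) then (u : ℝ) * (a : ℝ) / (n : ℝ) ^ 2 else 0) = 0 := by
    split_ifs with hh
    · subst hh
      have : u = 0 := by dsimp only at hd; omega
      simp [this]
    · rfl
  have z4 : (if d = (a, b + 1, u - 1) then (u : ℝ) * (b : ℝ) / (n : ℝ) ^ 2 else 0) = 0 := by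
    split_ifs with hh
    · subst hh
      have : u = 0 := by dsimp only at hd; omega
      simp [this]
    · rfl
  rw [z1, z2, z3, z4, if_neg (by rintro rfl; exact hd h)]
  norm_num

noncomputable def pot (n : ℕ) (c : Cfg) : ℝ := (2:ℝ) ^ ((n:ℝ) / 2 - c.1 - c.2.1)

lemma pot_pos (n : ℕ) (c : Cfg) : 0 < pot n c := by unfold pot; positivity

lemma sum_ite_le (S : Finset Cfg) (e : Cfg) (k : ℝ) (hk : 0 ≤ k) (f : Cfg → ℝ) (hf : ∀ c, 0 ≤ f c) :
    ∑ d ∈ S, (if d = e then k else 0) * f d ≤ k * f e := by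
  simp only [ite_mul, zero_mul]
  rw [Finset.sum_ite_eq']
  split_ifs
  · exact le_rfl
  · exact mul_nonneg hk (hf e)

lemma pot_drift {n : ℕ} (hn : 2 ≤ n) {p : ℝ} (hp : p ∈ Set.Icc (0:ℝ) 1) {c : Cfg}
    (h : c ∈ cfgS n) : ∑ d ∈ cfgS n, usdStep n p c d * pot n d ≤ pot n c + 1 := by
  have h1 : 0 ≤ 1 - p := by linarith [hp.2]
  have hst := stay_nonneg hn hp (mem_cfgS.1 h)
  rw [mem_cfgS] at h
  have hf := fun d => (pot_pos n d).le
  obtain ⟨a, b, u⟩ := c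
  dsimp only at h hst
  have hh : (a:ℝ) + b + u = n := by exact_mod_cast h
  have hn' : (0:ℝ) < (n:ℝ)^2 := by positivity
  have ha : (0:ℝ) ≤ a := by positivity
  have hb : (0:ℝ) ≤ b := by positivity
  have hu : (0:ℝ) ≤ u := by positivity
  unfold usdStep
  simp only [add_mul, Finset.sum_add_distrib]
  set F := pot n (a, b, u) with hF
  have hF0 : 0 < F := pot_pos _ _
  have s1 := sum_ite_le (cfgS n) (a - 1, b, u + 1) ((1 - p) * (a : ℝ) * (b : ℝ) / (n : ℝ) ^ 2) (by positivity) _ hf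
  have s2 := sum_ite_le (cfgS n) (a, b - 1, u + 1) ((a : ℝ) * (b : ℝ) / (n : ℝ) ^ 2) (by positivity) _ hf
  have s3 := sum_ite_le (cfgS n) (a + 1, b, u - 1) ((u : ℝ) * (a : ℝ) / (n : ℝ) ^ 2) (by positivity) _ hf
  have s4 := sum_ite_le (cfgS n) (a, b + 1, u - 1) ((u : ℝ) * (b : ℝ) / (n : ℝ) ^ 2) (by positivity) _ hf
  have s5 := sum_ite_le (cfgS n) (a, b, u) _ hst _ hf
  have t1 : (1 - p) * (a : ℝ) * (b : ℝ) / (n : ℝ) ^ 2 * pot n (a - 1, b, u + 1) =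
      (1 - p) * (a : ℝ) * (b : ℝ) / (n : ℝ) ^ 2 * (2 * F) := by
    rcases Nat.eq_zero_or_pos a with h0 | h0
    · simp [h0]
    · congr 1
      rw [hF, pot, pot]; dsimp only
      rw [Nat.cast_sub h0, show (n:ℝ) / 2 - ((a:ℝ) - (1:ℕ)) - b = ((n:ℝ) / 2 - a - b) + 1 by push_cast; ring,
        Real.rpow_add_one (by norm_num)]
      ring
  have t2 : (a : ℝ) * (b : ℝ) / (n : ℝ) ^ 2 * pot n (a, b - 1, u + 1) =
      (a : ℝ) * (b : ℝ) / (n : ℝ) ^ 2 * (2 * F) := by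
    rcases Nat.eq_zero_or_pos b with h0 | h0
    · simp [h0]
    · congr 1
      rw [hF, pot, pot]; dsimp only
      rw [Nat.cast_sub h0, show (n:ℝ) / 2 - a - ((b:ℝ) - (1:ℕ)) = ((n:ℝ) / 2 - a - b) + 1 by push_cast; ring,
        Real.rpow_add_one (by norm_num)]
      ring
  have t3 : pot n (a + 1, b, u - 1) = F / 2 := by
    rw [hF, pot, pot]; dsimp only
    rw [← Real.rpow_sub_one (by norm_num)]
    congr 1; push_cast; ring
  have t4 : pot n (a, b + 1, u - 1) = F / 2 := by
    rw [hF, pot, pot]; dsimp only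
    rw [← Real.rpow_sub_one (by norm_num)]
    congr 1; push_cast; ring
  rw [t1] at s1
  rw [t2] at s2
  rw [t3] at s3
  rw [t4] at s4
  rw [← hF] at s5
  refine (add_le_add (add_le_add (add_le_add (add_le_add s1 s2) s3) s4) s5).trans ?_
  have e : (1 - p) * (a : ℝ) * (b : ℝ) / (n : ℝ) ^ 2 * (2 * F) + (a : ℝ) * (b : ℝ) / (n : ℝ) ^ 2 * (2 * F)
      + (u : ℝ) * (a : ℝ) / (n : ℝ) ^ 2 * (F / 2) + (u : ℝ) * (b : ℝ) / (n : ℝ) ^ 2 * (F / 2)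
      + (1 - ((2 - p) * (a : ℝ) * (b : ℝ) + (u : ℝ) * ((a : ℝ) + (b : ℝ))) / (n : ℝ) ^ 2) * F
      = F + F * (((2 - p) * a * b - u * (a + b) / 2) / (n:ℝ)^2) := by
    field_simp; ring
  rw [e]
  have hpab : 0 ≤ p * (a * b) := by have := hp.1; positivity
  rcases le_total ((a:ℝ) + b) u with hc | hc
  · have : ((2 - p) * a * b - u * (a + b) / 2) / (n:ℝ)^2 ≤ 0 := by
      apply div_nonpos_of_nonpos_of_nonneg _ hn'.le
      nlinarith [sq_nonneg ((a:ℝ) - b), mul_nonneg (sub_nonneg.2 hc) (add_nonneg ha hb)]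
    nlinarith
  · have hF1 : F ≤ 1 := by
      rw [hF, pot]
      apply Real.rpow_le_one_of_one_le_of_nonpos (by norm_num)
      dsimp only; linarith
    have : ((2 - p) * a * b - u * (a + b) / 2) / (n:ℝ)^2 ≤ 1 := by
      rw [div_le_one hn', ← hh]
      nlinarith [sq_nonneg (a:ℝ), sq_nonneg (b:ℝ), sq_nonneg (u:ℝ), mul_nonneg ha hu, mul_nonneg hb hu]
    nlinarith

lemma ae_cfg {n : ℕ} (hn : 2 ≤ n) {p : ℝ} (hp : p ∈ Set.Icc (0:ℝ) 1) {x0 : Cfg}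
    (hx0 : x0 ∈ cfgS n) {μ : Measure (ℕ → Cfg)} (hμ : IsUSD n p x0 μ) (t : ℕ) :
    ∀ᵐ ω ∂μ, ω t ∈ cfgS n ∧ (t = 0 → ω t = x0) := by
  induction t with
  | zero =>
    have := hμ.1
    have h0 := hμ.2 0 (fun _ => x0)
    simp at h0
    have h2 : ∀ᵐ ω ∂μ, ω 0 = x0 := by
      apply (prob_compl_eq_zero_iff (s := {ω : ℕ → Cfg | ω 0 = x0})
        (measurableSet_eq_fun (measurable_pi_apply 0) measurable_const)).2
      rw [← ENNReal.ofReal_toReal (measure_ne_top μ _), h0]; simp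
    filter_upwards [h2] with ω hω
    exact ⟨hω ▸ hx0, fun _ => hω⟩
  | succ t ih =>
    have : ∀ᵐ ω ∂μ, ∀ c d : Cfg, c ∈ cfgS n → d ∉ cfgS n → ¬ (ω t = c ∧ ω (t+1) = d) := by
      rw [ae_all_iff]; intro c
      rw [ae_all_iff]; intro d
      by_cases hc : c ∈ cfgS n
      · by_cases hd : d ∈ cfgS n
        · simp [hd]
        · have := usd_pair hμ t c d (step_nonneg hn hp hc d)
          rw [step_zero hc hd] at this
          simp only [hc, hd, not_false_eq_true, forall_const]
          rw [ae_iff]; simp only [not_not]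
          rw [this]; simp
      · simp [hc]
    filter_upwards [this, ih] with ω h1 h2
    refine ⟨?_, by simp⟩
    by_contra hd
    exact h1 _ _ h2.1 hd ⟨rfl, rfl⟩

lemma law_succ {n : ℕ} (hn : 2 ≤ n) {p : ℝ} (hp : p ∈ Set.Icc (0:ℝ) 1) {x0 : Cfg}
    (hx0 : x0 ∈ cfgS n) {μ : Measure (ℕ → Cfg)} (hμ : IsUSD n p x0 μ) (t : ℕ) (d : Cfg) :
    μ.real {ω | ω (t+1) = d} ≤ ∑ c ∈ cfgS n, μ.real {ω | ω t = c} * usdStep n p c d := by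
  have := hμ.1
  have h1 : μ.real {ω | ω (t+1) = d} ≤ μ.real (⋃ c ∈ cfgS n, {ω | ω t = c ∧ ω (t+1) = d}) := by
    apply ENNReal.toReal_mono (measure_ne_top _ _)
    apply measure_mono_ae
    filter_upwards [ae_cfg hn hp hx0 hμ t] with ω hω hd
    exact Set.mem_iUnion₂.2 ⟨ω t, hω.1, rfl, hd⟩
  refine h1.trans ((measureReal_biUnion_finset_le _ _).trans (Finset.sum_le_sum fun c hc => ?_))
  rw [measureReal_def, usd_pair hμ t c d (step_nonneg hn hp hc d), ENNReal.toReal_mul,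
    ENNReal.toReal_ofReal (step_nonneg hn hp hc d), measureReal_def]

lemma law_sum {μ : Measure (ℕ → Cfg)} [IsProbabilityMeasure μ] (S : Finset Cfg) (t : ℕ) :
    ∑ c ∈ S, μ.real {ω | ω t = c} ≤ 1 := by
  rw [← measureReal_biUnion_finset]
  · exact measureReal_le_one
  · intro c _ d _ hne
    rw [Function.onFun, Set.disjoint_left]
    intro ω h1 h2
    exact hne (h1.symm.trans h2)
  · intro c _
    exact measurableSet_eq_fun (measurable_pi_apply t) measurable_const

lemma pot_exp {n : ℕ} (hn : 2 ≤ n) {p : ℝ} (hp : p ∈ Set.Icc (0:ℝ) 1) {x0 : Cfg}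
    (hx0 : x0 ∈ cfgS n) {μ : Measure (ℕ → Cfg)} (hμ : IsUSD n p x0 μ) (t : ℕ) :
    ∑ c ∈ cfgS n, μ.real {ω | ω t = c} * pot n c ≤ pot n x0 + t := by
  have := hμ.1
  induction t with
  | zero =>
    have : ∀ c ∈ cfgS n, c ≠ x0 → μ.real {ω | ω 0 = c} * pot n c = 0 := by
      intro c _ hne
      have h0 := hμ.2 0 (fun _ => c)
      simp [hne] at h0
      rw [measureReal_def, h0, zero_mul]
    rw [Finset.sum_eq_single x0 this (fun h => absurd hx0 h)]
    have := pot_pos n x0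
    have := measureReal_le_one (μ := μ) (s := {ω | ω 0 = x0})
    push_cast
    nlinarith
  | succ t ih =>
    calc ∑ d ∈ cfgS n, μ.real {ω | ω (t+1) = d} * pot n d
        ≤ ∑ d ∈ cfgS n, (∑ c ∈ cfgS n, μ.real {ω | ω t = c} * usdStep n p c d) * pot n d :=
          Finset.sum_le_sum fun d _ => mul_le_mul_of_nonneg_right (law_succ hn hp hx0 hμ t d) (pot_pos n d).le
      _ = ∑ c ∈ cfgS n, μ.real {ω | ω t = c} * ∑ d ∈ cfgS n, usdStep n p c d * pot n d := by
          simp only [Finset.sum_mul, Finset.mul_sum]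
          rw [Finset.sum_comm]
          simp only [mul_assoc]
      _ ≤ ∑ c ∈ cfgS n, μ.real {ω | ω t = c} * (pot n c + 1) :=
          Finset.sum_le_sum fun c hc => mul_le_mul_of_nonneg_left (pot_drift hn hp hc) measureReal_nonneg
      _ = ∑ c ∈ cfgS n, μ.real {ω | ω t = c} * pot n c + ∑ c ∈ cfgS n, μ.real {ω | ω t = c} := by
          simp only [mul_add, mul_one, Finset.sum_add_distrib]
      _ ≤ (pot n x0 + t) + 1 := add_le_add ih (law_sum _ _)
      _ = pot n x0 + ((t+1 : ℕ):ℝ) := by push_cast; ring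

lemma tail_bound {n : ℕ} (hn : 2 ≤ n) {p : ℝ} (hp : p ∈ Set.Icc (0:ℝ) 1) {x0 : Cfg}
    (hx0 : x0 ∈ cfgS n) {μ : Measure (ℕ → Cfg)} (hμ : IsUSD n p x0 μ) (t : ℕ) (B : ℝ) :
    μ.real {ω | 2 * B < ((ω t).2.2 : ℝ) - ((ω t).1 : ℝ) - ((ω t).2.1 : ℝ)} * (2:ℝ) ^ B
      ≤ pot n x0 + t := by
  have := hμ.1
  classical
  let S := (cfgS n).filter fun c => 2 * B < (c.2.2 : ℝ) - (c.1 : ℝ) - (c.2.1 : ℝ)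
  have h1 : μ.real {ω | 2 * B < ((ω t).2.2 : ℝ) - ((ω t).1 : ℝ) - ((ω t).2.1 : ℝ)} ≤
      μ.real (⋃ c ∈ S, {ω | ω t = c}) := by
    apply ENNReal.toReal_mono (measure_ne_top _ _)
    apply measure_mono_ae
    filter_upwards [ae_cfg hn hp hx0 hμ t] with ω hω hd
    exact Set.mem_iUnion₂.2 ⟨ω t, Finset.mem_filter.2 ⟨hω.1, hd⟩, rfl⟩
  have h2 := h1.trans (measureReal_biUnion_finset_le _ _)
  calc _ ≤ (∑ c ∈ S, μ.real {ω | ω t = c}) * (2:ℝ)^B := mul_le_mul_of_nonneg_right h2 (by positivity)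
    _ = ∑ c ∈ S, μ.real {ω | ω t = c} * (2:ℝ)^B := by rw [Finset.sum_mul]
    _ ≤ ∑ c ∈ S, μ.real {ω | ω t = c} * pot n c := by
        refine Finset.sum_le_sum fun c hc => mul_le_mul_of_nonneg_left ?_ measureReal_nonneg
        obtain ⟨hc1, hc2⟩ := Finset.mem_filter.1 hc
        have hh : (c.1:ℝ) + c.2.1 + c.2.2 = n := by exact_mod_cast mem_cfgS.1 hc1
        unfold pot
        apply Real.rpow_le_rpow_of_exponent_le (by norm_num)
        linarith
    _ ≤ ∑ c ∈ cfgS n, μ.real {ω | ω t = c} * pot n c :=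
        Finset.sum_le_sum_of_subset_of_nonneg (Finset.filter_subset _ _)
          fun c _ _ => mul_nonneg measureReal_nonneg (pot_pos n c).le
    _ ≤ _ := pot_exp hn hp hx0 hμ t

lemma bad_bound {n : ℕ} (hn : 2 ≤ n) {p : ℝ} (hp : p ∈ Set.Icc (0:ℝ) 1) {ξ : ℝ} (hξ : 1 ≤ ξ) {x0 : Cfg}
    (hx0 : x0 ∈ cfgS n)
    (hphi : (x0.2.2 : ℝ) - (x0.1 : ℝ) - (x0.2.1 : ℝ) < 2 * ξ * Real.sqrt (n * Real.log n))
    {μ : Measure (ℕ → Cfg)} (hμ : IsUSD n p x0 μ) (t : ℕ) (ht : (t:ℝ) ≤ (n:ℝ)^4) :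
    μ.real {ω | 6 * ξ * Real.sqrt (n * Real.log n) <
      ((ω t).2.2 : ℝ) - ((ω t).1 : ℝ) - ((ω t).2.1 : ℝ)} ≤ if t = 0 then 0 else ((n:ℝ)^4)⁻¹ := by
  have := hμ.1
  have hn2 : (2:ℝ) ≤ n := by exact_mod_cast hn
  have hlog : 0 < Real.log n := Real.log_pos (by linarith)
  set L := Real.sqrt (n * Real.log n) with hL
  have hL0 : 0 ≤ L := Real.sqrt_nonneg _
  have hLx : L ≤ ξ * L := by nlinarith
  split_ifs with h0
  · apply le_of_eq
    rw [measureReal_def, measure_eq_zero_iff_ae_notMem.2, ENNReal.toReal_zero]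
    filter_upwards [ae_cfg hn hp hx0 hμ t] with ω hω
    rw [hω.2 h0]
    linarith
  · rcases le_or_gt (n:ℝ) (36 * Real.log n) with hc | hc
    · have : (n:ℝ) ≤ 6 * L := by
        have : (n:ℝ)/6 ≤ L := by
          apply Real.le_sqrt_of_sq_le
          nlinarith
        linarith
      rw [measureReal_def, measure_eq_zero_iff_ae_notMem.2, ENNReal.toReal_zero]
      · positivity
      filter_upwards [ae_cfg hn hp hx0 hμ t] with ω hω
      have hh : ((ω t).1:ℝ) + (ω t).2.1 + (ω t).2.2 = n := by exact_mod_cast mem_cfgS.1 hω.1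
      have : (0:ℝ) ≤ (ω t).1 := by positivity
      have : (0:ℝ) ≤ (ω t).2.1 := by positivity
      linarith
    · have hL6 : 6 * Real.log n ≤ L := by
        apply Real.le_sqrt_of_sq_le
        nlinarith
      have hb := tail_bound hn hp hx0 hμ t (3 * ξ * L)
      rw [show 2 * (3 * ξ * L) = 6 * ξ * L by ring] at hb
      set y := (2:ℝ) ^ (ξ * L) with hy
      have hy3 : (2:ℝ) ^ (3 * ξ * L) = y ^ 3 := by
        rw [hy, ← Real.rpow_natCast, ← Real.rpow_mul (by norm_num)]
        congr 1; push_cast; ring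
      have hyn : (n:ℝ)^4 ≤ y := by
        rw [hy, Real.rpow_def_of_pos (by norm_num), ← Real.exp_log (x := (n:ℝ)^4) (by positivity)]
        apply Real.exp_le_exp.2
        rw [Real.log_pow]
        have := Real.log_two_gt_d9
        push_cast
        nlinarith
      have hpot : pot n x0 ≤ y := by
        have hh : (x0.1:ℝ) + x0.2.1 + x0.2.2 = n := by exact_mod_cast mem_cfgS.1 hx0
        unfold pot
        apply Real.rpow_le_rpow_of_exponent_le (by norm_num)
        linarith
      have h16 : (2:ℝ) ≤ (n:ℝ)^4 := by
        calc (2:ℝ) ≤ 2^4 := by norm_num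
          _ ≤ (n:ℝ)^4 := by gcongr
      have hy0 : 0 < y := by linarith
      rw [hy3] at hb
      set m := μ.real {ω | 6 * ξ * L < ((ω t).2.2 : ℝ) - ((ω t).1 : ℝ) - ((ω t).2.1 : ℝ)}
      have hm : 0 ≤ m := measureReal_nonneg
      have hb2 : m * y^3 ≤ 2 * y := by linarith
      have hb3 : m * y^2 ≤ 2 := by
        by_contra! hcon
        nlinarith
      rw [← one_div, le_div_iff₀ (by positivity)]
      have hmy : m * (n:ℝ)^4 ≤ m * y := mul_le_mul_of_nonneg_left hyn hm
      have hmy2 : m * y * 2 ≤ m * y * y := mul_le_mul_of_nonneg_left (h16.trans hyn) (by positivity)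
      nlinarith

theorem stmt_13 (n : ℕ) (hn : 2 ≤ n) (p : ℝ) (hp : p ∈ Set.Icc (0 : ℝ) 1)
    (ξ : ℝ) (hξ : 1 ≤ ξ)
    (x0 : ℕ × ℕ × ℕ) (hx0 : x0.1 + x0.2.1 + x0.2.2 = n)
    (hphi : (x0.2.2 : ℝ) - (x0.1 : ℝ) - (x0.2.1 : ℝ) < 2 * ξ * Real.sqrt (n * Real.log n))
    (μ : Measure (ℕ → ℕ × ℕ × ℕ)) (hμ : IsUSD n p x0 μ)
    (α : ℝ) (hα : 0 < α) :
    1 - α * ((n : ℝ) ^ 3)⁻¹ * (Real.log n) ^ 2 ≤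
      (μ {ω | ∀ t : ℕ, (t : ℝ) ≤ α * n * (Real.log n) ^ 2 →
            ((ω t).2.2 : ℝ) - ((ω t).1 : ℝ) - ((ω t).2.1 : ℝ) ≤
              6 * ξ * Real.sqrt (n * Real.log n)}).toReal := by
  have := hμ.1
  have hn0 : (0:ℝ) < n := by positivity
  set T := α * n * (Real.log n) ^ 2 with hT
  have hT0 : 0 ≤ T := by positivity
  have hR : α * ((n : ℝ) ^ 3)⁻¹ * (Real.log n) ^ 2 = T * ((n:ℝ)^4)⁻¹ := by
    rw [hT]; field_simp
  rw [hR]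
  rcases le_or_gt ((n:ℝ)^4) T with hc | hc
  · have : 1 ≤ T * ((n:ℝ)^4)⁻¹ := by
      rw [← div_eq_mul_inv, one_le_div (by positivity)]; exact hc
    have := ENNReal.toReal_nonneg (a := μ {ω | ∀ t : ℕ, (t : ℝ) ≤ T →
            ((ω t).2.2 : ℝ) - ((ω t).1 : ℝ) - ((ω t).2.1 : ℝ) ≤
              6 * ξ * Real.sqrt (n * Real.log n)})
    linarith
  set G := {ω : ℕ → ℕ × ℕ × ℕ | ∀ t : ℕ, (t : ℝ) ≤ T →
            ((ω t).2.2 : ℝ) - ((ω t).1 : ℝ) - ((ω t).2.1 : ℝ) ≤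
              6 * ξ * Real.sqrt (n * Real.log n)} with hG
  let N := ⌊T⌋₊
  have hsub : (Set.univ : Set (ℕ → ℕ × ℕ × ℕ)) ⊆ G ∪ ⋃ t ∈ Finset.range (N+1), {ω | 6 * ξ * Real.sqrt (n * Real.log n) <
      ((ω t).2.2 : ℝ) - ((ω t).1 : ℝ) - ((ω t).2.1 : ℝ)} := by
    intro ω _
    by_cases h : ω ∈ G
    · exact Or.inl h
    · right
      rw [hG, Set.mem_ofPred_eq] at h
      push Not at h
      obtain ⟨t, ht, hb⟩ := h
      exact Set.mem_iUnion₂.2 ⟨t, Finset.mem_range.2 (Nat.lt_succ_of_le (Nat.le_floor ht)), hb⟩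
  have h1 : (1:ℝ) ≤ μ.real G + ∑ t ∈ Finset.range (N+1), μ.real {ω | 6 * ξ * Real.sqrt (n * Real.log n) <
      ((ω t).2.2 : ℝ) - ((ω t).1 : ℝ) - ((ω t).2.1 : ℝ)} := by
    calc (1:ℝ) = μ.real Set.univ := by simp
      _ ≤ _ := measureReal_mono hsub
      _ ≤ _ := measureReal_union_le _ _
      _ ≤ _ := by gcongr; exact measureReal_biUnion_finset_le _ _
  have h2 : ∑ t ∈ Finset.range (N+1), μ.real {ω | 6 * ξ * Real.sqrt (n * Real.log n) <
      ((ω t).2.2 : ℝ) - ((ω t).1 : ℝ) - ((ω t).2.1 : ℝ)} ≤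
      ∑ t ∈ Finset.range (N+1), if t = 0 then (0:ℝ) else ((n:ℝ)^4)⁻¹ := by
    refine Finset.sum_le_sum fun t ht => ?_
    have htN : (t:ℝ) ≤ T := (Nat.le_floor_iff hT0).1 (Nat.lt_succ_iff.1 (Finset.mem_range.1 ht))
    exact bad_bound hn hp hξ (mem_cfgS.2 hx0) hphi hμ t (htN.trans hc.le)
  have h4 : ∑ t ∈ Finset.range (N+1), (if t = 0 then (0:ℝ) else ((n:ℝ)^4)⁻¹) = N * ((n:ℝ)^4)⁻¹ := by
    rw [Finset.sum_range_succ']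
    simp
  rw [h4] at h2
  have h3 : (N:ℝ) * ((n:ℝ)^4)⁻¹ ≤ T * ((n:ℝ)^4)⁻¹ :=
    mul_le_mul_of_nonneg_right (Nat.floor_le hT0) (by positivity)
  rw [← measureReal_def]
  linarith
end
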